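/- arXiv:2206.14032 — 2 statements merged into one kernel-verified Lean document; each statement's English description precedes it below -/
import Mathlib

section
/- Let $a$, $b$, $c$ be coprime positive integers with $\min\{a,b,c\} > 1$, where $a \equiv 2 \pmod 3$, $3 \nmid b$, and $c$ is an odd prime. If the equation $a^x + b^y = c^z$ has more than one solution in positive integers $(x,y,z)$, then it has exactly two solutions $(x_1,y_1,z_1)$ and $(x_2,y_2,z_2)$, and these satisfy $y_1 \not\equiv y_2 \pmod 2$. -/
/-- The coefficient sequences of odd powers. -/
def FG (X W : ℤ) : ℕ → ℤ × ℤ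
  | 0 => (1, 1)
  | n + 1 => ((X + W) * (FG X W n).1 + 2 * W * (FG X W n).2,
      (X + W) * (FG X W n).2 + 2 * X * (FG X W n).1)

theorem FG_swap (X W : ℤ) (n : ℕ) : FG W X n = ((FG X W n).2, (FG X W n).1) := by
  induction n with
  | zero => simp [FG]
  | succ n ih =>
    simp only [FG, ih, Prod.mk.injEq]
    constructor <;> ring

theorem FG_mod (X W : ℤ) (n : ℕ) : ∃ u v : ℤ,
    (FG X W n).1 = (2 * n + 1) * W ^ n + X * u ∧ (FG X W n).2 = W ^ n + X * v := by
  induction n with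
  | zero => exact ⟨0, 0, by simp [FG], by simp [FG]⟩
  | succ n ih =>
    obtain ⟨u, v, h1, h2⟩ := ih
    refine ⟨(2 * n + 1) * W ^ n + X * u + W * u + 2 * W * v,
      W ^ n + X * v + W * v + 2 * ((2 * n + 1) * W ^ n + X * u), ?_, ?_⟩
    · simp only [FG, h1, h2]; push_cast; ring
    · simp only [FG, h1, h2]; ring

theorem FG_mod2 (X W : ℤ) (n : ℕ) : ∃ u v : ℤ,
    3 * (FG X W n).1 * W = 3 * (2 * n + 1) * W ^ (n + 1)
      + (2 * n + 1) * (n * (2 * n - 1)) * X * W ^ n + X ^ 2 * u ∧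
    (FG X W n).2 * W = W ^ (n + 1) + n * (2 * n + 1) * X * W ^ n + X ^ 2 * v := by
  induction n with
  | zero => exact ⟨0, 0, by simp [FG], by simp [FG]⟩
  | succ n ih =>
    obtain ⟨u, v, h1, h2⟩ := ih
    refine ⟨(2 * n + 1) * (n * (2 * n - 1)) * W ^ n + X * u + W * u + 6 * W * v,
      n * (2 * n + 1) * W ^ n + X * v + W * v + 
      2 * ((2 * n + 1) * (n * (2 * n - 1)) * W ^ n + X * u) * 0 + 
      2 * (FG X W n).1 * 0 + 2 * Classical.choose (FG_mod X W n) * W, ?_, ?_⟩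
    · have : 3 * (FG X W (n+1)).1 * W = (X + W) * (3 * (FG X W n).1 * W)
        + 6 * W * ((FG X W n).2 * W) := by simp only [FG]; ring
      rw [this, h1, h2]; push_cast; ring
    · have e := Classical.choose_spec (FG_mod X W n)
      obtain ⟨_, e, _⟩ := e
      have : (FG X W (n+1)).2 * W = (X + W) * ((FG X W n).2 * W)
        + 2 * X * W * (FG X W n).1 := by simp only [FG]; ring
      rw [this, h2]
      nth_rw 1 [e]
      push_cast; ring

theorem FG_pow {R : Type*} [CommRing R] (A B P Q : ℤ) (s t : R) (hs : s ^ 2 = A) (ht : t ^ 2 = -B)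
    (n : ℕ) : ((P : R) * s + Q * t) ^ (2 * n + 1) =
      ((P * (FG (P ^ 2 * A) (-(Q ^ 2 * B)) n).1 : ℤ) : R) * s +
      ((Q * (FG (P ^ 2 * A) (-(Q ^ 2 * B)) n).2 : ℤ) : R) * t := by
  induction n with
  | zero => simp [FG]
  | succ n ih =>
    have : 2 * (n + 1) + 1 = (2 * n + 1) + 2 := by ring
    rw [this, pow_add, ih]
    simp only [FG]
    push_cast
    rw [← hs]
    have hB : (B : R) = - t ^ 2 := by rw [ht]; ring
    rw [hB]
    ring

theorem F_bound (X W : ℤ) (q n : ℕ) (hq : q.Prime) (hn : q = 2 * n + 1) (hcop : IsCoprime X W)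
    (h3 : q = 3 → ¬ (3 : ℤ) ∣ X)
    (hp : ∀ p : ℤ, Prime p → p ∣ (FG X W n).1 → p ∣ X) :
    (FG X W n).1 ^ 2 ≤ (q : ℤ) ^ 2 ∧ (q = 3 → (FG X W n).1 ^ 2 ≤ 1) := by
  obtain ⟨u, v, h1, -⟩ := FG_mod X W n
  have hqz : ((2 * n + 1 : ℤ)) = (q : ℤ) := by rw [hn]; push_cast; ring
  have key : ∀ p : ℕ, p.Prime → (p : ℤ) ∣ (FG X W n).1 → p = q ∧ (p : ℤ) ∣ X := by
    intro p hpp hd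
    have hpp' : Prime (p : ℤ) := Nat.prime_iff_prime_int.mp hpp
    have hX := hp p hpp' hd
    refine ⟨?_, hX⟩
    rw [h1, hqz] at hd
    have := (dvd_add_left (hX.mul_right u)).mp hd
    rcases hpp'.dvd_or_dvd this with h | h
    · exact (Nat.prime_dvd_prime_iff_eq hpp hq).mp (by exact_mod_cast h)
    · exact absurd (hcop.isUnit_of_dvd' hX (hpp'.dvd_of_dvd_pow h)) hpp'.not_isUnit
  have h0 : (FG X W n).1 ≠ 0 := by
    intro h
    have := (key 2 Nat.prime_two (by rw [h]; simp)).1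
    omega
  have hab : (FG X W n).1.natAbs ≠ 0 := by simpa using h0
  have hpow := Nat.eq_prime_pow_of_unique_prime_dvd (p := q) hab (by
    intro d hd hdd
    exact (key d hd (by exact Int.natCast_dvd.mpr hdd)).1)
  set e := (FG X W n).1.natAbs.primeFactorsList.length
  have hsq : (FG X W n).1 ^ 2 = ((q : ℤ) ^ e) ^ 2 := by
    rw [← Int.natAbs_sq, hpow]; push_cast; rfl
  have hq1 : (1 : ℤ) ≤ q := by exact_mod_cast hq.one_lt.le
  have hqp : Prime (q : ℤ) := Nat.prime_iff_prime_int.mp hq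
  by_cases hdv : (q : ℤ) ∣ (FG X W n).1
  · have hX := (key q hq hdv).2
    have hne : q ≠ 3 := by
      rintro rfl
      exact h3 rfl (by exact_mod_cast hX)
    refine ⟨?_, fun h => absurd h hne⟩
    have he : e ≤ 1 := by
      by_contra hcon
      have hd2 : (q : ℤ) ^ 2 ∣ (FG X W n).1 := by
        have : q ^ 2 ∣ (FG X W n).1.natAbs := by
          rw [hpow]; exact pow_dvd_pow q (by omega)
        have := Int.natCast_dvd.mpr this
        exact_mod_cast this
      obtain ⟨u, v, h2, -⟩ := FG_mod2 X W n
      rw [hqz] at h2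
      obtain ⟨x, hx⟩ := hX
      obtain ⟨f, hf⟩ := hd2
      have hqW : (q : ℤ) ∣ 3 * W ^ (n + 1) := by
        refine ⟨3 * f * W - (n * (2 * n - 1)) * x * W ^ n - x ^ 2 * u, ?_⟩
        have hq0 : (q : ℤ) ≠ 0 := by omega
        apply mul_left_cancel₀ hq0
        rw [hf, hx] at h2
        linear_combination (-1) * h2
      rcases hqp.dvd_or_dvd hqW with h | h
      · have : q ∣ 3 := by exact_mod_cast h
        exact hne ((Nat.prime_dvd_prime_iff_eq hq Nat.prime_three).mp this)
      · exact hqp.not_isUnit (hcop.isUnit_of_dvd' ⟨x, hx⟩ (hqp.dvd_of_dvd_pow h))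
    rw [hsq]
    have : (q : ℤ) ^ e ≤ (q : ℤ) ^ 1 := pow_le_pow_right₀ hq1 he
    rw [pow_one] at this
    gcongr
  · have he : e = 0 := by
      by_contra hcon
      apply hdv
      apply Int.natCast_dvd.mpr
      rw [hpow]
      exact dvd_pow_self q hcon
    rw [hsq, he]
    simp only [pow_zero, one_pow, le_refl, implies_true, and_true]
    exact one_le_pow₀ hq1

theorem exp_bound (q : ℕ) (hq : 4 ≤ q) : q ^ 2 < 3 ^ (q - 1) := by
  induction q, hq using Nat.le_induction with
  | base => norm_num
  | succ k hk ih =>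
    have : k + 1 - 1 = (k - 1) + 1 := by omega
    rw [this, pow_succ 3]
    nlinarith

theorem prime_step (A B P Q c a b : ℤ) (z q n : ℕ) (hA : 0 < A) (hB : 0 < B) (hz : z ≠ 0)
    (hc : 3 ≤ c) (hq : q.Prime) (hn : q = 2 * n + 1) (h : P ^ 2 * A + Q ^ 2 * B = c ^ z)
    (hcop : IsCoprime (P ^ 2 * A) (-(Q ^ 2 * B)))
    (ha : ∀ p : ℤ, Prime p → p ∣ a → p ∣ P * A) (hb : ∀ p : ℤ, Prime p → p ∣ b → p ∣ Q * B)
    (h3a : ¬ (3 : ℤ) ∣ P ^ 2 * A) (h3b : ¬ (3 : ℤ) ∣ Q ^ 2 * B)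
    (hF : ∀ p : ℤ, Prime p → p ∣ P * (FG (P ^ 2 * A) (-(Q ^ 2 * B)) n).1 → p ∣ a)
    (hG : ∀ p : ℤ, Prime p → p ∣ Q * (FG (P ^ 2 * A) (-(Q ^ 2 * B)) n).2 → p ∣ b)
    (hN : (P * (FG (P ^ 2 * A) (-(Q ^ 2 * B)) n).1) ^ 2 * A +
      (Q * (FG (P ^ 2 * A) (-(Q ^ 2 * B)) n).2) ^ 2 * B = c ^ (z * q)) : False := by
  have b1 := F_bound (P ^ 2 * A) (-(Q ^ 2 * B)) q n hq hn hcop (fun _ => h3a) (by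
    intro p hp hd
    have := ha p hp (hF p hp (hd.mul_left P))
    rw [pow_two, mul_assoc]; exact this.mul_left P)
  have b2 := F_bound (-(Q ^ 2 * B)) (P ^ 2 * A) q n hq hn hcop.symm
    (fun _ => by rwa [dvd_neg]) (by
    intro p hp hd
    rw [FG_swap] at hd
    have := hb p hp (hG p hp (hd.mul_left Q))
    rw [pow_two, mul_assoc, dvd_neg]; exact this.mul_left Q)
  rw [FG_swap] at b2
  simp only at b2
  set F := (FG (P ^ 2 * A) (-(Q ^ 2 * B)) n).1
  set G := (FG (P ^ 2 * A) (-(Q ^ 2 * B)) n).2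
  have hX : 0 ≤ P ^ 2 * A := by positivity
  have hY : 0 ≤ Q ^ 2 * B := by positivity
  have bound : ∀ M : ℤ, F ^ 2 ≤ M → G ^ 2 ≤ M → c ^ (z * q) ≤ M * c ^ z := by
    intro M h1 h2
    rw [← hN, ← h]
    nlinarith [mul_le_mul_of_nonneg_left h1 hX, mul_le_mul_of_nonneg_left h2 hY]
  have hq2 := hq.two_le
  have hsplit : c ^ (z * q) = c ^ (z * (q - 1)) * c ^ z := by
    rw [← pow_add]; congr 1
    obtain ⟨r, rfl⟩ : ∃ r, q = r + 1 := ⟨q - 1, by omega⟩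
    simp; ring
  have hcz : 0 < c ^ z := by positivity
  have hlow : (3 : ℤ) ^ (q - 1) ≤ c ^ (z * (q - 1)) := by
    calc (3 : ℤ) ^ (q - 1) ≤ 3 ^ (z * (q - 1)) :=
          pow_le_pow_right₀ (by norm_num) (Nat.le_mul_of_pos_left _ (by omega))
      _ ≤ _ := by gcongr
  by_cases h3 : q = 3
  · have := bound 1 (b1.2 h3) (b2.2 h3)
    rw [hsplit] at this
    have := le_of_mul_le_mul_right this hcz
    rw [h3] at hlow
    norm_num at hlow
    rw [h3] at this
    norm_num at this
    linarith
  · have := bound _ b1.1 b2.1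
    rw [hsplit] at this
    have := le_of_mul_le_mul_right this hcz
    have e := exp_bound q (by omega)
    have e' : (q : ℤ) ^ 2 < 3 ^ (q - 1) := by exact_mod_cast e
    linarith

theorem norm_one_no (a b c A B P Q : ℤ) (k : ℕ) (hA : 0 < A) (hB : 0 < B)
    (ha1 : ∃ p, Prime p ∧ p ∣ a) (hb1 : ∃ p, Prime p ∧ p ∣ b)
    (ha : ∀ p : ℤ, Prime p → p ∣ a → p ∣ P * A) (hb : ∀ p : ℤ, Prime p → p ∣ b → p ∣ Q * B)
    (h : P ^ 2 * A + Q ^ 2 * B = c ^ k) : k ≠ 0 := by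
  rintro rfl
  rw [pow_zero] at h
  have hX : 0 ≤ P ^ 2 * A := by positivity
  have hY : 0 ≤ Q ^ 2 * B := by positivity
  have : P ^ 2 * A = 1 ∨ Q ^ 2 * B = 1 := by omega
  rcases this with h1 | h1
  · obtain ⟨p, hp, hd⟩ := ha1
    have := (ha p hp hd).mul_left P
    rw [← mul_assoc, ← pow_two, h1] at this
    exact hp.not_isUnit (isUnit_of_dvd_one this)
  · obtain ⟨p, hp, hd⟩ := hb1
    have := (hb p hp hd).mul_left Q
    rw [← mul_assoc, ← pow_two, h1] at this
    exact hp.not_isUnit (isUnit_of_dvd_one this)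

theorem cop_pow {c x : ℤ} (hc : Prime c) (m : ℕ) (h : ¬ c ∣ x) : IsCoprime (c ^ m) x :=
  ((Prime.coprime_iff_not_dvd hc).mpr h).pow_left

theorem divide (c A B P Q U V : ℤ) (z w m : ℕ) (hc : Prime c) (hc2 : ¬ c ∣ 2)
    (hcB : ¬ c ∣ B) (hcQ : ¬ c ∣ Q) (hcU : ¬ c ∣ U) 
    (h : P ^ 2 * A + Q ^ 2 * B = c ^ z) (h' : U ^ 2 + A * B * V ^ 2 = c ^ w)
    (hcA : ¬ c ∣ A)
    (hd : c ∣ Q * U - P * V * A) (hz : m ≤ z) (hw : m ≤ w) :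
    ∃ P' Q' : ℤ, P * U + Q * V * B = c ^ m * P' ∧ Q * U - P * V * A = c ^ m * Q' ∧
      P' ^ 2 * A + Q' ^ 2 * B = c ^ (z + w - 2 * m) := by
  have h1 : c ^ m ∣ (Q * U - P * V * A) * ((Q * U + P * V * A) * B) := by
    have : (Q * U - P * V * A) * ((Q * U + P * V * A) * B) = c ^ z * U ^ 2 - P ^ 2 * A * c ^ w := by
      rw [← h, ← h']; ring
    rw [this]
    exact dvd_sub ((pow_dvd_pow c hz).mul_right _) ((pow_dvd_pow c hw).mul_left _)
  have h2 : ¬ c ∣ (Q * U + P * V * A) * B := by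
    intro hcon
    rcases hc.dvd_or_dvd hcon with h | h
    · have : c ∣ 2 * (Q * U) := by
        have := dvd_add h hd
        have e : Q * U + P * V * A + (Q * U - P * V * A) = 2 * (Q * U) := by ring
        rwa [e] at this
      rcases hc.dvd_or_dvd this with h | h
      · exact hc2 h
      · rcases hc.dvd_or_dvd h with h | h
        · exact hcQ h
        · exact hcU h
    · exact hcB h
  obtain ⟨Q', hQ'⟩ := (cop_pow hc m h2).dvd_of_dvd_mul_right h1
  have hN : (P * U + Q * V * B) ^ 2 * A + (Q * U - P * V * A) ^ 2 * B = c ^ (z + w) := by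
    rw [pow_add, ← h, ← h']; ring
  have hsplit : c ^ (z + w) = (c ^ m) ^ 2 * c ^ (z + w - 2 * m) := by
    rw [← pow_mul, ← pow_add]; congr 1; omega
  have h3 : (c ^ m) ^ 2 ∣ (P * U + Q * V * B) ^ 2 := by
    have : (c ^ m) ^ 2 ∣ (P * U + Q * V * B) ^ 2 * A := by
      refine ⟨c ^ (z + w - 2 * m) - Q' ^ 2 * B, ?_⟩
      rw [hQ', hsplit] at hN
      linear_combination hN
    rw [← pow_mul] at this ⊢
    exact (cop_pow hc _ hcA).dvd_of_dvd_mul_right this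
  obtain ⟨P', hP'⟩ := (Int.pow_dvd_pow_iff (two_ne_zero)).mp h3
  refine ⟨P', Q', hP', hQ', ?_⟩
  have hc0 : (c ^ m) ^ 2 ≠ 0 := pow_ne_zero _ (pow_ne_zero _ hc.ne_zero)
  apply mul_left_cancel₀ hc0
  rw [← hsplit, ← hN, hP', hQ']
  ring

/-- Admissible elements. -/
def TT (a b c A B P Q : ℤ) (z : ℕ) : Prop :=
  P ^ 2 * A + Q ^ 2 * B = c ^ z ∧ ¬ c ∣ P ∧ (∀ p : ℤ, Prime p → p ∣ a → p ∣ P * A) ∧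
    (∀ p : ℤ, Prime p → p ∣ b → p ∣ Q * B)

theorem not_dvd_Q {c A B P Q : ℤ} {z : ℕ} (hc : Prime c) (hcA : ¬ c ∣ A) (hz : z ≠ 0)
    (h : P ^ 2 * A + Q ^ 2 * B = c ^ z) (hP : ¬ c ∣ P) : ¬ c ∣ Q := by
  intro hQ
  have h1 : c ∣ P ^ 2 * A + Q ^ 2 * B := h ▸ dvd_pow_self c hz
  have h2 := (dvd_add_left ((dvd_pow hQ two_ne_zero).mul_right B)).mp h1
  rcases hc.dvd_or_dvd h2 with h | h
  · exact hP (hc.dvd_of_dvd_pow h)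
  · exact hcA h

theorem same_norm (a b c A B P Q P0 Q0 : ℤ) (z : ℕ) (hc : Prime c) (hc2 : ¬ c ∣ 2)
    (hA : 0 < A) (hB : 0 < B) (hcA : ¬ c ∣ A) (hcB : ¬ c ∣ B)
    (ha1 : ∃ p, Prime p ∧ p ∣ a) (hac : IsCoprime a c) (hz : z ≠ 0)
    (T0 : TT a b c A B P0 Q0 z) (T : TT a b c A B P Q z) (hd : c ∣ P0 * Q - P * Q0) :
    ∃ e : ℤ, (e = 1 ∨ e = -1) ∧ P = e * P0 ∧ Q = e * Q0 := by
  obtain ⟨h0, hP0, ha0, hb0⟩ := T0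
  obtain ⟨h, hP, ha, hb⟩ := T
  have hQ := not_dvd_Q hc hcA hz h hP
  have h1 : c ^ z ∣ (P0 * Q - P * Q0) * ((P0 * Q + P * Q0) * B) := by
    refine ⟨P0 ^ 2 - P ^ 2, ?_⟩
    linear_combination P0 ^ 2 * h - P ^ 2 * h0
  have h2 : ¬ c ∣ (P0 * Q + P * Q0) * B := by
    intro hcon
    rcases hc.dvd_or_dvd hcon with h | h
    · have := dvd_add h hd
      have e : P0 * Q + P * Q0 + (P0 * Q - P * Q0) = 2 * (P0 * Q) := by ring
      rw [e] at this
      rcases hc.dvd_or_dvd this with h | h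
      · exact hc2 h
      · rcases hc.dvd_or_dvd h with h | h
        · exact hP0 h
        · exact hQ h
    · exact hcB h
  obtain ⟨S, hS⟩ := (cop_pow hc z h2).dvd_of_dvd_mul_right h1
  have hN : (P * P0 * A + Q * Q0 * B) ^ 2 + A * B * (P0 * Q - P * Q0) ^ 2 = (c ^ z) ^ 2 := by
    have : (c ^ z) ^ 2 = c ^ z * c ^ z := by ring
    rw [this]
    nth_rw 1 [← h]
    rw [← h0]; ring
  have hcz : c ^ z ≠ 0 := pow_ne_zero _ hc.ne_zero
  have hS0 : S = 0 := by
    by_contra hne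
    rw [hS] at hN
    have hS1 : 1 ≤ S ^ 2 := by
      have : 0 < S ^ 2 := by positivity
      omega
    have hcz2 : 0 < (c ^ z) ^ 2 := by positivity
    have hAB : A * B * S ^ 2 ≤ 1 := by
      by_contra hcon
      push Not at hcon
      nlinarith [sq_nonneg (P * P0 * A + Q * Q0 * B)]
    have hAB1 : A * B ≤ 1 := by nlinarith [mul_pos hA hB]
    have hA1 : A = 1 := by nlinarith
    have hAB0 : 1 ≤ A * B := by nlinarith
    have hSS : S ^ 2 = 1 := by nlinarith
    obtain ⟨p, hp, hpa⟩ := ha1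
    have d1 := ha p hp hpa
    have d2 := ha0 p hp hpa
    rw [hA1, mul_one] at d1 d2
    have d3 : p ∣ c ^ z * S := hS ▸ dvd_sub (d2.mul_right Q) (d1.mul_right Q0)
    have d4 : p ∣ c ^ z := by
      have := d3.mul_right S
      rwa [mul_assoc, ← pow_two, hSS, mul_one] at this
    exact hp.not_isUnit (hac.isUnit_of_dvd' hpa (hp.dvd_of_dvd_pow d4))
  rw [hS0, mul_zero] at hS
  rw [hS] at hN
  have hR : (P * P0 * A + Q * Q0 * B) ^ 2 = (c ^ z) ^ 2 := by linarith
  have fin : ∀ e : ℤ, P * P0 * A + Q * Q0 * B = e * c ^ z → P = e * P0 ∧ Q = e * Q0 := by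
    intro e he
    constructor
    · apply mul_left_cancel₀ hcz
      linear_combination P0 * he - P * h0 - Q0 * B * hS
    · apply mul_left_cancel₀ hcz
      linear_combination Q0 * he - Q * h0 + P0 * A * hS
  rcases sq_eq_sq_iff_eq_or_eq_neg.mp hR with h | h
  · exact ⟨1, Or.inl rfl, fin 1 (by rw [h]; ring)⟩
  · exact ⟨-1, Or.inr rfl, fin (-1) (by rw [h]; ring)⟩

theorem descent (a b c A B P0 Q0 : ℤ) (z0 : ℕ) (hc : Prime c) (hc2 : ¬ c ∣ 2)
    (hA : 0 < A) (hB : 0 < B) (hcA : ¬ c ∣ A) (hcB : ¬ c ∣ B)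
    (ha1 : ∃ p, Prime p ∧ p ∣ a) (hb1 : ∃ p, Prime p ∧ p ∣ b)
    (hac : IsCoprime a c) (hbc : IsCoprime b c)
    (T0 : TT a b c A B P0 Q0 z0)
    (hmin : ∀ P Q z, TT a b c A B P Q z → z0 ≤ z) :
    ∀ (z : ℕ) (P Q : ℤ), TT a b c A B P Q z → c ∣ P0 * Q - P * Q0 →
    ∃ (n : ℕ) (e : ℤ), (e = 1 ∨ e = -1) ∧
      P = e * (P0 * (FG (P0 ^ 2 * A) (-(Q0 ^ 2 * B)) n).1) ∧
      Q = e * (Q0 * (FG (P0 ^ 2 * A) (-(Q0 ^ 2 * B)) n).2) := by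
  intro z
  induction z using Nat.strong_induction_on with
  | _ z ih =>
  intro P Q T hd
  have T0' := T0
  have T' := T
  obtain ⟨h0, hP0, ha0, hb0⟩ := T0'
  obtain ⟨h, hP, ha, hb⟩ := T'
  have hz0 : z0 ≠ 0 := norm_one_no a b c A B P0 Q0 z0 hA hB ha1 hb1 ha0 hb0 h0
  have hz : z ≠ 0 := norm_one_no a b c A B P Q z hA hB ha1 hb1 ha hb h
  rcases (hmin P Q z T).eq_or_lt with heq | hlt
  · subst heq
    obtain ⟨e, he, h1, h2⟩ := same_norm a b c A B P Q P0 Q0 z0 hc hc2 hA hB hcA hcB ha1 hac hz T0 T hd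
    exact ⟨0, e, he, by simp [FG, h1], by simp [FG, h2]⟩
  have hQ0 := not_dvd_Q hc hcA hz0 h0 hP0
  have hQ := not_dvd_Q hc hcA hz h hP
  obtain ⟨U, hU⟩ : ∃ U, U = P0 ^ 2 * A - Q0 ^ 2 * B := ⟨_, rfl⟩
  obtain ⟨V, hV⟩ : ∃ V, V = 2 * P0 * Q0 := ⟨_, rfl⟩
  obtain ⟨d, hd'⟩ := hd
  obtain ⟨g, hg⟩ : c ∣ c ^ z0 := dvd_pow_self c hz0
  have hcU : ¬ c ∣ U := by
    intro hcon
    have h1 := dvd_add hcon (Dvd.intro _ hg.symm)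
    have e : U + c ^ z0 = 2 * (P0 ^ 2 * A) := by rw [← h0, hU]; ring
    rw [e] at h1
    rcases hc.dvd_or_dvd h1 with h | h
    · exact hc2 h
    · rcases hc.dvd_or_dvd h with h | h
      · exact hP0 (hc.dvd_of_dvd_pow h)
      · exact hcA h
  have hUV : U ^ 2 + A * B * V ^ 2 = c ^ (2 * z0) := by
    rw [mul_comm 2 z0, pow_mul, ← h0, hU, hV]; ring
  have hcd : c ∣ Q * U - P * V * A := by
    have : c ∣ P0 * (Q * U - P * V * A) := by
      refine ⟨d * U - P * Q0 * g, ?_⟩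
      rw [hg] at h0
      rw [hU, hV]
      linear_combination (P0 ^ 2 * A - Q0 ^ 2 * B) * hd' - P * Q0 * h0
    exact (hc.dvd_or_dvd this).resolve_left hP0
  obtain ⟨P', Q', e1, e2, hN⟩ := divide c A B P Q U V z (2 * z0) (min z (2 * z0)) hc hc2 hcB hQ hcU h hUV hcA hcd
    (min_le_left _ _) (min_le_right _ _)
  set m := min z (2 * z0) with hm
  have hpc : ∀ p x : ℤ, Prime p → (p ∣ a ∨ p ∣ b) → p ∣ c ^ m * x → p ∣ x := by
    intro p x hp hpp hpd
    refine (hp.dvd_or_dvd hpd).resolve_left (fun h => ?_)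
    have h := hp.dvd_of_dvd_pow h
    rcases hpp with hh | hh
    · exact hp.not_isUnit (hac.isUnit_of_dvd' hh h)
    · exact hp.not_isUnit (hbc.isUnit_of_dvd' hh h)
  have ha' : ∀ p : ℤ, Prime p → p ∣ a → p ∣ P' * A := by
    intro p hp hpa
    apply hpc p _ hp (Or.inl hpa)
    have : c ^ m * (P' * A) = (P * A) * U + (P0 * A) * (2 * Q0 * Q * B) := by
      rw [← mul_assoc, ← e1, hV]; ring
    rw [this]
    exact dvd_add ((ha p hp hpa).mul_right _) ((ha0 p hp hpa).mul_right _)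
  have hb' : ∀ p : ℤ, Prime p → p ∣ b → p ∣ Q' * B := by
    intro p hp hpa
    apply hpc p _ hp (Or.inr hpa)
    have : c ^ m * (Q' * B) = (Q * B) * U - (Q0 * B) * (2 * P0 * P * A) := by
      rw [← mul_assoc, ← e2, hV]; ring
    rw [this]
    exact dvd_sub ((hb p hp hpa).mul_right _) ((hb0 p hp hpa).mul_right _)
  have hk := norm_one_no a b c A B P' Q' _ hA hB ha1 hb1 ha' hb' hN
  have hcPQ : c ∣ P' → c ∣ Q' := by
    intro hcP
    have h1 : c ∣ P' ^ 2 * A + Q' ^ 2 * B := hN ▸ dvd_pow_self c hk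
    have h2 := (dvd_add_right ((dvd_pow hcP two_ne_zero).mul_right A)).mp h1
    rcases hc.dvd_or_dvd h2 with h | h
    · exact hc.dvd_of_dvd_pow h
    · exact absurd h hcB
  have hcm : c ^ m ≠ 0 := pow_ne_zero _ hc.ne_zero
  rcases lt_or_ge z (2 * z0) with hlt2 | hge
  · exfalso
    have hmz : m = z := min_eq_left hlt2.le
    have hcP' : ¬ c ∣ P' := by
      intro hcP
      have hcQ := hcPQ hcP
      apply hcU
      have : U = P' * (A * P) + Q' * (B * Q) := by
        apply mul_left_cancel₀ hcm
        have h' := h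
        rw [← hmz] at h'
        linear_combination A * P * e1 + B * Q * e2 - U * h'
      rw [this]
      exact dvd_add (hcP.mul_right _) (hcQ.mul_right _)
    have := hmin P' Q' _ ⟨hN, hcP', ha', hb'⟩
    omega
  · have hmz : m = 2 * z0 := min_eq_right hge
    rw [← hmz] at hUV
    have hPe : P = P' * U - Q' * V * B := by
      apply mul_left_cancel₀ hcm
      linear_combination U * e1 - V * B * e2 - P * hUV
    have hQe : Q = Q' * U + P' * V * A := by
      apply mul_left_cancel₀ hcm
      linear_combination U * e2 + V * A * e1 - Q * hUV
    have hcP' : ¬ c ∣ P' := by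
      intro hcP
      have hcQ := hcPQ hcP
      apply hP
      rw [hPe]
      exact dvd_sub (hcP.mul_right _) ((hcQ.mul_right _).mul_right _)
    have hcomp : c ∣ P0 * Q' - P' * Q0 := by
      have hprod : c ∣ (P0 * Q' - P' * Q0) * ((P0 * Q' + P' * Q0) * B) := by
        obtain ⟨k, hk'⟩ : c ∣ c ^ (z + 2 * z0 - 2 * m) := dvd_pow_self c hk
        rw [hk'] at hN
        rw [hg] at h0
        refine ⟨P0 ^ 2 * k - P' ^ 2 * g, ?_⟩
        linear_combination P0 ^ 2 * hN - P' ^ 2 * h0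
      rcases hc.dvd_or_dvd hprod with h1 | h1
      · exact h1
      · exfalso
        have h1 := (hc.dvd_or_dvd h1).resolve_right hcB
        obtain ⟨k, hk'⟩ := h1
        apply hP
        refine ⟨P' * g - 2 * Q0 * B * k, ?_⟩
        rw [hg] at h0
        rw [hPe, hU, hV]
        linear_combination P' * h0 - 2 * Q0 * B * hk'
    obtain ⟨n, e, he, f1, f2⟩ := ih (z + 2 * z0 - 2 * m) (by omega) P' Q' ⟨hN, hcP', ha', hb'⟩ hcomp
    refine ⟨n + 1, e, he, ?_, ?_⟩
    · rw [hPe, f1, f2, hU, hV]; simp only [FG]; ring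
    · rw [hQe, f1, f2, hU, hV]; simp only [FG]; ring

theorem FG_norm (A B P Q : ℤ) (n : ℕ) :
    (P * (FG (P ^ 2 * A) (-(Q ^ 2 * B)) n).1) ^ 2 * A +
      (Q * (FG (P ^ 2 * A) (-(Q ^ 2 * B)) n).2) ^ 2 * B = (P ^ 2 * A + Q ^ 2 * B) ^ (2 * n + 1) := by
  induction n with
  | zero => simp [FG]
  | succ n ih =>
    have : 2 * (n + 1) + 1 = (2 * n + 1) + 2 := by ring
    rw [this, pow_add, ← ih]
    simp only [FG]
    ring

theorem FG_comp (A B P Q P' Q' : ℤ) (hA : 0 < A) (hB : 0 < B) (n j i : ℕ)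
    (hn : 2 * n + 1 = (2 * j + 1) * (2 * i + 1))
    (hP' : P' = P * (FG (P ^ 2 * A) (-(Q ^ 2 * B)) j).1)
    (hQ' : Q' = Q * (FG (P ^ 2 * A) (-(Q ^ 2 * B)) j).2) :
    P * (FG (P ^ 2 * A) (-(Q ^ 2 * B)) n).1 = P' * (FG (P' ^ 2 * A) (-(Q' ^ 2 * B)) i).1 ∧
    Q * (FG (P ^ 2 * A) (-(Q ^ 2 * B)) n).2 = Q' * (FG (P' ^ 2 * A) (-(Q' ^ 2 * B)) i).2 := by
  have hA' : (0 : ℝ) < A := by exact_mod_cast hA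
  have hB' : (0 : ℝ) < B := by exact_mod_cast hB
  have hs : ((Real.sqrt A : ℝ) : ℂ) ^ 2 = (A : ℂ) := by
    rw [← Complex.ofReal_pow, Real.sq_sqrt hA'.le]; simp
  have ht : (((Real.sqrt B : ℝ) : ℂ) * Complex.I) ^ 2 = -(B : ℂ) := by
    rw [mul_pow, Complex.I_sq, ← Complex.ofReal_pow, Real.sq_sqrt hB'.le]; simp
  have e1 := FG_pow A B P Q _ _ hs ht n
  have e2 := FG_pow A B P Q _ _ hs ht j
  have e3 := FG_pow A B P' Q' _ _ hs ht i
  rw [hn, pow_mul, e2, ← hP', ← hQ', e3] at e1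
  have hsA : Real.sqrt A ≠ 0 := (Real.sqrt_pos.mpr hA').ne'
  have hsB : Real.sqrt B ≠ 0 := (Real.sqrt_pos.mpr hB').ne'
  constructor
  · have := congrArg Complex.re e1
    simp only [Complex.add_re, Complex.mul_re, Complex.mul_im, Complex.intCast_re,
      Complex.intCast_im, Complex.ofReal_re, Complex.ofReal_im, Complex.I_re, Complex.I_im] at this
    ring_nf at this
    have h2 := mul_right_cancel₀ hsA (by ring_nf; exact this :
      ((P' * (FG (P' ^ 2 * A) (-(Q' ^ 2 * B)) i).1 : ℤ) : ℝ) * Real.sqrt A =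
      ((P * (FG (P ^ 2 * A) (-(Q ^ 2 * B)) n).1 : ℤ) : ℝ) * Real.sqrt A)
    exact_mod_cast h2.symm
  · have := congrArg Complex.im e1
    simp only [Complex.add_im, Complex.mul_re, Complex.mul_im, Complex.intCast_re,
      Complex.intCast_im, Complex.ofReal_re, Complex.ofReal_im, Complex.I_re, Complex.I_im] at this
    ring_nf at this
    have h2 := mul_right_cancel₀ hsB (by ring_nf; exact this :
      ((Q' * (FG (P' ^ 2 * A) (-(Q' ^ 2 * B)) i).2 : ℤ) : ℝ) * Real.sqrt B =
      ((Q * (FG (P ^ 2 * A) (-(Q ^ 2 * B)) n).2 : ℤ) : ℝ) * Real.sqrt B)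
    exact_mod_cast h2.symm

theorem only_one (a b c A B P0 Q0 : ℤ) (z0 : ℕ) (hc : Prime c) (hc3 : 3 ≤ c)
    (hA : 0 < A) (hB : 0 < B) (hcA : ¬ c ∣ A) 
    (hz0 : z0 ≠ 0)
    (hAa : A ∣ a) (hBb : B ∣ b) (h3a : ¬ (3 : ℤ) ∣ a) (h3b : ¬ (3 : ℤ) ∣ b)
    (T0 : TT a b c A B P0 Q0 z0) (P Q : ℤ) (n : ℕ) (e : ℤ) (he : e = 1 ∨ e = -1)
    (hP : P = e * (P0 * (FG (P0 ^ 2 * A) (-(Q0 ^ 2 * B)) n).1))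
    (hQ : Q = e * (Q0 * (FG (P0 ^ 2 * A) (-(Q0 ^ 2 * B)) n).2))
    (hcP : ¬ c ∣ P)
    (hPa : ∀ p : ℤ, Prime p → p ∣ P → p ∣ a) (hQb : ∀ p : ℤ, Prime p → p ∣ Q → p ∣ b) :
    P ^ 2 = P0 ^ 2 ∧ Q ^ 2 = Q0 ^ 2 := by
  have he2 : e ^ 2 = 1 := by rcases he with rfl | rfl <;> norm_num
  by_cases hn0 : n = 0
  · subst hn0
    simp only [FG, mul_one] at hP hQ
    rw [hP, hQ, mul_pow, mul_pow, he2]; simp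
  exfalso
  obtain ⟨h0, hP0, ha0, hb0⟩ := T0
  have hk : 2 * n + 1 ≠ 1 := by omega
  have hq := Nat.minFac_prime hk
  obtain ⟨m, hm⟩ := Nat.minFac_dvd (2 * n + 1)
  set q := (2 * n + 1).minFac
  have hodd : Odd (q * m) := by rw [← hm]; exact ⟨n, rfl⟩
  obtain ⟨⟨i, hi⟩, ⟨j, hj⟩⟩ := Nat.odd_mul.mp hodd
  obtain ⟨P', hP'⟩ : ∃ P', P' = P0 * (FG (P0 ^ 2 * A) (-(Q0 ^ 2 * B)) j).1 := ⟨_, rfl⟩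
  obtain ⟨Q', hQ'⟩ : ∃ Q', Q' = Q0 * (FG (P0 ^ 2 * A) (-(Q0 ^ 2 * B)) j).2 := ⟨_, rfl⟩
  obtain ⟨c1, c2⟩ := FG_comp A B P0 Q0 P' Q' hA hB n j i (by rw [hm, hi, hj]; ring) hP' hQ'
  rw [c1] at hP
  rw [c2] at hQ
  have hdP : ∀ x, x ∣ P' * (FG (P' ^ 2 * A) (-(Q' ^ 2 * B)) i).1 → x ∣ P := by
    intro x hx; rw [hP]; exact hx.mul_left e
  have hdQ : ∀ x, x ∣ Q' * (FG (P' ^ 2 * A) (-(Q' ^ 2 * B)) i).2 → x ∣ Q := by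
    intro x hx; rw [hQ]; exact hx.mul_left e
  have hN : P' ^ 2 * A + Q' ^ 2 * B = c ^ (z0 * m) := by
    rw [hP', hQ', FG_norm, h0, ← pow_mul, hj]
  have hN2 := FG_norm A B P' Q' i
  rw [hN, ← pow_mul, ← hi] at hN2
  have p3 : Prime (3 : ℤ) := Int.prime_three
  refine prime_step A B P' Q' c a b (z0 * m) q i hA hB (mul_ne_zero hz0 (by omega)) hc3 hq hi hN
    ?_ ?_ ?_ ?_ ?_ (fun p hp hd => hPa p hp (hdP p hd)) (fun p hp hd => hQb p hp (hdQ p hd)) hN2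
  · have hcP' : ¬ c ∣ P' ^ 2 * A := by
      intro h
      rcases hc.dvd_or_dvd h with h | h
      · exact hcP (hdP c ((hc.dvd_of_dvd_pow h).mul_right _))
      · exact hcA h
    have hcop := (cop_pow hc (z0 * m) hcP').symm
    rw [← hN] at hcop
    have : IsCoprime (P' ^ 2 * A) (Q' ^ 2 * B) := by
      obtain ⟨u, v, huv⟩ := hcop
      exact ⟨u + v, v, by linear_combination huv⟩
    exact this.neg_right
  · intro p hp hpa
    have := (ha0 p hp hpa).mul_right (FG (P0 ^ 2 * A) (-(Q0 ^ 2 * B)) j).1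
    rw [hP', mul_right_comm]; exact this
  · intro p hp hpa
    have := (hb0 p hp hpa).mul_right (FG (P0 ^ 2 * A) (-(Q0 ^ 2 * B)) j).2
    rw [hQ', mul_right_comm]; exact this
  · intro h
    rcases p3.dvd_or_dvd h with h | h
    · exact h3a (hPa 3 p3 (hdP 3 ((p3.dvd_of_dvd_pow h).mul_right _)))
    · exact h3a (h.trans hAa)
  · intro h
    rcases p3.dvd_or_dvd h with h | h
    · exact h3b (hQb 3 p3 (hdQ 3 ((p3.dvd_of_dvd_pow h).mul_right _)))
    · exact h3b (h.trans hBb)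

theorem parity_unique (a b c : ℕ) (hac : Nat.Coprime a c)
    (hbc : Nat.Coprime b c) (ha1 : 1 < a) (hb1 : 1 < b)
    (ha3 : ¬ 3 ∣ a) (hb3 : ¬ (3 ∣ b)) (hc : Nat.Prime c) (hcodd : Odd c)
    (x₁ y₁ z₁ x₂ y₂ z₂ : ℕ) (hx₁ : 0 < x₁) (hy₁ : 0 < y₁) (hx₂ : 0 < x₂) (hy₂ : 0 < y₂)
    (h₁ : a ^ x₁ + b ^ y₁ = c ^ z₁) (h₂ : a ^ x₂ + b ^ y₂ = c ^ z₂)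
    (hx : x₁ % 2 = x₂ % 2) (hy : y₁ % 2 = y₂ % 2) :
    (x₁, y₁, z₁) = (x₂, y₂, z₂) := by
  have hc2 : c ≠ 2 := by rintro rfl; exact absurd hcodd (by decide)
  have hc3 : 3 ≤ c := by have := hc.two_le; omega
  have hcZ : Prime (c : ℤ) := Nat.prime_iff_prime_int.mp hc
  have hacZ : IsCoprime (a : ℤ) c := Nat.isCoprime_iff_coprime.mpr hac
  have hbcZ : IsCoprime (b : ℤ) c := Nat.isCoprime_iff_coprime.mpr hbc
  have nca : ¬ (c : ℤ) ∣ a := fun h => hcZ.not_isUnit (hacZ.isUnit_of_dvd' h dvd_rfl)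
  have ncb : ¬ (c : ℤ) ∣ b := fun h => hcZ.not_isUnit (hbcZ.isUnit_of_dvd' h dvd_rfl)
  have nc2 : ¬ (c : ℤ) ∣ 2 := by
    intro h
    have := Int.le_of_dvd (by norm_num) h
    omega
  have expa : ∃ p : ℤ, Prime p ∧ p ∣ (a : ℤ) := by
    obtain ⟨p, hp, hd⟩ := Nat.exists_prime_and_dvd ha1.ne'
    exact ⟨p, Nat.prime_iff_prime_int.mp hp, by exact_mod_cast hd⟩
  have expb : ∃ p : ℤ, Prime p ∧ p ∣ (b : ℤ) := by
    obtain ⟨p, hp, hd⟩ := Nat.exists_prime_and_dvd hb1.ne'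
    exact ⟨p, Nat.prime_iff_prime_int.mp hp, by exact_mod_cast hd⟩
  obtain ⟨A, hA⟩ : ∃ A : ℤ, A = (a : ℤ) ^ (x₁ % 2) := ⟨_, rfl⟩
  obtain ⟨B, hB⟩ : ∃ B : ℤ, B = (b : ℤ) ^ (y₁ % 2) := ⟨_, rfl⟩
  have hA0 : 0 < A := by rw [hA]; positivity
  have hB0 : 0 < B := by rw [hB]; positivity
  have hAa : A ∣ a := by
    rcases Nat.mod_two_eq_zero_or_one x₁ with h | h <;> simp [hA, h]
  have hBb : B ∣ b := by
    rcases Nat.mod_two_eq_zero_or_one y₁ with h | h <;> simp [hB, h]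
  have hcA : ¬ (c : ℤ) ∣ A := fun h => nca (h.trans hAa)
  have hcB : ¬ (c : ℤ) ∣ B := fun h => ncb (h.trans hBb)
  have half : ∀ (u : ℤ) (x : ℕ), (u ^ (x / 2)) ^ 2 * u ^ (x % 2) = u ^ x := by
    intro u x
    rw [← pow_mul, ← pow_add]; congr 1; omega
  have mk : ∀ x y z : ℕ, 0 < x → 0 < y → a ^ x + b ^ y = c ^ z → x₁ % 2 = x % 2 → y₁ % 2 = y % 2 →
      TT a b c A B ((a : ℤ) ^ (x / 2)) ((b : ℤ) ^ (y / 2)) z := by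
    intro x y z hx0 hy0 h hx hy
    refine ⟨?_, ?_, ?_, ?_⟩
    · rw [hA, hB, hx, hy, half, half]; exact_mod_cast h
    · intro h; exact nca (hcZ.dvd_of_dvd_pow h)
    · intro p hp hd
      rw [hA, hx, ← pow_add]
      exact hd.trans (dvd_pow_self _ (by omega))
    · intro p hp hd
      rw [hB, hy, ← pow_add]
      exact hd.trans (dvd_pow_self _ (by omega))
  have T1 := mk x₁ y₁ z₁ hx₁ hy₁ h₁ rfl rfl
  have T2 := mk x₂ y₂ z₂ hx₂ hy₂ h₂ hx hy
  classical
  have hex : ∃ z : ℕ, ∃ P Q : ℤ, TT a b c A B P Q z := ⟨_, _, _, T1⟩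
  obtain ⟨P0, Q0, T0⟩ := Nat.find_spec hex
  have hmin : ∀ P Q z, TT a b c A B P Q z → Nat.find hex ≤ z :=
    fun P Q z h => Nat.find_min' hex ⟨P, Q, h⟩
  set z0 := Nat.find hex
  have hz0 : z0 ≠ 0 := norm_one_no a b c A B P0 Q0 z0 hA0 hB0 expa expb T0.2.2.1 T0.2.2.2 T0.1
  have conclude : ∀ x y z : ℕ, TT a b c A B ((a : ℤ) ^ (x / 2)) ((b : ℤ) ^ (y / 2)) z →
      ((a : ℤ) ^ (x / 2)) ^ 2 = P0 ^ 2 ∧ ((b : ℤ) ^ (y / 2)) ^ 2 = Q0 ^ 2 := by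
    intro x y z T
    have hz : z ≠ 0 := norm_one_no a b c A B _ _ z hA0 hB0 expa expb T.2.2.1 T.2.2.2 T.1
    have main : ∀ Q : ℤ, (Q = (b : ℤ) ^ (y / 2) ∨ Q = - (b : ℤ) ^ (y / 2)) →
        (c : ℤ) ∣ P0 * Q - (a : ℤ) ^ (x / 2) * Q0 →
        ((a : ℤ) ^ (x / 2)) ^ 2 = P0 ^ 2 ∧ Q ^ 2 = Q0 ^ 2 := by
      intro Q hQ hd
      have T' : TT a b c A B ((a : ℤ) ^ (x / 2)) Q z := by
        rcases hQ with rfl | rfl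
        · exact T
        · obtain ⟨t1, t2, t3, t4⟩ := T
          refine ⟨by rw [← t1]; ring, t2, t3, ?_⟩
          intro p hp hd
          rw [neg_mul, dvd_neg]; exact t4 p hp hd
      obtain ⟨n, e, he, f1, f2⟩ := descent a b c A B P0 Q0 z0 hcZ nc2 hA0 hB0 hcA hcB expa expb
        hacZ hbcZ T0 hmin z _ Q T' hd
      refine only_one a b c A B P0 Q0 z0 hcZ (by exact_mod_cast hc3) hA0 hB0 hcA hz0 hAa hBb
        (by exact_mod_cast ha3) (by exact_mod_cast hb3) T0 _ Q n e he f1 f2 T'.2.1 ?_ ?_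
      · intro p hp hd; exact hp.dvd_of_dvd_pow hd
      · intro p hp hd
        rcases hQ with rfl | rfl
        · exact hp.dvd_of_dvd_pow hd
        · rw [dvd_neg] at hd; exact hp.dvd_of_dvd_pow hd
    have hprod : (c : ℤ) ∣ (P0 * (b : ℤ) ^ (y / 2) - (a : ℤ) ^ (x / 2) * Q0) *
        ((P0 * -(b : ℤ) ^ (y / 2) - (a : ℤ) ^ (x / 2) * Q0) * B) := by
      obtain ⟨k, hk⟩ : (c : ℤ) ∣ (c : ℤ) ^ z := dvd_pow_self _ hz
      obtain ⟨g, hg⟩ : (c : ℤ) ∣ (c : ℤ) ^ z0 := dvd_pow_self _ hz0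
      have t1 := T.1
      have t0 := T0.1
      rw [hk] at t1
      rw [hg] at t0
      refine ⟨((a : ℤ) ^ (x / 2)) ^ 2 * g - P0 ^ 2 * k, ?_⟩
      linear_combination ((a : ℤ) ^ (x / 2)) ^ 2 * t0 - P0 ^ 2 * t1
    rcases hcZ.dvd_or_dvd hprod with h | h
    · exact main _ (Or.inl rfl) h
    · have := main _ (Or.inr rfl) ((hcZ.dvd_or_dvd h).resolve_right hcB)
      rwa [neg_sq] at this
  obtain ⟨p1, q1⟩ := conclude x₁ y₁ z₁ T1
  obtain ⟨p2, q2⟩ := conclude x₂ y₂ z₂ T2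
  have ea : (a : ℤ) ^ x₁ = (a : ℤ) ^ x₂ := by
    rw [← half _ x₁, ← half _ x₂, p1, p2, hx]
  have eb : (b : ℤ) ^ y₁ = (b : ℤ) ^ y₂ := by
    rw [← half _ y₁, ← half _ y₂, q1, q2, hy]
  have ea' : a ^ x₁ = a ^ x₂ := by exact_mod_cast ea
  have eb' : b ^ y₁ = b ^ y₂ := by exact_mod_cast eb
  have ec' : c ^ z₁ = c ^ z₂ := by rw [← h₁, ← h₂, ea', eb']
  rw [Nat.pow_right_injective ha1 ea', Nat.pow_right_injective hb1 eb',
    Nat.pow_right_injective hc.two_le ec']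

theorem pow_mod3_one (b y : ℕ) (h : b % 3 = 1) : b ^ y % 3 = 1 := by
  rw [Nat.pow_mod, h]; simp

theorem pow_mod3_two (b y : ℕ) (h : b % 3 = 2) : b ^ y % 3 = if y % 2 = 0 then 1 else 2 := by
  obtain ⟨k, hk⟩ : ∃ k, y = 2 * k + y % 2 := ⟨y / 2, by omega⟩
  have e : (b ^ 2) % 3 = 1 := by rw [Nat.pow_mod, h]
  have e2 := pow_mod3_one (b ^ 2) k e
  rcases Nat.mod_two_eq_zero_or_one y with h0 | h0 <;> rw [h0] at hk ⊢
  · rw [hk, add_zero, pow_mul, e2]; simp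
  · rw [hk, pow_add, pow_mul, pow_one, Nat.mul_mod, e2, h]; simp

/-- The parity of `x` is determined by that of `y`. -/
theorem parity_det (a b c : ℕ) (ha3 : a % 3 = 2) (hb3 : ¬ (3 ∣ b)) (hc : Nat.Prime c)
    (x₁ y₁ z₁ x₂ y₂ z₂ : ℕ) (hz₁ : 0 < z₁) (hz₂ : 0 < z₂)
    (h₁ : a ^ x₁ + b ^ y₁ = c ^ z₁) (h₂ : a ^ x₂ + b ^ y₂ = c ^ z₂)
    (hy : y₁ % 2 = y₂ % 2) : x₁ % 2 = x₂ % 2 := by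
  have key : ∀ z, 0 < z → (c ^ z % 3 = 0 ↔ c = 3) := by
    intro z hz
    rw [← Nat.dvd_iff_mod_eq_zero]
    constructor
    · intro h
      exact ((Nat.prime_dvd_prime_iff_eq Nat.prime_three hc).mp
        (Nat.prime_three.dvd_of_dvd_pow h)).symm
    · rintro rfl; exact dvd_pow_self _ (by omega)
  have k1 := key z₁ hz₁
  have k2 := key z₂ hz₂
  rw [← h₁] at k1
  rw [← h₂] at k2
  have a1 := pow_mod3_two a x₁ ha3
  have a2 := pow_mod3_two a x₂ ha3
  have hb : b % 3 = 1 ∨ b % 3 = 2 := by omega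
  rcases hb with hb | hb
  · have b1 := pow_mod3_one b y₁ hb
    have b2 := pow_mod3_one b y₂ hb
    split_ifs at a1 a2 <;> omega
  · have b1 := pow_mod3_two b y₁ hb
    have b2 := pow_mod3_two b y₂ hb
    split_ifs at a1 a2 b1 b2 <;> omega


/-- Lemma 2.12: if `a ≡ 2 mod 3`, `3 ∤ b`, `c` an odd prime, and `a^x + b^y = c^z`
has more than one solution, then it has exactly two solutions, whose `y`-values
have opposite parity. -/
theorem stmt_17 (a b c : ℕ) (hab : Nat.Coprime a b) (hac : Nat.Coprime a c)
    (hbc : Nat.Coprime b c) (ha1 : 1 < a) (hb1 : 1 < b) (hc1 : 1 < c)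
    (ha3 : a % 3 = 2) (hb3 : ¬ (3 ∣ b)) (hc : Nat.Prime c) (hcodd : Odd c)
    (hmany : ∃ s t : ℕ × ℕ × ℕ, s ≠ t ∧
        (0 < s.1 ∧ 0 < s.2.1 ∧ 0 < s.2.2 ∧ a ^ s.1 + b ^ s.2.1 = c ^ s.2.2) ∧
        (0 < t.1 ∧ 0 < t.2.1 ∧ 0 < t.2.2 ∧ a ^ t.1 + b ^ t.2.1 = c ^ t.2.2)) :
    ∃ x₁ y₁ z₁ x₂ y₂ z₂ : ℕ,
        (0 < x₁ ∧ 0 < y₁ ∧ 0 < z₁ ∧ a ^ x₁ + b ^ y₁ = c ^ z₁) ∧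
        (0 < x₂ ∧ 0 < y₂ ∧ 0 < z₂ ∧ a ^ x₂ + b ^ y₂ = c ^ z₂) ∧
        (x₁, y₁, z₁) ≠ (x₂, y₂, z₂) ∧
        (∀ x y z : ℕ, 0 < x → 0 < y → 0 < z → a ^ x + b ^ y = c ^ z →
          (x, y, z) = (x₁, y₁, z₁) ∨ (x, y, z) = (x₂, y₂, z₂)) ∧
        y₁ % 2 ≠ y₂ % 2 := by
  obtain ⟨⟨x₁, y₁, z₁⟩, ⟨x₂, y₂, z₂⟩, hne, ⟨s1, s2, s3, s4⟩, ⟨t1, t2, t3, t4⟩⟩ := hmany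
  simp only at s1 s2 s3 s4 t1 t2 t3 t4
  have uniq : ∀ x y z x' y' z' : ℕ, 0 < x → 0 < y → 0 < z → a ^ x + b ^ y = c ^ z →
      0 < x' → 0 < y' → 0 < z' → a ^ x' + b ^ y' = c ^ z' → y % 2 = y' % 2 →
      (x, y, z) = (x', y', z') := by
    intro x y z x' y' z' hx hy hz h hx' hy' hz' h' hpar
    exact parity_unique a b c hac hbc ha1 hb1 (by omega) hb3 hc hcodd x y z x' y' z' hx hy hx' hy'
      h h' (parity_det a b c ha3 hb3 hc x y z x' y' z' hz hz' h h' hpar) hpar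
  have hpar : y₁ % 2 ≠ y₂ % 2 := fun h =>
    hne (uniq _ _ _ _ _ _ s1 s2 s3 s4 t1 t2 t3 t4 h)
  refine ⟨x₁, y₁, z₁, x₂, y₂, z₂, ⟨s1, s2, s3, s4⟩, ⟨t1, t2, t3, t4⟩, hne, ?_, hpar⟩
  intro x y z hx hy hz h
  have : y % 2 = y₁ % 2 ∨ y % 2 = y₂ % 2 := by omega
  rcases this with h' | h'
  · exact Or.inl (uniq _ _ _ _ _ _ hx hy hz h s1 s2 s3 s4 h')
  · exact Or.inr (uniq _ _ _ _ _ _ hx hy hz h t1 t2 t3 t4 h')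
end

section
/- Let $c$ and $b$ be positive integers. Then there exists at most one pair of positive integers $(z,y)$ for which $0 < |c^z - b^y| < \frac{1}{4} \max\{ c^{z/2}, b^{y/2} \}$: if $(z_1,y_1)$ and $(z_2,y_2)$ are pairs of positive integers both satisfying this inequality, then $(z_1,y_1) = (z_2,y_2)$. -/
namespace Pil

/-- geometric power series `1/(1 - A t)` -/
noncomputable def geo (A : ℤ) : PowerSeries ℤ := PowerSeries.mk fun s => A ^ s

theorem geo_eq (A : ℤ) : geo A = 1 + PowerSeries.C A * PowerSeries.X * geo A := by
  ext n
  cases n with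
  | zero => simp [geo]
  | succ n =>
    rw [mul_assoc]
    rw [map_add, PowerSeries.coeff_C_mul, PowerSeries.coeff_succ_X_mul]
    simp [geo, pow_succ', PowerSeries.coeff_one]

/-- coefficient of `t^N` in `(1-At)^(-i) (1-Bt)^(-j)` -/
noncomputable def hh (A B : ℤ) (N i j : ℕ) : ℤ := PowerSeries.coeff N (geo A ^ i * geo B ^ j)

theorem hh_zero (A B : ℤ) (i j : ℕ) : hh A B 0 i j = 1 := by
  simp [hh, geo]

theorem hh_zz (A B : ℤ) (N : ℕ) : hh A B (N+1) 0 0 = 0 := by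
  simp [hh, PowerSeries.coeff_one]

theorem hh_left (A B : ℤ) (N i j : ℕ) :
    hh A B (N+1) (i+1) j = hh A B (N+1) i j + A * hh A B N (i+1) j := by
  have h : geo A ^ (i+1) * geo B ^ j = geo A ^ i * geo B ^ j
      + PowerSeries.C A * (PowerSeries.X * (geo A ^ (i+1) * geo B ^ j)) := by
    have := geo_eq A
    calc geo A ^ (i+1) * geo B ^ j = geo A ^ i * geo B ^ j * geo A := by ring
      _ = geo A ^ i * geo B ^ j * (1 + PowerSeries.C A * PowerSeries.X * geo A) := by rw [← this]
      _ = _ := by ring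
  unfold hh
  conv_lhs => rw [h]
  rw [map_add, PowerSeries.coeff_C_mul, PowerSeries.coeff_succ_X_mul]

theorem hh_symm (A B : ℤ) (N i j : ℕ) : hh A B N i j = hh B A N j i := by
  unfold hh; rw [mul_comm]

theorem hh_right (A B : ℤ) (N i j : ℕ) :
    hh A B (N+1) i (j+1) = hh A B (N+1) i j + B * hh A B N i (j+1) := by
  rw [hh_symm, hh_left, hh_symm B A, hh_symm B A]

theorem hh_d (A B : ℤ) (N i j : ℕ) :
    (A - B) * hh A B N (i+1) (j+1) = A * hh A B N (i+1) j - B * hh A B N i (j+1) := by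
  have h : PowerSeries.C (A - B) * (geo A ^ (i+1) * geo B ^ (j+1)) =
      PowerSeries.C A * (geo A ^ (i+1) * geo B ^ j)
        - PowerSeries.C B * (geo A ^ i * geo B ^ (j+1)) := by
    have hA := geo_eq A
    have hB := geo_eq B
    have : (PowerSeries.C A - PowerSeries.C B) * (geo A * geo B)
        = PowerSeries.C A * geo A - PowerSeries.C B * geo B := by
      linear_combination (- PowerSeries.C B * geo B) * hA + (PowerSeries.C A * geo A) * hB
    rw [map_sub]
    linear_combination (geo A ^ i * geo B ^ j) * this
  have := congrArg (PowerSeries.coeff N) h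
  rw [PowerSeries.coeff_C_mul, map_sub, PowerSeries.coeff_C_mul, PowerSeries.coeff_C_mul] at this
  exact this

theorem hh_base (A B : ℤ) (N i : ℕ) : hh A B N (i+1) 0 = (Nat.choose (N+i) i : ℤ) * A ^ N := by
  induction N generalizing i with
  | zero => simp [hh_zero]
  | succ N ih =>
    induction i with
    | zero => rw [hh_left, hh_zz, ih]; simp [pow_succ']
    | succ i ih2 =>
      rw [hh_left, ih2, ih]
      have : Nat.choose (N+1+(i+1)) (i+1) = Nat.choose (N+1+i) i + Nat.choose (N+(i+1)) (i+1) := by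
        rw [show N+1+(i+1) = (N+1+i)+1 by ring, Nat.choose_succ_succ,
          show N+1+i = N+(i+1) by ring]
      rw [this]; push_cast; ring

theorem hh_base' (A B : ℤ) (N j : ℕ) : hh A B N 0 (j+1) = (Nat.choose (N+j) j : ℤ) * B ^ N := by
  rw [hh_symm, hh_base]

/-- generic Padé polynomial: `Σ_{k ≤ i} multichoose j k * C(N+i-k, i-k) B^k d^(i-k)`. -/
def FF (B d : ℤ) (N i j : ℕ) : ℤ :=
  ∑ k ∈ Finset.range (i+1),
    (Nat.multichoose j k : ℤ) * (Nat.choose (N+(i-k)) (i-k) : ℤ) * B ^ k * d ^ (i-k)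

theorem FF_zero (B d : ℤ) (N i : ℕ) : FF B d N i 0 = (Nat.choose (N+i) i : ℤ) * d ^ i := by
  unfold FF
  rw [Finset.sum_range_succ']
  simp [Nat.multichoose_zero_succ]

theorem FF_i0 (B d : ℤ) (N j : ℕ) : FF B d N 0 j = 1 := by
  simp [FF]

theorem FF_rec (B d : ℤ) (N i j : ℕ) :
    FF B d N (i+1) (j+1) = FF B d N (i+1) j + B * FF B d N i (j+1) := by
  unfold FF
  rw [Finset.sum_range_succ' _ (i+1), Finset.sum_range_succ' _ (i+1), Finset.mul_sum]
  simp only [Nat.multichoose_zero_right, Nat.add_sub_add_right]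
  rw [add_right_comm, ← Finset.sum_add_distrib]
  congr 1
  apply Finset.sum_congr rfl
  intro k _
  rw [Nat.multichoose_succ_succ]
  push_cast
  ring

theorem pade_gen (A B : ℤ) (N i j : ℕ) :
    (A - B) ^ (i+j+1) * hh A B N (i+1) (j+1) =
      A ^ (N+j+1) * FF (-B) (A-B) N i (j+1) + (-1) ^ (i+1) * B ^ (N+i+1) * FF A (A-B) N j (i+1) := by
  have key : ∀ s i j : ℕ, i + j = s → (A - B) ^ (i+j+1) * hh A B N (i+1) (j+1) =
      A ^ (N+j+1) * FF (-B) (A-B) N i (j+1)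
        + (-1) ^ (i+1) * B ^ (N+i+1) * FF A (A-B) N j (i+1) := by
    intro s
    induction s with
    | zero =>
      intro i j hs
      obtain ⟨rfl, rfl⟩ : i = 0 ∧ j = 0 := by omega
      have := hh_d A B N 0 0
      rw [hh_base, hh_base'] at this
      simp only [FF_i0]
      simp at this ⊢
      rw [this]; ring
    | succ s ih =>
      intro i j hs
      have h := hh_d A B N i j
      have e : (A - B) ^ (i+j+1) * hh A B N (i+1) (j+1) =
        A * ((A-B)^(i+j) * hh A B N (i+1) j) - B * ((A-B)^(i+j) * hh A B N i (j+1)) := by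
        linear_combination (A-B)^(i+j) * h
      rw [e]
      cases i with
      | zero =>
        cases j with
        | zero => omega
        | succ j =>
          have h1 := ih 0 j (by omega)
          rw [hh_base']
          rw [show 0 + (j+1) = 0+j+1 by ring, h1, FF_rec, FF_zero, FF_i0, FF_i0]
          ring
      | succ i =>
        cases j with
        | zero =>
          have h1 := ih i 0 (by omega)
          rw [hh_base]
          rw [show i+1+0 = i+0+1 by ring, h1, FF_rec, FF_zero, FF_i0, FF_i0]
          ring
        | succ j =>
          have h1 := ih (i+1) j (by omega)
          have h2 := ih i (j+1) (by omega)
          rw [show i+1+(j+1) = i+1+j+1 by ring, h1, show i+1+j+1 = i+(j+1)+1 by ring, h2, FF_rec (-B) _ _ i (j+1),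
            FF_rec A _ _ j (i+1)]
          ring
  exact key (i+j) i j rfl

/-- bound on `hh` -/
theorem hh_bound {A B : ℤ} (hA : 0 < A) (hB : 0 < B) (N i j : ℕ) :
    0 ≤ hh A B N i j ∧ hh A B N i j * (A ^ j * B ^ i) ≤ (A+B) ^ (N+i+j) := by
  have mono : ∀ i j : ℕ, A ^ j * B ^ i ≤ (A+B)^(i+j) := by
    intro i j
    rw [pow_add, mul_comm]
    gcongr <;> linarith
  induction N generalizing i j with
  | zero => simp [hh_zero]; exact mono i j
  | succ N ih =>
    induction i with
    | zero =>
      induction j with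
      | zero => simp [hh_zz]; positivity
      | succ j ihj =>
        rw [hh_right]
        obtain ⟨a1, a2⟩ := ihj
        obtain ⟨b1, b2⟩ := ih 0 (j+1)
        refine ⟨by positivity, ?_⟩
        calc _ = A * (hh A B (N+1) 0 j * (A^j * B^0)) + B * (hh A B N 0 (j+1) * (A^(j+1)*B^0)) := by
              ring
          _ ≤ A * (A+B)^(N+1+0+j) + B * (A+B)^(N+0+(j+1)) := by gcongr
          _ = _ := by ring
    | succ i ihi =>
      rw [hh_left]
      obtain ⟨a1, a2⟩ := ihi
      obtain ⟨b1, b2⟩ := ih (i+1) j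
      refine ⟨by positivity, ?_⟩
      calc _ = B * (hh A B (N+1) i j * (A^j * B^i)) + A * (hh A B N (i+1) j * (A^j*B^(i+1))) := by
            ring
        _ ≤ B * (A+B)^(N+1+i+j) + A * (A+B)^(N+(i+1)+j) := by gcongr
        _ = _ := by ring

theorem hh_pos {A B : ℤ} (hA : 0 < A) (hB : 0 < B) (N i j : ℕ) : 0 < hh A B N (i+1) j := by
  induction N with
  | zero => simp [hh_zero]
  | succ N ih =>
    rw [hh_left]
    have := (hh_bound hA hB (N+1) i j).1
    positivity

theorem FF_pos {A d : ℤ} (hA : 0 < A) (hd : 0 < d) (N i j : ℕ) : 0 < FF A d N i j := by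
  unfold FF
  rw [Finset.sum_range_succ']
  have : 0 < (Nat.choose (N+(i-0)) (i-0) : ℤ) := by
    exact_mod_cast Nat.choose_pos (by omega)
  have h2 : 0 < (Nat.multichoose j 0 : ℤ) * (Nat.choose (N+(i-0)) (i-0) : ℤ) * A ^ 0 * d ^ (i-0) := by
    simp only [Nat.multichoose_zero_right]; positivity
  have : 0 ≤ ∑ k ∈ Finset.range i, (Nat.multichoose j (k+1) : ℤ) *
    (Nat.choose (N+(i-(k+1))) (i-(k+1)) : ℤ) * A ^ (k+1) * d ^ (i-(k+1)) :=
    Finset.sum_nonneg fun _ _ => by positivity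
  linarith

/-- auxiliary sum for the bound on `q` -/
def RR (a d : ℤ) (N n : ℕ) : ℤ :=
  ∑ k ∈ Finset.range (n+1), (Nat.choose (N+(n-k)) (n-k) : ℤ) * a ^ k * d ^ (n-k)

theorem RR_succ (a d : ℤ) (N n : ℕ) :
    RR a d N (n+1) = a * RR a d N n + (Nat.choose (N+(n+1)) (n+1) : ℤ) * d ^ (n+1) := by
  unfold RR
  rw [Finset.sum_range_succ', Finset.mul_sum]
  simp only [Nat.add_sub_add_right]
  congr 1
  · apply Finset.sum_congr rfl; intros; ring
  · simp

theorem RR_rec (a d : ℤ) (N n : ℕ) :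
    RR a d (N+1) (n+1) = RR a d N (n+1) + d * RR a d (N+1) n := by
  induction n with
  | zero => simp [RR_succ]; simp [RR]; ring
  | succ n ih =>
    have h0 := RR_succ a d (N+1) n
    rw [RR_succ, RR_succ a d N (n+1)]
    have : Nat.choose (N+1+(n+1+1)) (n+1+1) =
        Nat.choose (N+1+(n+1)) (n+1) + Nat.choose (N+(n+1+1)) (n+1+1) := by
      rw [show N+1+(n+1+1) = (N+1+(n+1))+1 by ring, Nat.choose_succ_succ,
        show N+1+(n+1) = N+(n+1+1) by ring]
    rw [this]; push_cast; linear_combination a * ih - d * h0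

theorem RR_bound {d s : ℤ} (hd : 0 ≤ d) (hs : 0 ≤ s) (N n : ℕ) :
    RR (d+s) d N n * s ^ (N+1) ≤ (d+s) ^ (n+N+1) := by
  induction N generalizing n with
  | zero =>
    have : ∀ n, RR (d+s) d 0 n * s = (d+s)^(n+1) - d^(n+1) := by
      intro n
      induction n with
      | zero => simp [RR]
      | succ n ih => rw [RR_succ, add_mul, mul_assoc, ih]; simp; ring
    simp only [zero_add, pow_one, this, add_zero]
    have : 0 ≤ d^(n+1) := by positivity
    linarith
  | succ N ih =>
    induction n with
    | zero =>
      simp [RR]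
      rw [add_assoc]
      gcongr; linarith
    | succ n ihn =>
      rw [RR_rec]
      calc _ = s * (RR (d+s) d N (n+1) * s^(N+1)) + d * (RR (d+s) d (N+1) n * s^(N+1+1)) := by ring
        _ ≤ s * (d+s)^(n+1+N+1) + d * (d+s)^(n+(N+1)+1) := by gcongr; exact ih _
        _ = _ := by ring

theorem mc_bound (n k : ℕ) (hk : k ≤ n) : Nat.multichoose (n+1) k * 2 ^ (n-k) ≤ 4 ^ n := by
  have h : ∀ j ≤ n, Nat.choose (n+(n-j)) n * 2 ^ j ≤ Nat.choose (2*n) n := by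
    intro j
    induction j with
    | zero => intro _; simp [two_mul]
    | succ j ih =>
      intro hj
      have h1 := ih (by omega)
      refine le_trans ?_ h1
      obtain ⟨t, rfl⟩ : ∃ t, n = j+1+t := ⟨n-(j+1), by omega⟩
      rw [show j+1+t-j = t+1 by omega, show j+1+t-(j+1) = t by omega]
      have h2 := Nat.add_one_mul_choose_eq (j+1+t+t) (j+t)
      have h3 := Nat.choose_succ_succ (j+1+t+t) (j+t)
      -- C(n+t+1, n) >= 2 C(n+t,n)
      have h4 : Nat.choose (j+1+t+t) (j+1+t) ≤ Nat.choose (j+1+t+t) (j+t) := by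
        have := Nat.choose_succ_right_eq (j+1+t+t) (j+t)
        rw [show j+1+t+t-(j+t) = t+1 by omega] at this
        rw [show j+1+t = j+t+1 by ring] at this ⊢
        by_contra hc
        push Not at hc
        have : Nat.choose (j+t+1+t) (j+t) * (t+1) < Nat.choose (j+t+1+t) (j+t+1) * (j+t+1) := by
          apply Nat.mul_lt_mul_of_lt_of_le hc (by omega) (by omega)
        omega
      rw [show j+1+t+(t+1) = (j+1+t+t)+1 by ring]
      have h5 : Nat.choose (j+1+t+t+1) (j+1+t) =
        Nat.choose (j+1+t+t) (j+t) + Nat.choose (j+1+t+t) (j+1+t) := by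
        rw [show j+1+t = (j+t)+1 by ring, Nat.choose_succ_succ]
      rw [h5, pow_succ]
      have := Nat.mul_le_mul_right (2^j) h4
      nlinarith
  have h1 := h (n-k) (by omega)
  rw [show n - (n-k) = k by omega] at h1
  rw [Nat.multichoose_eq, show n+1+k-1 = n+k by omega, Nat.choose_symm_add] at *
  refine le_trans ?_ (Nat.choose_le_two_pow (2*n) n |>.trans (by rw [pow_mul]; norm_num))
  convert h1 using 2

theorem q_bound {A d s : ℤ} (hd : 0 ≤ d) (hs : 0 ≤ s) (h : d + s = 2 * A) (N n : ℕ) :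
    FF A d N n (n+1) * s ^ (N+1) ≤ 4 ^ n * A ^ n * (2*A) ^ (N+1) := by
  have hA : 0 ≤ A := by linarith
  have h1 : 2 ^ n * FF A d N n (n+1) ≤ 4 ^ n * RR (2*A) d N n := by
    unfold FF RR
    rw [Finset.mul_sum, Finset.mul_sum]
    apply Finset.sum_le_sum
    intro k hk
    have hk : k ≤ n := by simp at hk; omega
    have := mc_bound n k hk
    have t : (Nat.multichoose (n+1) k : ℤ) * 2 ^ (n-k) ≤ 4 ^ n := by exact_mod_cast this
    have e : (2:ℤ)^n = 2^k * 2^(n-k) := by rw [← pow_add]; congr 1; omega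
    calc _ = ((Nat.multichoose (n+1) k : ℤ) * 2 ^ (n-k)) *
          ((Nat.choose (N+(n-k)) (n-k) : ℤ) * (2*A)^k * d^(n-k)) := by rw [e, mul_pow]; ring
      _ ≤ 4 ^ n * ((Nat.choose (N+(n-k)) (n-k) : ℤ) * (2*A)^k * d^(n-k)) := by gcongr
  have h2 := RR_bound hd hs N n
  rw [h] at h2
  have h3 : 2^n * (FF A d N n (n+1) * s ^ (N+1)) ≤ 2^n * (4 ^ n * A ^ n * (2*A) ^ (N+1)) := by
    calc _ = (2^n * FF A d N n (n+1)) * s ^ (N+1) := by ring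
      _ ≤ (4^n * RR (2*A) d N n) * s ^ (N+1) := by gcongr
      _ = 4^n * (RR (2*A) d N n * s ^ (N+1)) := by ring
      _ ≤ 4^n * (2*A)^(n+N+1) := by gcongr
      _ = _ := by rw [add_assoc, pow_add, mul_pow]; ring
  exact le_of_mul_le_mul_left h3 (by positivity)

/-- one step: if the bounds hold (relative to a common divisor `Δ` of the coefficients) then
the linear form vanishes. -/
theorem pade_vanish {A B X Y Δ : ℤ} (hB : 0 < B) (hAB : B < A) (hX : 0 < X)
    (n m : ℕ) (hnm : n + 1 ≤ m)
    (hΔ : 0 < Δ)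
    (hdvd : ∀ k ≤ n, Δ ∣ (Nat.multichoose (n+1) k : ℤ) * (Nat.choose (m-1-k) (n-k) : ℤ))
    (h1 : 2 * (X * (A-B)^(2*n+1) * hh A B (m-n-1) (n+1) (n+1)) < Δ * A^m)
    (h2 : 2 * (FF A (A-B) (m-n-1) n (n+1) * |Y*A^m - X*B^m|) ≤ Δ * A^m) :
    (-1)^n * (X * (A-B)^(2*n+1) * hh A B (m-n-1) (n+1) (n+1)) =
      FF A (A-B) (m-n-1) n (n+1) * (Y*A^m - X*B^m) := by
  obtain ⟨N, rfl⟩ : ∃ N, m = N+n+1 := ⟨m-n-1, by omega⟩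
  have eN : N+n+1-n-1 = N := by omega
  rw [eN] at h1 h2 ⊢
  have hP := pade_gen A B N n n
  set q := FF A (A-B) N n (n+1) with hq
  set p := FF (-B) (A-B) N n (n+1) with hp
  set H := hh A B N (n+1) (n+1) with hH
  have hA : 0 < A := by linarith
  have hq0 : 0 < q := FF_pos hA (by linarith) _ _ _
  have hH0 : 0 < H := hh_pos hA hB _ _ _
  have dv : ∀ x, Δ ∣ FF x (A-B) N n (n+1) := by
    intro x
    unfold FF
    apply Finset.dvd_sum
    intro k hk
    have hk : k ≤ n := by simp at hk; omega
    have := hdvd k hk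
    rw [show N+n+1-1-k = N+(n-k) by omega] at this
    exact (this.mul_right _).mul_right _
  have hsq : ((-1:ℤ)^n) * (-1)^n = 1 := by rw [← mul_pow]; simp
  have key : A^(N+n+1) * ((-1)^n * X * p - Y * q) =
      (-1)^n * (X * (A-B)^(2*n+1) * H) - q * (Y*A^(N+n+1) - X*B^(N+n+1)) := by
    rw [show 2*n+1 = n+n+1 by ring]
    linear_combination (-(-1)^n * X) * hP + (X * B^(N+n+1) * q) * hsq
  have hM : Δ ∣ (-1)^n * X * p - Y * q :=
    dvd_sub ((dv _).mul_left _) ((dv _).mul_left _)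
  obtain ⟨M, hM⟩ := hM
  have hd : 0 < A - B := by linarith
  have b1 : |(-1)^n * (X * (A-B)^(2*n+1) * H)| = X * (A-B)^(2*n+1) * H := by
    rw [abs_mul, abs_pow]; simp only [abs_neg, abs_one, one_pow, one_mul]
    exact abs_of_nonneg (by positivity)
  have b2 : |A^(N+n+1) * (Δ * M)| < Δ * A^(N+n+1) := by
    rw [← hM, key]
    refine lt_of_le_of_lt (abs_sub _ _) ?_
    rw [b1, abs_mul, abs_of_pos hq0]
    linarith
  have hM0 : M = 0 := by
    rw [abs_mul, abs_mul, abs_of_pos hΔ, abs_of_pos (by positivity : 0 < A^(N+n+1))] at b2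
    by_contra hne
    have : 1 ≤ |M| := Int.one_le_abs hne
    have : Δ * A^(N+n+1) * 1 ≤ Δ * A^(N+n+1) * |M| := by gcongr
    linarith
  rw [hM, hM0] at key
  simp at key
  linarith

theorem core_gen {A B X Y Δ Δ' : ℤ} (hB : 0 < B) (hAB : B < A) (hX : 0 < X)
    (n m : ℕ) (hnm : n + 2 ≤ m)
    (hΔ : 0 < Δ) (hΔ' : 0 < Δ')
    (hdvd : ∀ k ≤ n, Δ ∣ (Nat.multichoose (n+1) k : ℤ) * (Nat.choose (m-1-k) (n-k) : ℤ))
    (hdvd' : ∀ k ≤ n+1, Δ' ∣ (Nat.multichoose (n+2) k : ℤ) * (Nat.choose (m-1-k) (n+1-k) : ℤ))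
    (h1 : 2 * (X * (A-B)^(2*n+1) * hh A B (m-n-1) (n+1) (n+1)) < Δ * A^m)
    (h2 : 2 * (FF A (A-B) (m-n-1) n (n+1) * |Y*A^m - X*B^m|) ≤ Δ * A^m)
    (h1' : 2 * (X * (A-B)^(2*(n+1)+1) * hh A B (m-(n+1)-1) (n+2) (n+2)) < Δ' * A^m)
    (h2' : 2 * (FF A (A-B) (m-(n+1)-1) (n+1) (n+2) * |Y*A^m - X*B^m|) ≤ Δ' * A^m) : False := by
  have e1 := pade_vanish (Y := Y) hB hAB hX n m (by omega) hΔ hdvd h1 h2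
  have e2 := pade_vanish (Y := Y) hB hAB hX (n+1) m (by omega) hΔ' hdvd' h1' h2'
  have hA : 0 < A := by linarith
  have hd : 0 < A - B := by linarith
  have q1 := FF_pos hA hd (m-n-1) n (n+1)
  have q2 := FF_pos hA hd (m-(n+1)-1) (n+1) (n+2)
  have H1 := hh_pos hA hB (m-n-1) n (n+1)
  have H2 := hh_pos hA hB (m-(n+1)-1) (n+1) (n+2)
  have P1 : 0 < X * (A-B)^(2*n+1) * hh A B (m-n-1) (n+1) (n+1) := by positivity
  have P2 : 0 < X * (A-B)^(2*(n+1)+1) * hh A B (m-(n+1)-1) (n+2) (n+2) := by positivity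
  generalize Y*A^m - X*B^m = D at *
  rw [pow_succ] at e2
  simp only [show n+1+1 = n+2 by ring] at e2
  rcases neg_one_pow_eq_or ℤ n with h | h <;> rw [h] at e1 e2 <;> nlinarith

end Pil


namespace Pil

theorem bound1 {A B X Y Δ : ℕ} (hB : 0 < B) (hAB : B < A) (n m : ℕ) (hnm : n + 1 ≤ m)
    (hXB : X * B^m ≤ 2 * Y * A^m)
    (hT : 4*Y*(A-B)^(2*n+1)*(A+B)^(m+n+1) < Δ * ((A*B)^(n+1)*B^m)) :
    2 * ((X:ℤ) * ((A:ℤ)-B)^(2*n+1) * hh A B (m-n-1) (n+1) (n+1)) < Δ * (A:ℤ)^m := by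
  obtain ⟨d, rfl⟩ : ∃ d, A = B + d := ⟨A - B, by omega⟩
  rw [Nat.add_sub_cancel_left] at hT
  have hd : 0 < d := by omega
  obtain ⟨N, rfl⟩ : ∃ N, m = N+n+1 := ⟨m-n-1, by omega⟩
  rw [show N+n+1-n-1 = N by omega]
  have hb := hh_bound (A := ((B+d:ℕ):ℤ)) (B := (B:ℤ)) (by positivity) (by positivity) N (n+1) (n+1)
  have hT' : (4*Y*d^(2*n+1)*((B+d:ℕ)+B)^(N+n+1+n+1) : ℤ) <
      Δ * (((B+d:ℕ)*B)^(n+1)*B^(N+n+1)) := by exact_mod_cast hT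
  have hX' : (X:ℤ) * B^(N+n+1) ≤ 2 * Y * (B+d:ℕ)^(N+n+1) := by exact_mod_cast hXB
  obtain ⟨h0, hb⟩ := hb
  set A : ℤ := ((B+d:ℕ):ℤ) with hA
  have eA : A - B = d := by rw [hA]; push_cast; ring
  rw [eA]
  set H := hh A B N (n+1) (n+1)
  have hApos : 0 < A := by rw [hA]; positivity
  have pos : 0 < (A*B)^(n+1)*(B:ℤ)^(N+n+1) := by positivity
  refine lt_of_mul_lt_mul_right ?_ pos.le
  calc _ = 2 * (X * (B:ℤ)^(N+n+1)) * (d:ℤ)^(2*n+1) * (H * (A^(n+1)*B^(n+1))) := by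
        rw [mul_pow]; ring
    _ ≤ 2 * (2 * Y * A^(N+n+1)) * (d:ℤ)^(2*n+1) * ((A+B)^(N+(n+1)+(n+1))) := by gcongr
    _ = A^(N+n+1) * (4*Y*d^(2*n+1)*(A+B)^(N+n+1+n+1)) := by
        rw [show N+(n+1)+(n+1) = N+n+1+n+1 by ring]; ring
    _ < A^(N+n+1) * (Δ * ((A*B)^(n+1)*B^(N+n+1))) := by gcongr
    _ = _ := by ring

theorem bound2 {A B W Δ : ℕ} {E : ℤ} (hB : 0 < B) (hAB : B < A) (n m : ℕ) (hnm : n + 1 ≤ m)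
    (hE : 15 * E^2 ≤ W * (A:ℤ)^m) (hE0 : 0 ≤ E)
    (hT : 4*W*16^n*A^(2*n)*(2*A)^(2*(m-n)) ≤ 15*Δ^2*A^m*(A+B)^(2*(m-n))) :
    2 * (FF A ((A:ℤ)-B) (m-n-1) n (n+1) * E) ≤ Δ * (A:ℤ)^m := by
  obtain ⟨N, rfl⟩ : ∃ N, m = N+n+1 := ⟨m-n-1, by omega⟩
  rw [show N+n+1-n-1 = N by omega]
  rw [show N+n+1-n = N+1 by omega] at hT
  have hT' : (4*W*16^n*A^(2*n)*(2*A)^(2*(N+1)):ℤ) ≤ 15*Δ^2*A^(N+n+1)*(A+B)^(2*(N+1)) := by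
    exact_mod_cast hT
  have hA' : (B:ℤ) < A := by exact_mod_cast hAB
  have hB' : (0:ℤ) < B := by exact_mod_cast hB
  have hApos : (0:ℤ) < A := by linarith
  have hq := q_bound (A := (A:ℤ)) (d := (A:ℤ)-B) (s := (A:ℤ)+B) (by linarith) (by linarith)
    (by ring) N n
  have hq0 : 0 < FF A ((A:ℤ)-B) N n (n+1) := FF_pos hApos (by linarith) _ _ _
  set q := FF A ((A:ℤ)-B) N n (n+1)
  refine le_of_sq_le_sq ?_ (by positivity)
  have pos : 0 < 15 * ((A:ℤ)+B)^(2*(N+1)) := by positivity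
  refine le_of_mul_le_mul_right ?_ pos
  calc (2 * (q * E))^2 * (15 * ((A:ℤ)+B)^(2*(N+1)))
      = 4 * (q * (A+B)^(N+1))^2 * (15 * E^2) := by ring
    _ ≤ 4 * (4^n * A^n * (2*A)^(N+1))^2 * (W * (A:ℤ)^(N+n+1)) := by gcongr
    _ = (4*W*16^n*A^(2*n)*(2*A)^(2*(N+1))) * (A:ℤ)^(N+n+1) := by
        have : (16:ℤ)^n = 4^n*4^n := by rw [← mul_pow]; norm_num
        rw [this]; ring
    _ ≤ (15*Δ^2*A^(N+n+1)*(A+B)^(2*(N+1))) * (A:ℤ)^(N+n+1) := by gcongr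
    _ = _ := by ring

theorem core_delta {A B X Y W Δ Δ' : ℕ} (hB : 0 < B) (hAB : B < A) (hX : 0 < X)
    (n m : ℕ) (hnm : n + 2 ≤ m)
    (hΔ : 0 < Δ) (hΔ' : 0 < Δ')
    (hdvd : ∀ k ≤ n, Δ ∣ Nat.multichoose (n+1) k * Nat.choose (m-1-k) (n-k))
    (hdvd' : ∀ k ≤ n+1, Δ' ∣ Nat.multichoose (n+2) k * Nat.choose (m-1-k) (n+1-k))
    (hXB : X * B^m ≤ 2 * Y * A^m)
    (hE : 15 * ((Y:ℤ) * (A:ℤ)^m - X * (B:ℤ)^m)^2 ≤ W * (A:ℤ)^m)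
    (t1 : 4*Y*(A-B)^(2*n+1)*(A+B)^(m+n+1) < Δ * ((A*B)^(n+1)*B^m))
    (t2 : 4*W*16^n*A^(2*n)*(2*A)^(2*(m-n)) ≤ 15*Δ^2*A^m*(A+B)^(2*(m-n)))
    (t1' : 4*Y*(A-B)^(2*(n+1)+1)*(A+B)^(m+(n+1)+1) < Δ' * ((A*B)^(n+1+1)*B^m))
    (t2' : 4*W*16^(n+1)*A^(2*(n+1))*(2*A)^(2*(m-(n+1))) ≤ 15*Δ'^2*A^m*(A+B)^(2*(m-(n+1)))) :
    False := by
  have hE' : 15 * |(Y:ℤ) * (A:ℤ)^m - X * (B:ℤ)^m|^2 ≤ W * (A:ℤ)^m := by rwa [sq_abs]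
  refine core_gen (A := A) (B := B) (X := X) (Y := Y) (Δ := Δ) (Δ' := Δ') (by exact_mod_cast hB)
    (by exact_mod_cast hAB) (by exact_mod_cast hX) n m hnm (by exact_mod_cast hΔ)
    (by exact_mod_cast hΔ') (fun k hk => by exact_mod_cast hdvd k hk)
    (fun k hk => by exact_mod_cast hdvd' k hk)
    (bound1 hB hAB n m (by omega) hXB t1)
    (bound2 hB hAB n m (by omega) hE' (abs_nonneg _) t2)
    (bound1 hB hAB (n+1) m (by omega) hXB t1')
    (bound2 hB hAB (n+1) m (by omega) hE' (abs_nonneg _) t2')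

def T1 (A B Y m n : ℕ) : Prop := 4*Y*(A-B)^(2*n+1)*(A+B)^(m+n+1) < (A*B)^(n+1)*B^m
def T2 (A B W m n : ℕ) : Prop := 4*W*16^n*A^(2*n)*(2*A)^(2*(m-n)) ≤ 15*A^m*(A+B)^(2*(m-n))

theorem T1_succ {A B Y m n : ℕ} (hd : (A-B)^2*(A+B) ≤ A*B) (h : T1 A B Y m n) :
    T1 A B Y m (n+1) := by
  unfold T1 at *
  have hpos : 0 < A * B := by
    rcases Nat.eq_zero_or_pos (A*B) with h0 | h0
    · rw [h0] at h; simp at h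
    · exact h0
  calc _ = (4*Y*(A-B)^(2*n+1)*(A+B)^(m+n+1)) * ((A-B)^2*(A+B)) := by ring
    _ ≤ (4*Y*(A-B)^(2*n+1)*(A+B)^(m+n+1)) * (A*B) := by gcongr
    _ < ((A*B)^(n+1)*B^m) * (A*B) := by gcongr
    _ = _ := by ring

theorem T2_pred {A B W m n : ℕ} (hnm : n + 2 ≤ m) (hA : 0 < A) (h : T2 A B W m (n+1)) :
    T2 A B W m n := by
  unfold T2 at *
  obtain ⟨j, rfl⟩ : ∃ j, m = n+1+j := ⟨m-n-1, by omega⟩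
  rw [show n+1+j-(n+1) = j by omega] at h
  rw [show n+1+j-n = j+1 by omega]
  have : 4*(4*W*16^n*A^(2*n)*(2*A)^(2*(j+1))) = 4*W*16^(n+1)*A^(2*(n+1))*(2*A)^(2*j) := by ring
  have h2 : 15*A^(n+1+j)*(A+B)^(2*j) ≤ 15*A^(n+1+j)*(A+B)^(2*(j+1)) := by
    gcongr <;> omega
  omega

theorem core1 {A B X Y W : ℕ} (hB : 0 < B) (hAB : B < A) (hX : 0 < X)
    (hd : (A-B)^2*(A+B) ≤ A*B)
    (n m : ℕ) (hnm : n + 2 ≤ m)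
    (hXB : X * B^m ≤ 2 * Y * A^m)
    (hE : 15 * ((Y:ℤ) * (A:ℤ)^m - X * (B:ℤ)^m)^2 ≤ W * (A:ℤ)^m)
    (t1 : T1 A B Y m n) (t2 : T2 A B W m (n+1)) : False := by
  have t1' := T1_succ hd t1
  have t2' := T2_pred hnm (by omega) t2
  unfold T1 T2 at *
  exact core_delta (Δ := 1) (Δ' := 1) hB hAB hX n m hnm (by norm_num) (by norm_num)
    (fun _ _ => one_dvd _) (fun _ _ => one_dvd _) hXB hE (by simpa using t1)
    (by simpa using t2') (by simpa using t1') (by simpa using t2)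

end Pil


namespace Pil

def T2g (κ C A B m n : ℕ) : Prop := κ*16^n*A^(2*n)*(2*A)^(2*(m-n)) ≤ 15*C^m*(A+B)^(2*(m-n))

instance (A B Y m n : ℕ) : Decidable (T1 A B Y m n) := by unfold T1; infer_instance
instance (κ C A B m n : ℕ) : Decidable (T2g κ C A B m n) := by unfold T2g; infer_instance

theorem T2_of_T2g {A B m n : ℕ} (h : T2g 4 A A B m n) : T2 A B 1 m n := by
  unfold T2g at h; unfold T2; simpa using h

theorem T2_of_T2g' {A B X m n : ℕ} (hB : 0 < B) (hX : X * B^m ≤ 2 * A^m)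
    (h : T2g 8 B A B m n) : T2 A B X m n := by
  unfold T2g at h; unfold T2
  have pos : 0 < B^m := by positivity
  refine le_of_mul_le_mul_right ?_ pos
  calc 4*X*16^n*A^(2*n)*(2*A)^(2*(m-n)) * B^m
      = 4*(X*B^m)*(16^n*A^(2*n)*(2*A)^(2*(m-n))) := by ring
    _ ≤ 4*(2*A^m)*(16^n*A^(2*n)*(2*A)^(2*(m-n))) := by gcongr
    _ = A^m * (8*16^n*A^(2*n)*(2*A)^(2*(m-n))) := by ring
    _ ≤ A^m * (15*B^m*(A+B)^(2*(m-n))) := by gcongr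
    _ = _ := by ring

def good (κ C A B Y m n : ℕ) : Prop := n + 2 ≤ m ∧ T1 A B Y m n ∧ T2g κ C A B m (n+1)

instance (κ C A B Y m n : ℕ) : Decidable (good κ C A B Y m n) := by unfold good; infer_instance

def stepOK (C A B a b : ℕ) : Prop := b ≤ a ∧ 0 < a ∧
  (A-B)^(2*b)*(A+B)^(a+b) ≤ (A*B)^b*B^a ∧
  16^b*A^(2*b)*(2*A)^(2*(a-b)) ≤ C^a*(A+B)^(2*(a-b))

instance (C A B a b : ℕ) : Decidable (stepOK C A B a b) := by unfold stepOK; infer_instance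

theorem good_step {κ C A B Y a b m n : ℕ} (hA : 0 < A) (hB : 0 < B) (hs : stepOK C A B a b)
    (h : good κ C A B Y m n) : good κ C A B Y (m+a) (n+b) := by
  obtain ⟨hba, ha, s1, s2⟩ := hs
  obtain ⟨hn, h1, h2⟩ := h
  refine ⟨by omega, ?_, ?_⟩
  · unfold T1 at *
    calc _ = (4*Y*(A-B)^(2*n+1)*(A+B)^(m+n+1)) * ((A-B)^(2*b)*(A+B)^(a+b)) := by ring
      _ ≤ (4*Y*(A-B)^(2*n+1)*(A+B)^(m+n+1)) * ((A*B)^b*B^a) := by gcongr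
      _ < ((A*B)^(n+1)*B^m) * ((A*B)^b*B^a) := by gcongr
      _ = _ := by ring
  · unfold T2g at *
    have e : m+a-(n+b+1) = (m-(n+1))+(a-b) := by omega
    rw [e]
    calc _ = (κ*16^(n+1)*A^(2*(n+1))*(2*A)^(2*(m-(n+1)))) *
          (16^b*A^(2*b)*(2*A)^(2*(a-b))) := by ring
      _ ≤ (15*C^m*(A+B)^(2*(m-(n+1)))) * (C^a*(A+B)^(2*(a-b))) := by gcongr
      _ = _ := by ring

theorem ladder {κ C A B Y a b m₁ : ℕ} (hA : 0 < A) (hB : 0 < B) (hs : stepOK C A B a b)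
    (base : ∀ i < a, ∃ n, good κ C A B Y (m₁+i) n) (m : ℕ) (hm : m₁ ≤ m) :
    ∃ n, good κ C A B Y m n := by
  obtain ⟨i, rfl⟩ : ∃ i, m = m₁ + i := ⟨m-m₁, by omega⟩
  clear hm
  induction i using Nat.strong_induction_on with
  | _ i ih =>
    by_cases h : i < a
    · exact base i h
    · obtain ⟨n, hn⟩ := ih (i-a) (by have := hs.2.1; omega)
      refine ⟨n+b, ?_⟩
      have := good_step hA hB hs hn
      rwa [show m₁+(i-a)+a = m₁+i by omega] at this

theorem XB_le {A B X m : ℕ} (hB : 0 < B) (_hX : 0 < X)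
    (h : 15 * ((A:ℤ)^m - X*(B:ℤ)^m)^2 ≤ X * (A:ℤ)^m) : X * B^m ≤ 2 * A^m := by
  by_contra hc
  push Not at hc
  have hc' : 2 * (A:ℤ)^m < X*(B:ℤ)^m := by exact_mod_cast hc
  have hv : 1 ≤ (B:ℤ)^m := by exact_mod_cast Nat.one_le_pow _ _ hB
  have hu : 0 ≤ (A:ℤ)^m := by positivity
  generalize (A:ℤ)^m = u at *
  generalize (B:ℤ)^m = v at *
  have h3 : (X:ℤ) * u ≤ X * v * u := by nlinarith [mul_nonneg (Int.natCast_nonneg X) hu]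
  nlinarith

/-- finite verification for one pair, `W = X` version -/
def directX (A B m : ℕ) : Bool :=
  let u := A^m
  let v := B^m
  let x := u / v
  let r := u % v
  decide (x * u < 15 * r^2) && decide ((x+1) * u < 15 * (v-r)^2)

def direct1 (A B m : ℕ) : Bool :=
  let u := A^m
  let v := B^m
  let r := u % v
  decide (u < 15 * r^2) && decide (u < 15 * (v-r)^2)

theorem directX_spec {A B X m : ℕ} (hB : 0 < B) (hBA : A ≤ B^2) (hm : 0 < m)
    (h : directX A B m = true)
    (hE : 15 * ((A:ℤ)^m - X*(B:ℤ)^m)^2 ≤ X * (A:ℤ)^m) : False := by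
  simp only [directX, Bool.and_eq_true, decide_eq_true_eq] at h
  obtain ⟨h1, h2⟩ := h
  have hv : 0 < B^m := by positivity
  have huv : A^m ≤ (B^m)^2 := by rw [← pow_mul, mul_comm, pow_mul]; gcongr
  have hr := Nat.mod_lt (A^m) hv
  have hdiv := Nat.div_add_mod (A^m) (B^m)
  have hE' : 15 * (((A^m:ℕ):ℤ) - X*((B^m:ℕ):ℤ))^2 ≤ X * ((A^m:ℕ):ℤ) := by exact_mod_cast hE
  clear hE
  generalize A^m = u at *
  generalize B^m = v at *
  generalize u / v = x at *
  generalize u % v = r at *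
  obtain ⟨w, rfl⟩ : ∃ w, v = r + w := ⟨v - r, by omega⟩
  rw [Nat.add_sub_cancel_left] at h2
  have hw : 0 < w := by omega
  subst hdiv
  zify at h1 h2 huv hw
  push_cast at hE'
  rcases Nat.lt_or_ge x X with hx | hx
  · obtain ⟨j, rfl⟩ : ∃ j, X = x + 1 + j := ⟨X-x-1, by omega⟩
    push_cast at hE'
    set U : ℤ := (r+w)*x+r with hU
    have e : U - (x+1+j)*(r+w) = -(w + j*(r+w)) := by rw [hU]; ring
    rw [e] at hE'
    have hj : (0:ℤ) ≤ j := by positivity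
    have hjj : (j:ℤ) ≤ j^2 := by
      rcases Nat.eq_zero_or_pos j with h | h
      · simp [h]
      · have : (1:ℤ) ≤ j := by exact_mod_cast h
        nlinarith
    have hx0 : (0:ℤ) ≤ j * w * (r+w) := by positivity
    have : j * U ≤ j^2 * ((r:ℤ)+w)^2 := by
      have hp : (0:ℤ) ≤ ((r:ℤ)+w)^2 := by positivity
      nlinarith
    have hp : (0:ℤ) ≤ j^2 * ((r:ℤ)+w)^2 := by positivity
    nlinarith
  · obtain ⟨j, rfl⟩ : ∃ j, x = X + j := ⟨x-X, by omega⟩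
    push_cast at h1
    set U : ℤ := (r+w)*(X+j:ℕ)+r with hU
    have e : U - X*(r+w) = r + j*(r+w) := by rw [hU]; push_cast; ring
    have eU : ((r:ℤ)+w)*(X+j)+r = U := by rw [hU]; push_cast; ring
    rw [e] at hE'
    rw [eU] at h1
    have hU0 : 0 ≤ j * U := by positivity
    have hp : (0:ℤ) ≤ r * (j * (r+w)) := by positivity
    have hp2 : (0:ℤ) ≤ (j * (r+w))^2 := by positivity
    nlinarith

theorem direct1_spec {A B X m : ℕ} (hB : 0 < B)
    (h : direct1 A B m = true)
    (hE : 15 * ((A:ℤ)^m - X*(B:ℤ)^m)^2 ≤ (A:ℤ)^m) : False := by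
  simp only [direct1, Bool.and_eq_true, decide_eq_true_eq] at h
  obtain ⟨h1, h2⟩ := h
  have hv : 0 < B^m := by positivity
  have hr := Nat.mod_lt (A^m) hv
  have hdiv := Nat.div_add_mod (A^m) (B^m)
  have hE' : 15 * (((A^m:ℕ):ℤ) - X*((B^m:ℕ):ℤ))^2 ≤ ((A^m:ℕ):ℤ) := by exact_mod_cast hE
  clear hE
  generalize A^m = u at *
  generalize B^m = v at *
  generalize u / v = x at *
  generalize u % v = r at *
  obtain ⟨w, rfl⟩ : ∃ w, v = r + w := ⟨v - r, by omega⟩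
  rw [Nat.add_sub_cancel_left] at h2
  have hw : 0 < w := by omega
  subst hdiv
  zify at h1 h2 hw
  push_cast at hE'
  rcases Nat.lt_or_ge x X with hx | hx
  · obtain ⟨j, rfl⟩ : ∃ j, X = x + 1 + j := ⟨X-x-1, by omega⟩
    push_cast at hE'
    set U : ℤ := (r+w)*x+r with hU
    have e : U - (x+1+j)*(r+w) = -(w + j*(r+w)) := by rw [hU]; ring
    rw [e] at hE'
    have hx0 : (0:ℤ) ≤ j * w * (r+w) := by positivity
    have hp : (0:ℤ) ≤ (j * ((r:ℤ)+w))^2 := by positivity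
    nlinarith
  · obtain ⟨j, rfl⟩ : ∃ j, x = X + j := ⟨x-X, by omega⟩
    push_cast at h1
    set U : ℤ := (r+w)*(X+j:ℕ)+r with hU
    have e : U - X*(r+w) = r + j*(r+w) := by rw [hU]; push_cast; ring
    have eU : ((r:ℤ)+w)*(X+j)+r = U := by rw [hU]; push_cast; ring
    rw [e] at hE'
    rw [eU] at h1
    have hp : (0:ℤ) ≤ r * (j * (r+w)) := by positivity
    have hp2 : (0:ℤ) ≤ (j * (r+w))^2 := by positivity
    nlinarith

/-- base check: for each `i < a` some `n` in a window works -/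
def baseOK (κ C A B Y m₁ a w : ℕ) : Bool :=
  (List.range a).all fun i => (List.range w).any fun j =>
    decide (good κ C A B Y (m₁+i) ((m₁+i)/3 - 2 + j))

theorem baseOK_spec {κ C A B Y m₁ a w : ℕ} (h : baseOK κ C A B Y m₁ a w = true) :
    ∀ i < a, ∃ n, good κ C A B Y (m₁+i) n := by
  intro i hi
  simp only [baseOK, List.all_eq_true, List.any_eq_true, List.mem_range, decide_eq_true_eq] at h
  obtain ⟨j, _, hj⟩ := h i hi
  exact ⟨_, hj⟩

def fullX (A B m₁ : ℕ) : Bool :=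
  decide (0 < B) && decide (B < A) && decide ((A-B)^2*(A+B) ≤ A*B) && decide (A ≤ B^2) &&
  ((List.range m₁).all fun m => decide (m < 2) || directX A B m) &&
  ((decide (stepOK B A B 3 1) && baseOK 8 B A B 1 m₁ 3 8) ||
   (decide (stepOK B A B 8 3) && baseOK 8 B A B 1 m₁ 8 8) ||
   (decide (stepOK B A B 11 4) && baseOK 8 B A B 1 m₁ 11 8))

theorem fullX_spec {A B m₁ X m : ℕ} (h : fullX A B m₁ = true) (hm : 2 ≤ m) (hX : 0 < X)
    (hE : 15 * ((A:ℤ)^m - X*(B:ℤ)^m)^2 ≤ X * (A:ℤ)^m) : False := by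
  simp only [fullX, Bool.and_eq_true, decide_eq_true_eq, List.all_eq_true, Bool.or_eq_true,
    List.mem_range] at h
  obtain ⟨⟨⟨⟨⟨hB, hAB⟩, hd⟩, hAB2⟩, hdir⟩, hst⟩ := h
  by_cases hlt : m < m₁
  · rcases hdir m hlt with h | h
    · omega
    · exact directX_spec hB hAB2 (by omega) h hE
  · have hg : ∃ n, good 8 B A B 1 m n := by
      rcases hst with (⟨h1, h2⟩ | ⟨h1, h2⟩) | ⟨h1, h2⟩ <;>
      exact ladder (by omega) hB h1 (baseOK_spec h2) m (by omega)
    obtain ⟨n, hn, t1, t2⟩ := hg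
    have hXB := XB_le hB hX hE
    exact core1 (Y := 1) (W := X) hB hAB hX hd n m hn (by simpa using hXB) (by simpa using hE) t1
      (T2_of_T2g' hB hXB t2)

def full1 (A B m₁ w : ℕ) : Bool :=
  decide (0 < B) && decide (B < A) && decide ((A-B)^2*(A+B) ≤ A*B) &&
  ((List.range m₁).all fun m => decide (m < 2) || direct1 A B m) &&
  (decide (stepOK A A B 3 1) && baseOK 4 A A B 1 m₁ 3 w)

theorem full1_spec {A B m₁ w X m : ℕ} (h : full1 A B m₁ w = true) (hm : 2 ≤ m) (hX : 0 < X)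
    (hE : 15 * ((A:ℤ)^m - X*(B:ℤ)^m)^2 ≤ (A:ℤ)^m) : False := by
  simp only [full1, Bool.and_eq_true, decide_eq_true_eq, List.all_eq_true, Bool.or_eq_true,
    List.mem_range] at h
  obtain ⟨⟨⟨⟨hB, hAB⟩, hd⟩, hdir⟩, h1, h2⟩ := h
  by_cases hlt : m < m₁
  · rcases hdir m hlt with h | h
    · omega
    · exact direct1_spec hB h hE
  · obtain ⟨n, hn, t1, t2⟩ := ladder (by omega) hB h1 (baseOK_spec h2) m (by omega)
    have hXB : X * B^m ≤ 2 * A^m := by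
      apply XB_le hB hX (hE.trans _)
      have : (1:ℤ) ≤ X := by exact_mod_cast hX
      nlinarith [pow_nonneg (Int.natCast_nonneg A) m]
    exact core1 (Y := 1) (W := 1) hB hAB hX hd n m hn (by simpa using hXB) (by simpa using hE) t1
      (T2_of_T2g t2)

end Pil


namespace Pil

def allX (lo k : ℕ) : Bool := (List.range k).all fun i =>
  (List.range 3).all fun j => decide (lo + i ≤ 16*(j+1)^2) || fullX (lo+i) (lo+i-(j+1)) 40

theorem allX_25 : allX 25 232 = true := by decide +kernel

theorem small_18 : full1 18 17 4500 3 = true := by decide +kernel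
theorem small_19 : full1 19 18 110 3 = true := by decide +kernel
theorem small_20 : full1 20 19 110 3 = true := by decide +kernel
theorem small_21 : full1 21 20 110 4 = true := by decide +kernel
theorem small_22 : full1 22 21 110 4 = true := by decide +kernel
theorem small_23 : full1 23 22 110 4 = true := by decide +kernel
theorem small_24 : full1 24 23 110 4 = true := by decide +kernel

end Pil


namespace Pil

def kk (m : ℕ) : ℕ := (7*m+19)/20

theorem num1 (i : ℕ) : 127^((20+i)+kk (20+i)) ≤ 63^((20+i)+kk (20+i)) * 16^(kk (20+i)) := by
  induction i using Nat.strong_induction_on with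
  | _ i ih =>
    by_cases h : i < 20
    · have : ∀ i < 20, 127^((20+i)+kk (20+i)) ≤ 63^((20+i)+kk (20+i)) * 16^(kk (20+i)) := by
        decide +kernel
      exact this i h
    · obtain ⟨j, rfl⟩ : ∃ j, i = j + 20 := ⟨i-20, by omega⟩
      have h1 := ih j (by omega)
      have e : kk (20+(j+20)) = kk (20+j) + 7 := by unfold kk; omega
      rw [e]
      calc _ = 127^((20+j)+kk (20+j)) * 127^27 := by ring
        _ ≤ (63^((20+j)+kk (20+j)) * 16^(kk (20+j))) * (63^27*16^7) := by
            apply Nat.mul_le_mul h1 (by norm_num)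
        _ = _ := by ring

theorem num2 (i : ℕ) : 8*16^(kk (20+i))*128^(2*(20+i-kk (20+i)))*64^(20+i) ≤
    15*127^(2*(20+i-kk (20+i)))*63^(20+i)*256^(20+i-2*kk (20+i)) := by
  induction i using Nat.strong_induction_on with
  | _ i ih =>
    by_cases h : i < 20
    · have : ∀ i < 20, 8*16^(kk (20+i))*128^(2*(20+i-kk (20+i)))*64^(20+i) ≤
        15*127^(2*(20+i-kk (20+i)))*63^(20+i)*256^(20+i-2*kk (20+i)) := by
        decide +kernel
      exact this i h
    · obtain ⟨j, rfl⟩ : ∃ j, i = j + 20 := ⟨i-20, by omega⟩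
      have h1 := ih j (by omega)
      have e : kk (20+(j+20)) = kk (20+j) + 7 := by unfold kk; omega
      have hk : 2 * kk (20+j) ≤ 20+j := by unfold kk; omega
      rw [e, show 20+(j+20)-(kk (20+j)+7) = (20+j-kk (20+j)) + 13 by omega,
        show 20+(j+20)-2*(kk (20+j)+7) = (20+j-2*kk (20+j)) + 6 by omega]
      calc _ = (8*16^(kk (20+j))*128^(2*(20+j-kk (20+j)))*64^(20+j)) * (16^7*128^26*64^20) := by ring
        _ ≤ (15*127^(2*(20+j-kk (20+j)))*63^(20+j)*256^(20+j-2*kk (20+j))) *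
            (127^26*63^20*256^6) := by
            apply Nat.mul_le_mul h1 (by norm_num)
        _ = _ := by ring

theorem X_ne_one {A B m : ℕ} (hAB : B < A) (hm : 2 ≤ m)
    (hE : 15 * ((A:ℤ)^m - (B:ℤ)^m)^2 ≤ (A:ℤ)^m) : False := by
  obtain ⟨j, rfl⟩ : ∃ j, m = j + 1 + 1 := ⟨m-2, by omega⟩
  have h1 : B^(j+1+1) ≤ A^(j+1) * (A-1) := by
    rw [pow_succ]
    gcongr; omega
  obtain ⟨a, rfl⟩ : ∃ a, A = a + 1 := ⟨A-1, by omega⟩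
  rw [Nat.add_sub_cancel] at h1
  have h1' : (B:ℤ)^(j+1+1) ≤ ((a+1:ℕ):ℤ)^(j+1) * a := by exact_mod_cast h1
  have h2 : ((a+1:ℕ):ℤ)^(j+1+1) = ((a+1:ℕ):ℤ)^(j+1) * a + ((a+1:ℕ):ℤ)^(j+1) := by
    push_cast; ring
  have h3 : ((a+1:ℕ):ℤ)^(j+1+1) ≤ (((a+1:ℕ):ℤ)^(j+1))^2 := by
    rw [← pow_mul]
    apply pow_le_pow_right₀ (by push_cast; linarith [Int.natCast_nonneg a]) (by omega)
  have h4 : 0 < ((a+1:ℕ):ℤ)^(j+1) := by positivity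
  generalize ((a+1:ℕ):ℤ)^(j+1) = P at *
  generalize ((a+1:ℕ):ℤ)^(j+1+1) = Q at *
  generalize (B:ℤ)^(j+1+1) = R at *
  nlinarith

theorem bigX {A B X m : ℕ} (hA : 256 ≤ A) (hAB : B < A) (hd : 16*(A-B)^2 < A) (hm : 2 ≤ m)
    (hX : 0 < X) (hE : 15 * ((A:ℤ)^m - X*(B:ℤ)^m)^2 ≤ X * (A:ℤ)^m) : False := by
  obtain ⟨d, rfl⟩ : ∃ d, A = B + d := ⟨A-B, by omega⟩
  rw [Nat.add_sub_cancel_left] at hd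
  have h64 : 64 * d < B + d := by nlinarith
  have hd0 : 0 < d := by omega
  set A := B + d with hAdef
  have eAB : A - B = d := by omega
  have hB : 240 ≤ B := by omega
  have hX2 : 2 ≤ X := by
    by_contra hc
    obtain rfl : X = 1 := by omega
    exact X_ne_one hAB hm (by simpa using hE)
  have hXB2 := XB_le (by omega) hX hE
  have hXB : 20 * B^m < 11 * A^m := by
    have hv : B ≤ B^m := Nat.le_self_pow (by omega) B
    have hv' : (240:ℤ) ≤ (B:ℤ)^m := by exact_mod_cast (hB.trans hv)
    have hu : 0 < (A:ℤ)^m := by positivity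
    zify
    generalize (A:ℤ)^m = u at *
    generalize (B:ℤ)^m = v at *
    have hX2' : (2:ℤ) ≤ X := by exact_mod_cast hX2
    by_contra hc
    push Not at hc
    have a1 : 20 * v ≤ 10 * (X * v) := by nlinarith
    have a2 : (X:ℤ) * u * 240 ≤ X * v * u := by nlinarith [mul_pos (by linarith : (0:ℤ) < X) hu]
    generalize (X:ℤ) * v = w at *
    nlinarith
  have hm20 : 20 ≤ m := by
    by_contra hc
    have h1 : 63^m * A^m ≤ 64^m * B^m := by
      rw [← mul_pow, ← mul_pow]; gcongr 1; omega
    have h2 : 11 * 64^m ≤ 20 * 63^m := by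
      have : ∀ m < 20, 11 * 64^m ≤ 20 * 63^m := by decide +kernel
      exact this m (by omega)
    have h3 : 0 < B^m := by positivity
    have h4 : 0 < 64^m := by positivity
    have h5 : 0 < 63^m := by positivity
    have : 63^m * (20 * B^m) < 63^m * (11 * A^m) := by gcongr
    have : 11 * 64^m * B^m ≤ 20 * 63^m * B^m := by gcongr
    nlinarith
  obtain ⟨i, rfl⟩ : ∃ i, m = 20 + i := ⟨m-20, by omega⟩
  have n1 := num1 i
  have n2 := num2 i
  set m := 20 + i with hmdef
  have hk2 : 2 * kk m ≤ m := by unfold kk; omega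
  have hk1 : 1 ≤ kk m := by unfold kk; omega
  obtain ⟨n, hn⟩ : ∃ n, kk m = n + 1 := ⟨kk m - 1, by omega⟩
  rw [hn] at n1 n2 hk2
  have hdd : (A-B)^2*(A+B) ≤ A*B := by
    rw [eAB]; nlinarith
  refine core1 (Y := 1) (W := X) (by omega) hAB hX hdd n m (by omega) (by simpa using hXB2)
    (by simpa using hE) ?_ (T2_of_T2g' (by omega) hXB2 ?_)
  · unfold T1
    rw [eAB]
    have s1 : (A+B)*63 ≤ 127*B := by omega
    have q1 : (A+B)^(m+(n+1)) * 63^(m+(n+1)) ≤ 127^(m+(n+1)) * B^(m+(n+1)) := by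
      rw [← mul_pow, ← mul_pow]; gcongr
    have q2 : 4*d^(2*n+1)*16^(n+1) < A^(n+1) := by
      calc 4*d^(2*n+1)*16^(n+1) = (64*d)*(16*d^2)^n := by ring
        _ ≤ (64*d)*A^n := by gcongr
        _ < A*A^n := by gcongr
        _ = _ := by ring
    have pos : 0 < 63^(m+(n+1)) := by positivity
    refine lt_of_mul_lt_mul_right (a := 63^(m+(n+1))) ?_ (Nat.zero_le _)
    calc 4*1*d^(2*n+1)*(A+B)^(m+n+1) * 63^(m+(n+1))
        = 4*d^(2*n+1)*((A+B)^(m+(n+1)) * 63^(m+(n+1))) := by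
          rw [show m+n+1 = m+(n+1) by ring]; ring
      _ ≤ 4*d^(2*n+1)*(127^(m+(n+1)) * B^(m+(n+1))) := by gcongr
      _ ≤ 4*d^(2*n+1)*((63^(m+(n+1))*16^(n+1)) * B^(m+(n+1))) := by gcongr
      _ = (4*d^(2*n+1)*16^(n+1)) * (63^(m+(n+1)) * B^(m+(n+1))) := by ring
      _ < A^(n+1) * (63^(m+(n+1)) * B^(m+(n+1))) := by gcongr
      _ = _ := by rw [pow_add B, mul_pow]; ring
  · unfold T2g
    generalize hj : m - (n+1) = j at *
    have a1 : (2*A)^(2*j) * 127^(2*j) ≤ 128^(2*j) * (A+B)^(2*j) := by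
      rw [← mul_pow, ← mul_pow]; gcongr 1; omega
    have a2 : 63^m * A^m ≤ 64^m * B^m := by
      rw [← mul_pow, ← mul_pow]; gcongr 1; omega
    have a3 : A^(2*(n+1)) * 256^(m-2*(n+1)) ≤ A^m := by
      calc _ ≤ A^(2*(n+1)) * A^(m-2*(n+1)) := by gcongr
        _ = A^m := by rw [← pow_add]; congr 1; omega
    have pos : 0 < 127^(2*j)*63^m*256^(m-2*(n+1)) := by positivity
    refine le_of_mul_le_mul_right ?_ pos
    calc 8*16^(n+1)*A^(2*(n+1))*(2*A)^(2*j) * (127^(2*j)*63^m*256^(m-2*(n+1)))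
        = 8*16^(n+1)*(A^(2*(n+1))*256^(m-2*(n+1)))*((2*A)^(2*j)*127^(2*j))*63^m := by ring
      _ ≤ 8*16^(n+1)*(A^m)*(128^(2*j) * (A+B)^(2*j))*63^m := by gcongr
      _ = 8*16^(n+1)*(128^(2*j) * (A+B)^(2*j))*(63^m*A^m) := by ring
      _ ≤ 8*16^(n+1)*(128^(2*j) * (A+B)^(2*j))*(64^m*B^m) := by gcongr
      _ = (8*16^(n+1)*128^(2*j)*64^m) * (B^m*(A+B)^(2*j)) := by ring
      _ ≤ (15*127^(2*j)*63^m*256^(m-2*(n+1))) * (B^m*(A+B)^(2*j)) := by gcongr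
      _ = _ := by ring

theorem allX_spec {A B X m : ℕ} (hA : 25 ≤ A) (hAB : B < A) (hd : 16*(A-B)^2 < A) (hm : 2 ≤ m)
    (hX : 0 < X) (hE : 15 * ((A:ℤ)^m - X*(B:ℤ)^m)^2 ≤ X * (A:ℤ)^m) : False := by
  by_cases h : 256 ≤ A
  · exact bigX h hAB hd hm hX hE
  · have hc := allX_25
    simp only [allX, List.all_eq_true, List.mem_range, Bool.or_eq_true, decide_eq_true_eq] at hc
    obtain ⟨d, rfl⟩ : ∃ d, A = B + (d+1) := ⟨A-B-1, by omega⟩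
    rw [Nat.add_sub_cancel_left] at hd
    have hd3 : d < 3 := by nlinarith
    have := hc (B+(d+1)-25) (by omega) d hd3
    rw [show 25 + (B+(d+1)-25) = B+(d+1) by omega] at this
    rcases this with h | h
    · omega
    · rw [Nat.add_sub_cancel] at h
      exact fullX_spec h hm hX hE

theorem small1_spec {A B X m : ℕ} (hA : 18 ≤ A) (hAB : B < A) (hd : 16*(A-B)^2 < A) (hm : 2 ≤ m)
    (hX : 0 < X) (hE : 15 * ((A:ℤ)^m - X*(B:ℤ)^m)^2 ≤ (A:ℤ)^m) : False := by
  by_cases h : 25 ≤ A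
  · refine allX_spec h hAB hd hm hX (hE.trans ?_)
    have : (1:ℤ) ≤ X := by exact_mod_cast hX
    nlinarith [pow_nonneg (Int.natCast_nonneg A) m]
  · obtain ⟨d, rfl⟩ : ∃ d, A = B + (d+1) := ⟨A-B-1, by omega⟩
    rw [Nat.add_sub_cancel_left] at hd
    obtain rfl : d = 0 := by
      by_contra h0
      have : 1 ≤ d := by omega
      nlinarith
    obtain rfl | rfl | rfl | rfl | rfl | rfl | rfl : B = 17 ∨ B = 18 ∨ B = 19 ∨ B = 20 ∨
      B = 21 ∨ B = 22 ∨ B = 23 := by omega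
    · exact full1_spec small_18 hm hX hE
    · exact full1_spec small_19 hm hX hE
    · exact full1_spec small_20 hm hX hE
    · exact full1_spec small_21 hm hX hE
    · exact full1_spec small_22 hm hX hE
    · exact full1_spec small_23 hm hX hE
    · exact full1_spec small_24 hm hX hE

end Pil


namespace Pil

theorem far1 : 2^149875 * (2^24+1) < 17^36667 * 2^24 := by decide +kernel
theorem far2 : 17^2342652 * (2^17+1) < 2^9575503 * 2^17 := by decide +kernel
theorem far3 : (2^44+1)^36667 * 2^24 ≤ (2^24+1) * (2^44)^36667 := by decide +kernel
theorem far4 : (2^44+1)^(2^14) * 2^29 ≤ (2^29+1) * (2^44)^(2^14) := by decide +kernel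
theorem far5 : (2^29+1)^(2^8) * 2^17 ≤ (2^17+1) * (2^29)^(2^8) := by decide +kernel

theorem far_comb {a b K L p q : ℕ} (hK : 0 < K)
    (h1 : (a+1)^p * b ≤ (b+1) * a^p) (h2 : (b+1)^q * K ≤ (K+1) * b^q) (hb : 0 < b)
    (hL : L ≤ p*q) (ha : 0 < a) : (a+1)^L * K ≤ (K+1) * a^L := by
  have h3 : (a+1)^(p*q) * K ≤ (K+1) * a^(p*q) := by
    have pos : 0 < b^q := by positivity
    refine le_of_mul_le_mul_right ?_ pos
    calc (a+1)^(p*q) * K * b^q = ((a+1)^p * b)^q * K := by rw [mul_pow, ← pow_mul]; ring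
      _ ≤ ((b+1) * a^p)^q * K := by gcongr
      _ = ((b+1)^q*K) * a^(p*q) := by rw [mul_pow, ← pow_mul]; ring
      _ ≤ ((K+1) * b^q) * a^(p*q) := by gcongr
      _ = _ := by ring
  obtain ⟨j, hj⟩ := Nat.exists_eq_add_of_le hL
  rw [hj] at h3
  have pos : 0 < a^j := by positivity
  refine le_of_mul_le_mul_right ?_ pos
  calc (a+1)^L * K * a^j ≤ (a+1)^L * K * (a+1)^j := by gcongr; omega
    _ = (a+1)^(L+j) * K := by ring
    _ ≤ _ := h3
    _ = _ := by ring

theorem gap_gen {s t L K Q m a b : ℕ} (hL : 0 < L) (hK : 0 < K) (hm : 0 < m)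
    (h1 : s^m ≤ a^Q) (h2 : b^Q ≤ t^m) (h3 : a*L ≤ b*(L+1)) (h4 : t*(K+1) < s*K)
    (h5 : (L+1)^Q*K ≤ (K+1)*L^Q) : False := by
  have e1 : s^m*L^Q ≤ t^m*(L+1)^Q := by
    calc s^m*L^Q ≤ a^Q*L^Q := by gcongr
      _ = (a*L)^Q := by rw [mul_pow]
      _ ≤ (b*(L+1))^Q := by gcongr
      _ = b^Q*(L+1)^Q := by rw [mul_pow]
      _ ≤ _ := by gcongr
  have e2 : t^m*(K+1)^m < s^m*K^m := by
    rw [← mul_pow, ← mul_pow]; exact Nat.pow_lt_pow_left h4 (by omega)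
  obtain ⟨j, rfl⟩ : ∃ j, m = j + 1 := ⟨m-1, by omega⟩
  have e3 : (L+1)^Q*K^(j+1) ≤ (K+1)^(j+1)*L^Q := by
    calc (L+1)^Q*K^(j+1) = ((L+1)^Q*K)*K^j := by ring
      _ ≤ ((K+1)*L^Q)*(K+1)^j := by gcongr; omega
      _ = _ := by ring
  have p1 : 0 < L^Q := by positivity
  have : s^(j+1)*L^Q*K^(j+1) < s^(j+1)*L^Q*K^(j+1) := by
    calc s^(j+1)*L^Q*K^(j+1) ≤ t^(j+1)*(L+1)^Q*K^(j+1) := by gcongr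
      _ = t^(j+1)*((L+1)^Q*K^(j+1)) := by ring
      _ ≤ t^(j+1)*((K+1)^(j+1)*L^Q) := by gcongr
      _ = (t^(j+1)*(K+1)^(j+1))*L^Q := by ring
      _ < (s^(j+1)*K^(j+1))*L^Q := by gcongr
      _ = _ := by ring
  exact lt_irrefl _ this

/-- Farey type argument: `P1/Q1 < log_2 17 < P2/Q2` adjacent. -/
theorem farey {P1 Q1 P2 Q2 K1 K2 L m y : ℕ} (hL : 0 < L) (hK1 : 0 < K1) (hK2 : 0 < K2)
    (hm : 0 < m)
    (hdet : P2*Q1 = P1*Q2 + 1) (hlt : m < Q1 + Q2)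
    (g1 : 2^P1*(K1+1) < 17^Q1*K1) (g2 : 17^Q2*(K2+1) < 2^P2*K2)
    (f1 : (L+1)^Q1*K1 ≤ (K1+1)*L^Q1) (f2 : (L+1)^Q2*K2 ≤ (K2+1)*L^Q2)
    (c1 : 17^m*L ≤ 2^y*(L+1)) (c2 : 2^y*L ≤ 17^m*(L+1)) : False := by
  by_cases h1 : y*Q1 ≤ P1*m
  · refine gap_gen (s := 17^Q1) (t := 2^P1) (Q := Q1) hL hK1 hm ?_ ?_ c1 g1 f1
    · rw [← pow_mul, ← pow_mul, mul_comm]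
    · rw [← pow_mul, ← pow_mul]; exact Nat.pow_le_pow_right (by norm_num) h1
  by_cases h2 : P2*m ≤ y*Q2
  · refine gap_gen (s := 2^P2) (t := 17^Q2) (Q := Q2) hL hK2 hm ?_ ?_ c2 g2 f2
    · rw [← pow_mul, ← pow_mul]; exact Nat.pow_le_pow_right (by norm_num) h2
    · rw [← pow_mul, ← pow_mul, mul_comm]
  push Not at h1 h2
  have h1' : P1*m + 1 ≤ y*Q1 := h1
  have h2' : y*Q2 + 1 ≤ P2*m := h2
  have a1 := Nat.mul_le_mul_right Q2 h1'
  have a2 := Nat.mul_le_mul_right Q1 h2'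
  have a3 : P2*m*Q1 = P1*m*Q2 + m := by
    calc P2*m*Q1 = (P2*Q1)*m := by ring
      _ = _ := by rw [hdet]; ring
  nlinarith

theorem y_ge {m y : ℕ} (hm : 1 ≤ m) (hE : 15*((17:ℤ)^m - 2^y)^2 ≤ 17^m) : 4*m ≤ y := by
  by_contra hc
  push Not at hc
  have h1 : 2^(y+1) ≤ 2^(4*m) := Nat.pow_le_pow_right (by norm_num) (by omega)
  have h2 : 2^(4*m) ≤ 17^m := by rw [pow_mul]; gcongr; norm_num
  have h3 : 2 * (2:ℤ)^y ≤ 17^m := by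
    have : 2 * 2^y ≤ 17^m := by rw [← pow_succ']; exact h1.trans h2
    exact_mod_cast this
  have h4 : (17:ℤ) ≤ 17^m := by
    have := Nat.le_self_pow (show m ≠ 0 by omega) 17
    exact_mod_cast this
  have h5 : (0:ℤ) < 2^y := by positivity
  generalize (17:ℤ)^m = a at *
  generalize (2:ℤ)^y = w at *
  nlinarith

theorem dir17 : ((List.range 60).all fun m => decide (m < 2) || direct1 17 16 m) = true := by
  decide +kernel

theorem close17 {m y : ℕ} (hm : 60 ≤ m) (hE : 15*((17:ℤ)^m - 2^y)^2 ≤ 17^m) :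
    17^m*2^44 ≤ 2^y*(2^44+1) ∧ 2^y*2^44 ≤ 17^m*(2^44+1) := by
  have h1 : (2:ℤ)^96 ≤ 17^m := by
    calc (2:ℤ)^96 ≤ 17^60 := by norm_num
      _ ≤ 17^m := pow_le_pow_right₀ (by norm_num) hm
  zify
  generalize (17:ℤ)^m = a at *
  generalize (2:ℤ)^y = w at *
  constructor
  · by_contra hc
    push Not at hc
    have h2 : a < (2^44+1)*(a - w) := by nlinarith
    nlinarith
  · by_contra hc
    push Not at hc
    have h2 : a < 2^44*(w - a) := by nlinarith
    nlinarith

theorem small17 {m y : ℕ} (hm : 2 ≤ m) (hlt : m < 2379319)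
    (hE : 15*((17:ℤ)^m - 2^y)^2 ≤ 17^m) : False := by
  by_cases h : m < 60
  · have hy := y_ge (by omega) hE
    obtain ⟨j, rfl⟩ := Nat.exists_eq_add_of_le hy
    have hd := dir17
    simp only [List.all_eq_true, List.mem_range, Bool.or_eq_true, decide_eq_true_eq] at hd
    rcases hd m h with h | h
    · omega
    · refine direct1_spec (X := 2^j) (by norm_num) h ?_
      have : ((2^j:ℕ):ℤ) * ((16:ℕ):ℤ)^m = 2^(4*m+j) := by
        push_cast; rw [pow_add, pow_mul]; norm_num; ring
      rw [this]; exact_mod_cast hE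
  · obtain ⟨c1, c2⟩ := close17 (by omega) hE
    exact farey (by norm_num) (by norm_num) (by norm_num) (by omega)
      (by norm_num) hlt far1 far2 far3
      (far_comb (by norm_num) far4 far5 (by norm_num) (by norm_num) (by norm_num)) c1 c2

end Pil


namespace Pil
open ArithmeticFunction Chebyshev Finset

theorem log_fact (N k : ℕ) (hk : k ≤ N) :
    Real.log (k.factorial : ℝ) = ∑ d ∈ Ioc 0 N, vonMangoldt d * ((k/d : ℕ) : ℝ) := by
  induction k with
  | zero => simp
  | succ k ih =>
    rw [Nat.factorial_succ, Nat.cast_mul, Real.log_mul (by positivity) (by positivity),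
      ih (by omega)]
    have h1 : Real.log ((k+1:ℕ):ℝ) = ∑ d ∈ Ioc 0 N, vonMangoldt d * (if d ∣ k+1 then 1 else 0) := by
      rw [← vonMangoldt_sum]
      simp only [mul_ite, mul_one, mul_zero]
      rw [← sum_filter]
      apply sum_congr _ (fun _ _ => rfl)
      ext d
      simp only [Nat.mem_divisors, mem_filter, mem_Ioc]
      constructor
      · rintro ⟨h, -⟩
        have := Nat.le_of_dvd (by omega) h
        have := Nat.pos_of_dvd_of_pos h (by omega)
        exact ⟨⟨by omega, by omega⟩, h⟩
      · rintro ⟨-, h⟩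
        exact ⟨h, by omega⟩
    rw [h1, ← sum_add_distrib]
    apply sum_congr rfl
    intro d _
    rw [Nat.succ_div]
    push_cast
    ring

theorem fact_upper (k : ℕ) (hk : 1 ≤ k) :
    Real.log (k.factorial : ℝ) ≤ k * Real.log k - k + Real.log k + 1 := by
  induction k, hk using Nat.le_induction with
  | base => simp
  | succ k hk ih =>
    rw [Nat.factorial_succ, Nat.cast_mul, Real.log_mul (by positivity) (by positivity)]
    have hk0 : (0:ℝ) < k := by exact_mod_cast hk
    have h1 := Real.one_sub_inv_le_log_of_pos (show (0:ℝ) < ((k+1:ℕ):ℝ)/k by positivity)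
    rw [Real.log_div (by positivity) (by positivity), inv_div] at h1
    have h2 : 1 - (k:ℝ)/((k+1:ℕ):ℝ) = 1/((k+1:ℕ):ℝ) := by push_cast; field_simp; ring
    rw [h2] at h1
    have h3 : (1:ℝ) ≤ ((k+1:ℕ):ℝ) * (Real.log ((k+1:ℕ):ℝ) - Real.log k) := by
      have hp : (0:ℝ) < ((k+1:ℕ):ℝ) := by positivity
      calc (1:ℝ) = ((k+1:ℕ):ℝ) * (1/((k+1:ℕ):ℝ)) := by field_simp
        _ ≤ _ := by gcongr
    push_cast at *
    nlinarith

theorem fact_lower (k : ℕ) (hk : 1 ≤ k) :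
    k * Real.log k - k ≤ Real.log (k.factorial : ℝ) := by
  have := Stirling.le_log_factorial_stirling (show k ≠ 0 by omega)
  have h1 : 0 ≤ Real.log k := Real.log_natCast_nonneg k
  have h2 : 0 ≤ Real.log (2*Real.pi) := Real.log_nonneg (by linarith [Real.pi_gt_three])
  linarith

noncomputable def SS (N : ℕ) : ℝ := Real.log (N.factorial : ℝ) - Real.log ((N/2).factorial : ℝ)
  - Real.log ((N/3).factorial : ℝ) - Real.log ((N/5).factorial : ℝ) + Real.log ((N/30).factorial : ℝ)

theorem SS_eq (N : ℕ) : SS N = ∑ d ∈ Ioc 0 N, vonMangoldt d *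
    (((N/d:ℕ):ℝ) - ((N/d/2:ℕ):ℝ) - ((N/d/3:ℕ):ℝ) - ((N/d/5:ℕ):ℝ) + ((N/d/30:ℕ):ℝ)) := by
  unfold SS
  rw [log_fact N N le_rfl, log_fact N (N/2) (Nat.div_le_self _ _),
    log_fact N (N/3) (Nat.div_le_self _ _), log_fact N (N/5) (Nat.div_le_self _ _),
    log_fact N (N/30) (Nat.div_le_self _ _), ← sum_sub_distrib, ← sum_sub_distrib,
    ← sum_sub_distrib, ← sum_add_distrib]
  apply sum_congr rfl
  intro d _
  rw [Nat.div_right_comm N 2 d, Nat.div_right_comm N 3 d, Nat.div_right_comm N 5 d,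
    Nat.div_right_comm N 30 d]
  ring

theorem SS_le_psi (N : ℕ) : SS N ≤ psi N := by
  rw [SS_eq, psi, Nat.floor_natCast]
  apply sum_le_sum
  intro d _
  have h0 : 0 ≤ vonMangoldt d := vonMangoldt_nonneg
  generalize N/d = q
  have h : q + q/30 ≤ 1 + q/2 + q/3 + q/5 := by omega
  have h' : (q:ℝ) + ((q/30:ℕ):ℝ) ≤ 1 + ((q/2:ℕ):ℝ) + ((q/3:ℕ):ℝ) + ((q/5:ℕ):ℝ) := by exact_mod_cast h
  nlinarith

theorem theta_le_SS (N : ℕ) : theta N ≤ SS N + theta ((N/6:ℕ):ℝ) := by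
  rw [SS_eq, theta, theta, Nat.floor_natCast, Nat.floor_natCast, sum_filter, sum_filter]
  have hsub : Ioc 0 (N/6) ⊆ Ioc 0 N := Ioc_subset_Ioc le_rfl (Nat.div_le_self _ _)
  have e : ∑ p ∈ Ioc 0 (N/6), (if p.Prime then Real.log p else 0) =
      ∑ p ∈ Ioc 0 N, (if p ≤ N/6 then (if p.Prime then Real.log p else 0) else 0) := by
    rw [← sum_filter (fun p => p ≤ N/6)]
    apply sum_congr _ (fun _ _ => rfl)
    ext p; simp only [mem_Ioc, mem_filter]
    have := Nat.div_le_self N 6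
    constructor
    · rintro ⟨a, b⟩; exact ⟨⟨a, by omega⟩, b⟩
    · rintro ⟨⟨a, _⟩, b⟩; exact ⟨a, b⟩
  rw [e, ← sum_add_distrib]
  apply sum_le_sum
  intro d hd
  rw [mem_Ioc] at hd
  have h0 : 0 ≤ vonMangoldt d := vonMangoldt_nonneg
  have hL : (if d.Prime then Real.log d else 0) ≤ vonMangoldt d := by
    split_ifs with hp
    · rw [vonMangoldt_apply_prime hp]
    · exact h0
  have hq1 : 1 ≤ N/d := Nat.div_pos hd.2 hd.1
  by_cases hd6 : d ≤ N/6
  · rw [if_pos hd6]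
    generalize N/d = q
    have h : q/2 + q/3 + q/5 ≤ q + q/30 := by omega
    have h' : ((q/2:ℕ):ℝ) + ((q/3:ℕ):ℝ) + ((q/5:ℕ):ℝ) ≤ (q:ℝ) + ((q/30:ℕ):ℝ) := by exact_mod_cast h
    nlinarith
  · rw [if_neg hd6]
    have hq6 : N/d < 6 := by
      rw [Nat.div_lt_iff_lt_mul hd.1]; omega
    generalize N/d = q at *
    have h : 1 + q/2 + q/3 + q/5 ≤ q + q/30 := by omega
    have h' : 1 + ((q/2:ℕ):ℝ) + ((q/3:ℕ):ℝ) + ((q/5:ℕ):ℝ) ≤ (q:ℝ) + ((q/30:ℕ):ℝ) := by exact_mod_cast h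
    nlinarith

end Pil


namespace Pil
open ArithmeticFunction Chebyshev Finset

noncomputable def kap : ℝ := 14 * Real.log 2 + 9 * Real.log 3 + 5 * Real.log 5

theorem SS_bounds (s : ℕ) (hs : 1 ≤ s) :
    kap * s - 3 * (Real.log ((30*s:ℕ):ℝ) + 1) ≤ SS (30*s) ∧
    SS (30*s) ≤ kap * s + 2 * (Real.log ((30*s:ℕ):ℝ) + 1) := by
  unfold SS
  rw [show 30*s/2 = 15*s by omega, show 30*s/3 = 10*s by omega, show 30*s/5 = 6*s by omega,
    show 30*s/30 = s by omega]
  have l30 := fact_lower (30*s) (by omega)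
  have u30 := fact_upper (30*s) (by omega)
  have l15 := fact_lower (15*s) (by omega)
  have u15 := fact_upper (15*s) (by omega)
  have l10 := fact_lower (10*s) (by omega)
  have u10 := fact_upper (10*s) (by omega)
  have l6 := fact_lower (6*s) (by omega)
  have u6 := fact_upper (6*s) (by omega)
  have l1 := fact_lower s (by omega)
  have u1 := fact_upper s (by omega)
  generalize Real.log ((30*s).factorial : ℝ) = f30 at *
  generalize Real.log ((15*s).factorial : ℝ) = f15 at *
  generalize Real.log ((10*s).factorial : ℝ) = f10 at *
  generalize Real.log ((6*s).factorial : ℝ) = f6 at *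
  generalize Real.log (s.factorial : ℝ) = f1 at *
  have hs0 : (0:ℝ) < s := by exact_mod_cast hs
  have hl : 0 ≤ Real.log s := Real.log_natCast_nonneg s
  have p2 : 0 < Real.log 2 := Real.log_pos (by norm_num)
  have p3 : 0 < Real.log 3 := Real.log_pos (by norm_num)
  have p5 : 0 < Real.log 5 := Real.log_pos (by norm_num)
  have e6 : Real.log 6 = Real.log 2 + Real.log 3 := by
    rw [← Real.log_mul (by norm_num) (by norm_num)]; norm_num
  have e10 : Real.log 10 = Real.log 2 + Real.log 5 := by
    rw [← Real.log_mul (by norm_num) (by norm_num)]; norm_num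
  have e15 : Real.log 15 = Real.log 3 + Real.log 5 := by
    rw [← Real.log_mul (by norm_num) (by norm_num)]; norm_num
  have e30 : Real.log 30 = Real.log 2 + Real.log 3 + Real.log 5 := by
    rw [← e6, ← Real.log_mul (by norm_num) (by norm_num)]; norm_num
  push_cast at *
  rw [Real.log_mul (by norm_num) hs0.ne'] at *
  unfold kap
  rw [e30] at *
  rw [e15] at *
  rw [e10] at *
  rw [e6] at *
  constructor <;> nlinarith

theorem kap_ge : (39.8:ℝ) * Real.log 2 ≤ kap := by
  have h : Real.log ((2:ℝ)^199) ≤ Real.log (((2:ℝ)^14*3^9*5^5)^5) :=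
    Real.log_le_log (by positivity) (by norm_num)
  rw [Real.log_pow, Real.log_pow, Real.log_mul (by norm_num) (by norm_num),
    Real.log_mul (by norm_num) (by norm_num), Real.log_pow, Real.log_pow, Real.log_pow] at h
  unfold kap
  push_cast at h
  linarith

theorem sqrt_log_bound (x : ℝ) (hx : 1048576 ≤ x) :
    1024 * Real.log x ≤ 20 * Real.log 2 * Real.sqrt x := by
  have he : Real.exp 2 ≤ 1048576 := by
    have : Real.exp 2 = Real.exp 1 * Real.exp 1 := by rw [← Real.exp_add]; norm_num
    rw [this]
    have := Real.exp_one_lt_d9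
    nlinarith [Real.exp_pos 1]
  have h := Real.log_div_sqrt_antitoneOn (a := 1048576) (b := x) he (he.trans hx) hx
  simp only at h
  have e1 : Real.sqrt 1048576 = 1024 := by
    rw [show (1048576:ℝ) = 1024^2 by norm_num]; exact Real.sqrt_sq (by norm_num)
  have e2 : Real.log 1048576 = 20 * Real.log 2 := by
    rw [show (1048576:ℝ) = 2^20 by norm_num, Real.log_pow]; norm_num
  rw [e1, e2, div_le_div_iff₀ (Real.sqrt_pos.2 (by linarith)) (by norm_num)] at h
  linarith

theorem theta_diff (t : ℕ) (ht : 4370 ≤ t) :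
    20 * t * Real.log 2 ≤ theta ((240*t:ℕ):ℝ) - theta ((180*t+1:ℕ):ℝ) := by
  have htr : (4370:ℝ) ≤ t := by exact_mod_cast ht
  have p2 : 0.6931 < Real.log 2 := by linarith [Real.log_two_gt_d9]
  obtain ⟨s1, -⟩ := SS_bounds (8*t) (by omega)
  obtain ⟨-, s2⟩ := SS_bounds (6*t) (by omega)
  obtain ⟨-, s3⟩ := SS_bounds t (by omega)
  rw [show 30*(8*t) = 240*t by ring] at s1
  rw [show 30*(6*t) = 180*t by ring] at s2
  have a1 := SS_le_psi (240*t)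
  have a2 := theta_le_SS (180*t)
  have a3 := theta_le_SS (30*t)
  rw [show 180*t/6 = 30*t by omega] at a2
  rw [show 30*t/6 = 5*t by omega] at a3
  have a4 := theta_le_log4_mul_x (x := ((5*t:ℕ):ℝ)) (by positivity)
  have a5 := abs_psi_sub_theta_le_sqrt_mul_log (x := ((240*t:ℕ):ℝ)) (by push_cast; linarith)
  have a6 := (abs_le.1 a5).2
  have a7 := sqrt_log_bound ((240*t:ℕ):ℝ) (by push_cast; linarith)
  have a8 : theta ((180*t+1:ℕ):ℝ) ≤ theta ((180*t:ℕ):ℝ) + Real.log ((240*t:ℕ):ℝ) := by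
    rw [theta, theta, Nat.floor_natCast, Nat.floor_natCast, sum_filter, sum_filter,
      sum_Ioc_succ_top (by omega)]
    gcongr
    have hlog : Real.log ((180*t+1:ℕ):ℝ) ≤ Real.log ((240*t:ℕ):ℝ) := by
      apply Real.log_le_log (by positivity)
      exact_mod_cast (by omega)
    split_ifs
    · exact hlog
    · exact Real.log_natCast_nonneg _
  have m1 : Real.log ((180*t:ℕ):ℝ) ≤ Real.log ((240*t:ℕ):ℝ) := by
    apply Real.log_le_log
    · push_cast; linarith
    · push_cast; linarith
  have m2 : Real.log ((30*t:ℕ):ℝ) ≤ Real.log ((240*t:ℕ):ℝ) := by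
    apply Real.log_le_log
    · push_cast; linarith
    · push_cast; linarith
  have l4 : Real.log 4 = 2 * Real.log 2 := by
    rw [show (4:ℝ) = 2^2 by norm_num, Real.log_pow]; norm_num
  rw [l4] at a4
  have hsq : Real.sqrt ((240*t:ℕ):ℝ) * Real.sqrt ((240*t:ℕ):ℝ) = 240 * t := by
    rw [Real.mul_self_sqrt (by positivity)]; push_cast; ring
  have hs1 : 1024 ≤ Real.sqrt ((240*t:ℕ):ℝ) := by
    apply Real.le_sqrt_of_sq_le; push_cast; linarith
  have hk := kap_ge
  generalize Real.sqrt ((240*t:ℕ):ℝ) = w at *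
  have hl0 : 0 ≤ Real.log ((240*t:ℕ):ℝ) := Real.log_natCast_nonneg _
  generalize Real.log ((240*t:ℕ):ℝ) = l at *
  generalize Real.log 2 = l2 at *
  generalize Real.log ((180*t:ℕ):ℝ) = l180 at *
  generalize Real.log ((30*t:ℕ):ℝ) = l30 at *
  generalize theta ((5*t:ℕ):ℝ) = th5 at *
  push_cast at s1 s2 s3 a4
  have b1 : w * l * 1024 ≤ 20 * l2 * (240 * t) := by
    rw [← hsq]; nlinarith
  have b2 : l * 1024 ≤ w * l := by nlinarith
  have b3 : 39.8 * l2 * t ≤ kap * t := by gcongr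
  have b4 : 0.6931 * (t:ℝ) ≤ l2 * t := by gcongr
  have b5 : 2 * w * l = 2 * (w*l) := by ring
  rw [b5] at a6
  generalize w * l = wl at *
  nlinarith only [b1, b2, b3, b4, a6, a1, a2, a3, a4, a8, m1, m2, s1, s2, s3, htr]

def DD (t : ℕ) : ℕ := ∏ p ∈ (Ioc (180*t+1) (240*t)).filter Nat.Prime, p

theorem DD_pos (t : ℕ) : 0 < DD t := by
  apply prod_pos
  intro p hp
  exact (mem_filter.1 hp).2.pos

theorem DD_ge (t : ℕ) (ht : 4370 ≤ t) : 2^(20*t) ≤ DD t := by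
  have h := theta_diff t ht
  have e : Real.log (DD t : ℝ) = theta ((240*t:ℕ):ℝ) - theta ((180*t+1:ℕ):ℝ) := by
    rw [DD, Nat.cast_prod, Real.log_prod (fun p hp => by
      have := (mem_filter.1 hp).2.pos; positivity), sum_filter, theta, theta,
      Nat.floor_natCast, Nat.floor_natCast, sum_filter, sum_filter]
    rw [← sum_Ioc_consecutive _ (Nat.zero_le (180*t+1)) (show 180*t+1 ≤ 240*t by omega)]
    ring
  rw [← e] at h
  have h2 : Real.log ((2:ℝ)^(20*t)) ≤ Real.log (DD t : ℝ) := by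
    rw [Real.log_pow]; push_cast; exact h
  have := (Real.log_le_log_iff (by positivity) (by exact_mod_cast DD_pos t)).1 h2
  exact_mod_cast this

end Pil


namespace Pil
open Finset

theorem prime_dvd_choose {p a j x : ℕ} (hp : p.Prime) (hj : j < p) (h1 : a < x + j) (h2 : x ≤ a)
    (hx : p ∣ x) : p ∣ a.choose j := by
  have h : p ∣ j.factorial * a.choose j := by
    rw [← Nat.descFactorial_eq_factorial_mul_choose, Nat.descFactorial_eq_prod_range]
    refine dvd_trans hx ?_
    have : x = a - (a - x) := by omega
    rw [this]
    exact dvd_prod_of_mem (fun i => a - i) (mem_range.2 (by omega))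
  rcases hp.dvd_mul.1 h with h | h
  · exact absurd ((hp.dvd_factorial).1 h) (by omega)
  · exact h

theorem DD_dvd {t x : ℕ} (h : ∀ p, p.Prime → 180*t+1 < p → p ≤ 240*t → p ∣ x) : DD t ∣ x := by
  apply prod_primes_dvd
  · intro p hp; exact (mem_filter.1 hp).2.prime
  · intro p hp
    obtain ⟨h1, h2⟩ := mem_filter.1 hp
    rw [mem_Ioc] at h1
    exact h p h2 h1.1 h1.2

theorem DD_dvd1 (t k : ℕ) (hk : k ≤ 180*t) :
    DD t ∣ Nat.multichoose (180*t+1) k * Nat.choose (540*t-1-k) (180*t-k) := by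
  apply DD_dvd
  intro p hp h1 h2
  by_cases h : p ≤ 180*t + k
  · apply Dvd.dvd.mul_right
    rw [Nat.multichoose_eq]
    exact prime_dvd_choose hp (by omega) (x := p) (by omega) (by omega) dvd_rfl
  · apply Dvd.dvd.mul_left
    exact prime_dvd_choose hp (by omega) (x := 2*p) (by omega) (by omega) (Dvd.intro_left _ rfl)

theorem DD_dvd2 (t k : ℕ) (hk : k ≤ 180*t+1) :
    DD t ∣ Nat.multichoose (180*t+2) k * Nat.choose (540*t-1-k) (180*t+1-k) := by
  apply DD_dvd
  intro p hp h1 h2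
  by_cases h : p ≤ 180*t + 1 + k
  · apply Dvd.dvd.mul_right
    rw [Nat.multichoose_eq]
    exact prime_dvd_choose hp (by omega) (x := p) (by omega) (by omega) dvd_rfl
  · apply Dvd.dvd.mul_left
    exact prime_dvd_choose hp (by omega) (x := 2*p) (by omega) (by omega) (Dvd.intro_left _ rfl)

theorem n17a : 33^720 ≤ 2^17 * (272^180 * 16^540) := by decide +kernel
theorem n17b : 16^180*17^360*34^720 ≤ 2^16 * (17^540*33^720) := by decide +kernel
theorem n17c : 4*17^540 ≤ 2^2300 := by decide +kernel

theorem pwa {a b c d p q r s : ℕ} (h : a^p ≤ b^q*(c^r*d^s)) (t : ℕ) :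
    a^(p*t) ≤ b^(q*t)*(c^(r*t)*d^(s*t)) := by
  rw [pow_mul a, pow_mul b, pow_mul c, pow_mul d, ← mul_pow, ← mul_pow]
  exact Nat.pow_le_pow_left h t

theorem pwb {a b c d a' b' p q r s p' q' : ℕ} (h : a^p*a'^p'*b'^q' ≤ b^q*(c^r*d^s)) (t : ℕ) :
    a^(p*t)*a'^(p'*t)*b'^(q'*t) ≤ b^(q*t)*(c^(r*t)*d^(s*t)) := by
  rw [pow_mul a, pow_mul b, pow_mul c, pow_mul d, pow_mul a', pow_mul b', ← mul_pow, ← mul_pow,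
    ← mul_pow, ← mul_pow]
  exact Nat.pow_le_pow_left h t

theorem n17e {r q e : ℕ} (hr : r < q) (h : 4*17^q ≤ 2^e) : 4*17^r ≤ 2^e :=
  le_trans (Nat.mul_le_mul_left 4 (Nat.pow_le_pow_right (by norm_num) (by omega))) h

theorem n17d (r : ℕ) (hr : r < 540) : ∃ e, e ≤ 2300 ∧ 4*17^r ≤ 2^e :=
  ⟨_, le_rfl, n17e hr n17c⟩

theorem t1_17 (t r D : ℕ) (ht : 4370 ≤ t) (hr : r < 540) (hD : 2^(20*t) ≤ D) :
    4*17^r*33^(720*t+1) < D*(272^(180*t+1)*16^(540*t)) := by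
  obtain ⟨e, he, h1⟩ := n17d r hr
  have h2 := pwa n17a t
  calc 4*17^r*33^(720*t+1) = (4*17^r)*33^(720*t)*33 := by ring
    _ ≤ 2^e*(2^(17*t) * (272^(180*t) * 16^(540*t)))*33 := by gcongr
    _ < 2^e*(2^(17*t) * (272^(180*t) * 16^(540*t)))*272 := by gcongr; norm_num
    _ = 2^(e+17*t) * (272^(180*t+1) * 16^(540*t)) := by rw [pow_add 2]; ring
    _ ≤ 2^(20*t) * (272^(180*t+1) * 16^(540*t)) := by gcongr <;> omega
    _ ≤ _ := by gcongr

theorem t2_17 (t r D : ℕ) (ht : 4370 ≤ t) (hr : r < 540) (hD : 2^(20*t) ≤ D) :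
    4*17^r*16^(180*t)*17^(360*t)*34^(720*t) * 2^13 ≤ 15*D^2*17^(540*t)*33^(720*t) := by
  obtain ⟨e, he, h1⟩ := n17d r hr
  have h2 := pwb n17b t
  calc 4*17^r*16^(180*t)*17^(360*t)*34^(720*t) * 2^13
      = (4*17^r)*(16^(180*t)*17^(360*t)*34^(720*t)) * 2^13 := by ring
    _ ≤ 2^e*(2^(16*t) * (17^(540*t) * 33^(720*t))) * 2^13 := by gcongr
    _ = 2^(e+13+16*t) * (17^(540*t) * 33^(720*t)) := by rw [pow_add 2]; ring
    _ ≤ 2^(2*(20*t)) * (17^(540*t) * 33^(720*t)) := by gcongr <;> omega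
    _ = 1*(2^(20*t))^2 * (17^(540*t) * 33^(720*t)) := by rw [← pow_mul]; ring
    _ ≤ 15*D^2 * (17^(540*t) * 33^(720*t)) := by gcongr; norm_num
    _ = _ := by ring

theorem large17 {m y : ℕ} (hm : 2359800 ≤ m) (hE : 15*((17:ℤ)^m - 2^y)^2 ≤ 17^m) : False := by
  have hy := y_ge (by omega) hE
  obtain ⟨t, r, hr, rfl⟩ : ∃ t r, r < 540 ∧ m = 540*t + r :=
    ⟨m/540, m%540, Nat.mod_lt _ (by norm_num), by omega⟩
  have ht : 4370 ≤ t := by omega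
  obtain ⟨j, rfl⟩ : ∃ j, y = 4*(540*t) + j := ⟨y - 4*(540*t), by omega⟩
  have hD := DD_ge t ht
  have hD0 := DD_pos t
  have T1 := t1_17 t r (DD t) ht hr hD
  have T2 := t2_17 t r (DD t) ht hr hD
  have d1 := DD_dvd1 t
  have d2 := DD_dvd2 t
  generalize DD t = D at *
  have e16 : (2:ℤ)^(4*(540*t)+j) = (2^j:ℕ) * ((16:ℕ):ℤ)^(540*t) := by
    rw [pow_add, pow_mul 2 4]; push_cast; norm_num; ring
  have e17 : (17:ℤ)^(540*t+r) = (17^r:ℕ) * ((17:ℕ):ℤ)^(540*t) := by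
    rw [pow_add]; push_cast; ring
  rw [e16, e17] at hE
  refine core_delta (A := 17) (B := 16) (X := 2^j) (Y := 17^r) (W := 17^r) (Δ := D) (Δ' := D)
    (by norm_num) (by norm_num) (by positivity) (180*t) (540*t) (by omega) hD0 hD0 d1 d2
    ?_ hE ?_ ?_ ?_ ?_
  · have h0 : (1:ℤ) ≤ (17^r:ℕ) * ((17:ℕ):ℤ)^(540*t) := by
      have : 1 ≤ 17^r * 17^(540*t) := Nat.one_le_iff_ne_zero.2 (by positivity)
      exact_mod_cast this
    zify
    have e2 : 2 * ((17:ℤ)^r) * 17^(540*t) = 2 * ((17^r:ℕ) * ((17:ℕ):ℤ)^(540*t)) := by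
      push_cast; ring
    rw [e2]
    have e3 : (2:ℤ)^j * 16^(540*t) = ((2^j:ℕ) * ((16:ℕ):ℤ)^(540*t)) := by
      push_cast; ring
    rw [e3]
    generalize ((17^r:ℕ):ℤ) * ((17:ℕ):ℤ)^(540*t) = a at *
    generalize ((2^j:ℕ):ℤ) * ((16:ℕ):ℤ)^(540*t) = w at *
    by_contra hc
    push Not at hc
    nlinarith
  · norm_num only [one_pow]
    rw [show 540*t+180*t+1 = 720*t+1 by ring]
    simpa using T1
  · rw [show 540*t - 180*t = 360*t by omega, show 2*(360*t) = 720*t by ring,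
      show 2*(180*t) = 360*t by ring]
    norm_num only
    refine le_trans ?_ T2
    norm_num
  · norm_num only [one_pow]
    rw [show 540*t+(180*t+1)+1 = 720*t+1+1 by ring]
    rw [pow_succ 33 (720*t+1), pow_succ 272 (180*t+1)]
    calc _ = (4*17^r*33^(720*t+1))*33 := by ring
      _ ≤ (4*17^r*33^(720*t+1))*272 := by gcongr; norm_num
      _ < (D*(272^(180*t+1)*16^(540*t)))*272 := by gcongr
      _ = _ := by ring
  · rw [show 540*t - (180*t+1) = 360*t - 1 by omega, show 2*(360*t-1) = 720*t-2 by omega,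
      show 2*(180*t+1) = 360*t+2 by ring]
    norm_num only
    have f34 : 34^(720*t) = 34^(720*t-2) * 34^2 := by rw [← pow_add]; congr 1; omega
    have f33 : 33^(720*t) = 33^(720*t-2) * 33^2 := by rw [← pow_add]; congr 1; omega
    rw [f34, f33] at T2
    rw [pow_succ 16, pow_add 17 (360*t) 2]
    generalize 34^(720*t-2) = u at *
    generalize 33^(720*t-2) = v at *
    have e : 4*17^r*16^(180*t)*17^(360*t)*(u*34^2)*2^13 =
      (4*17^r*(16^(180*t)*16)*(17^(360*t)*17^2)*u) * 33^2 + 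
       (4*17^r*16^(180*t)*17^(360*t)*u)*(34^2*2^13 - 16*17^2*33^2) := by
      norm_num; ring
    rw [e] at T2
    have := (Nat.le_add_right _ _).trans T2
    refine le_of_mul_le_mul_right (a := 33^2) ?_ (by norm_num)
    calc _ ≤ _ := this
      _ = _ := by ring

theorem case17 {m y : ℕ} (hm : 2 ≤ m) (hE : 15*((17:ℤ)^m - 2^y)^2 ≤ 17^m) : False := by
  by_cases h : m < 2379319
  · exact small17 hm h hE
  · exact large17 (by omega) hE

end Pil


namespace Pil

theorem numA (i : ℕ) : 2^((44+i)/8) * 359^(64+i+2*(64+i)/5+1) <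
    16^(2*(64+i)/5)*179^(64+i+2*(64+i)/5+1) := by
  induction i using Nat.strong_induction_on with
  | _ i ih =>
    by_cases h : i < 40
    · have : ∀ i < 40, 2^((44+i)/8) * 359^(64+i+2*(64+i)/5+1) <
        16^(2*(64+i)/5)*179^(64+i+2*(64+i)/5+1) := by decide +kernel
      exact this i h
    · obtain ⟨j, rfl⟩ : ∃ j, i = j + 40 := ⟨i-40, by omega⟩
      have h1 := ih j (by omega)
      rw [show (44+(j+40))/8 = (44+j)/8+5 by omega,
        show 2*(64+(j+40))/5 = 2*(64+j)/5 + 16 by omega]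
      generalize 2*(64+j)/5 = n at *
      generalize (44+j)/8 = g at *
      have hn : 2^5*359^56 ≤ 16^16*179^56 := by norm_num
      calc 2^(g+5)*359^(64+(j+40)+(n+16)+1) = (2^g*359^(64+j+n+1)) * (2^5*359^56) := by ring
        _ ≤ (2^g*359^(64+j+n+1)) * (16^16*179^56) := by gcongr
        _ < (16^n*179^(64+j+n+1)) * (16^16*179^56) := by gcongr
        _ = _ := by ring

theorem numB (i : ℕ) : 2*16^(2*(64+i)/5+1)*360^(2*(64+i-(2*(64+i)/5+1))) ≤
    15*2048^(64+i-2*(2*(64+i)/5+1)-1)*359^(2*(64+i-(2*(64+i)/5+1))) := by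
  induction i using Nat.strong_induction_on with
  | _ i ih =>
    by_cases h : i < 5
    · have : ∀ i < 5, 2*16^(2*(64+i)/5+1)*360^(2*(64+i-(2*(64+i)/5+1))) ≤
        15*2048^(64+i-2*(2*(64+i)/5+1)-1)*359^(2*(64+i-(2*(64+i)/5+1))) := by decide +kernel
      exact this i h
    · obtain ⟨j, rfl⟩ : ∃ j, i = j + 5 := ⟨i-5, by omega⟩
      have h1 := ih j (by omega)
      rw [show 64+(j+5)-2*(2*(64+(j+5))/5+1)-1 = (64+j-2*(2*(64+j)/5+1)-1)+1 by omega,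
        show 64+(j+5)-(2*(64+(j+5))/5+1) = (64+j-(2*(64+j)/5+1)) + 3 by omega,
        show 2*(64+(j+5))/5 = 2*(64+j)/5 + 2 by omega]
      generalize 64+j-2*(2*(64+j)/5+1)-1 = f at *
      generalize 64+j-(2*(64+j)/5+1) = g at *
      generalize 2*(64+j)/5 = n at *
      calc 2*16^(n+2+1)*360^(2*(g+3)) = (2*16^(n+1)*360^(2*g)) * (16^2*360^6) := by ring
        _ ≤ (15*2048^f*359^(2*g)) * (2048*359^6) := by
            apply Nat.mul_le_mul h1 (by norm_num)
        _ = _ := by ring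

theorem bigY {A B X Y m l : ℕ} (hA : 2048 ≤ A) (hl : A < 2^l) (hm : 4*l+16 ≤ m) (hAB : B < A)
    (hd : 16*(A-B)^2 < A) (hY : 2*Y ≤ A) (hX : 0 < X) (hXB : X*B^m ≤ 2*Y*A^m)
    (hE : 15*((Y:ℤ)*(A:ℤ)^m - X*(B:ℤ)^m)^2 ≤ Y*(A:ℤ)^m) : False := by
  obtain ⟨d, rfl⟩ : ∃ d, A = B + d := ⟨A-B, by omega⟩
  rw [Nat.add_sub_cancel_left] at hd
  have h180 : 180 * d < B + d := by
    have : (180*d)^2 < (B+d)^2 := by nlinarith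
    exact lt_of_pow_lt_pow_left₀ 2 (by positivity) this
  have hd0 : 0 < d := by omega
  set A := B + d with hAdef
  have eAB : A - B = d := by omega
  have hl12 : 12 ≤ l := by
    by_contra hc
    have : 2^l ≤ 2^11 := Nat.pow_le_pow_right (by norm_num) (by omega)
    omega
  have hdh : d < 2^((l-3)/2) := by
    have : d^2 < (2^((l-3)/2))^2 := by
      rw [← pow_mul]
      have e : 2^l ≤ 16 * 2^((l-3)/2*2) := by
        rw [show 16 = 2^4 by norm_num, ← pow_add]
        exact Nat.pow_le_pow_right (by norm_num) (by omega)
      omega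
    exact lt_of_pow_lt_pow_left₀ 2 (by positivity) this
  obtain ⟨i, rfl⟩ : ∃ i, m = 64 + i := ⟨m-64, by omega⟩
  have n1 := numA i
  have n2 := numB i
  have hh : (l-3)/2 + 1 ≤ (44+i)/8 := by omega
  have hn5 : 5*(2*(64+i)/5) ≤ 2*(64+i) := by omega
  set m := 64 + i with hmdef
  generalize 2*m/5 = n at *
  have hdd : (A-B)^2*(A+B) ≤ A*B := by
    rw [eAB]; nlinarith
  refine core1 (by omega) hAB hX hdd n m (by omega) hXB hE ?_ ?_
  · unfold T1
    rw [eAB, show (A*B)^(n+1)*B^m = A^(n+1)*B^(m+n+1) by rw [mul_pow]; ring]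
    generalize m+n+1 = s at *
    have s1 : (A+B)^s * 179^s ≤ 359^s * B^s := by
      rw [← mul_pow, ← mul_pow]; gcongr 1; omega
    have s2 : (16*d^2)^n ≤ A^n := by gcongr
    have s3 : 2*d*359^s < 16^n*179^s := by
      calc 2*d*359^s ≤ 2*2^((l-3)/2)*359^s := by gcongr
        _ = 2^((l-3)/2+1)*359^s := by ring
        _ ≤ 2^((44+i)/8)*359^s := by gcongr; norm_num
        _ < _ := n1
    have pB : 0 < B^s := Nat.pow_pos (by omega)
    have pA : 0 < A^(n+1) := Nat.pow_pos (by omega)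
    refine lt_of_mul_lt_mul_right (a := 16^n*179^s) ?_ (Nat.zero_le _)
    calc 4*Y*d^(2*n+1)*(A+B)^s*(16^n*179^s)
        = 2*(2*Y)*d*(16*d^2)^n*((A+B)^s*179^s) := by rw [mul_pow, ← pow_mul]; ring
      _ ≤ 2*A*d*A^n*(359^s*B^s) := by gcongr
      _ = (2*d*359^s)*(A^(n+1)*B^s) := by ring
      _ < (16^n*179^s)*(A^(n+1)*B^s) := by gcongr
      _ = _ := by ring
  · unfold T2
    generalize hj : m - (n+1) = j at *
    have a1 : (2*A)^(2*j) * 359^(2*j) ≤ 360^(2*j) * (A+B)^(2*j) := by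
      rw [← mul_pow, ← mul_pow]; gcongr 1; omega
    have a3 : A * A^(2*(n+1)) * 2048^(m-2*(n+1)-1) ≤ A^m := by
      calc _ ≤ A * A^(2*(n+1)) * A^(m-2*(n+1)-1) := by gcongr
        _ = A^m := by rw [← pow_succ', ← pow_add]; congr 1; omega
    have pos : 0 < 359^(2*j)*2048^(m-2*(n+1)-1) := by positivity
    refine le_of_mul_le_mul_right ?_ pos
    calc 4*Y*16^(n+1)*A^(2*(n+1))*(2*A)^(2*j) * (359^(2*j)*2048^(m-2*(n+1)-1))
        = 2*(2*Y)*16^(n+1)*A^(2*(n+1))*((2*A)^(2*j)*359^(2*j))*2048^(m-2*(n+1)-1) := by ring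
      _ ≤ 2*A*16^(n+1)*A^(2*(n+1))*(360^(2*j)*(A+B)^(2*j))*2048^(m-2*(n+1)-1) := by gcongr
      _ = 2*16^(n+1)*360^(2*j)*(A+B)^(2*j)*(A*A^(2*(n+1))*2048^(m-2*(n+1)-1)) := by ring
      _ ≤ 2*16^(n+1)*360^(2*j)*(A+B)^(2*j)*A^m := by gcongr
      _ = (2*16^(n+1)*360^(2*j))*((A+B)^(2*j)*A^m) := by ring
      _ ≤ (15*2048^(m-2*(n+1)-1)*359^(2*j))*((A+B)^(2*j)*A^m) := by gcongr
      _ = _ := by ring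

theorem step2197 : stepOK 2197 2197 2187 3 1 := by decide +kernel
theorem base2197 : baseOK 676 2197 2197 2187 169 46 3 10 = true := by decide +kernel

theorem pair2197 {X Y m : ℕ} (hm : 46 ≤ m) (hY : Y ≤ 169) (hX : 0 < X)
    (hXB : X*2187^m ≤ 2*Y*2197^m)
    (hE : 15*((Y:ℤ)*((2197:ℕ):ℤ)^m - X*((2187:ℕ):ℤ)^m)^2 ≤ Y*((2197:ℕ):ℤ)^m) : False := by
  obtain ⟨n, hn, t1, t2⟩ := ladder (by norm_num) (by norm_num) step2197 (baseOK_spec base2197) m hm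
  refine core1 (by norm_num) (by norm_num) hX (by norm_num) n m hn hXB hE ?_ ?_
  · unfold T1 at *
    refine lt_of_le_of_lt ?_ t1
    gcongr
  · unfold T2g at t2; unfold T2
    refine le_trans ?_ t2
    gcongr
    omega

end Pil


namespace Pil

def crit (A B u : ℕ) : Bool := (Nat.beq A 2197 && Nat.beq B 2187 && Nat.beq u 3) ||
  (Nat.ble 2048 A && Nat.ble (25*(A-B)*u*(4*(Nat.log2 A+1)+16)) (16*B))

def clist : List (ℕ × ℕ) := (List.range 102).flatMap fun c =>
  ((List.range 20).filter fun u => Nat.ble 2 c && Nat.ble 3 u && Nat.ble (c^u) 1048575).map fun u => (c, u)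

def far (A B : ℕ) : Bool := Nat.ble A B || Nat.ble A (16*(A-B)^2)

def chk1 : Bool := clist.all fun p => clist.all fun q => far (p.1^p.2) (q.1^q.2) ||
  crit (p.1^p.2) (q.1^q.2) p.2

def isq (A : ℕ) : ℕ := [512,256,128,64,32,16,8,4,2,1].foldl
  (fun s k => bif Nat.ble ((s+k)*(s+k)) A then s+k else s) 0

def isqOK (A : ℕ) : Bool := Nat.ble ((isq A)^2) A && Nat.ble (A+1) ((isq A+1)^2)

def chk2 : Bool := clist.all fun p => isqOK (p.1^p.2) && (far (p.1^p.2) ((isq (p.1^p.2))^2) ||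
  crit (p.1^p.2) ((isq (p.1^p.2))^2) p.2)
def chk3 : Bool := clist.all fun q => isqOK (q.1^q.2) && (far ((isq (q.1^q.2)+1)^2) (q.1^q.2) ||
  crit ((isq (q.1^q.2)+1)^2) (q.1^q.2) 2)

theorem chk1_t : chk1 = true := by decide +kernel
theorem chk2_t : chk2 = true := by decide +kernel
theorem chk3_t : chk3 = true := by decide +kernel
end Pil


namespace Pil

theorem mem_clist {c u : ℕ} (hc : 2 ≤ c) (hu : 3 ≤ u) (h : c^u < 2^20) : (c,u) ∈ clist := by
  have h1 : c < 102 := by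
    by_contra hh
    have : 102^3 ≤ c^u := (Nat.pow_le_pow_left (by omega) 3).trans (Nat.pow_le_pow_right (by omega) hu)
    norm_num at this h; omega
  have h2 : u < 20 := by
    by_contra hh
    have : 2^20 ≤ c^u := (Nat.pow_le_pow_right (by omega) (by omega)).trans (Nat.pow_le_pow_left hc u)
    omega
  unfold clist
  rw [List.mem_flatMap]
  refine ⟨c, List.mem_range.2 h1, ?_⟩
  rw [List.mem_map]
  refine ⟨u, ?_, rfl⟩
  rw [List.mem_filter]
  refine ⟨List.mem_range.2 h2, ?_⟩
  simp only [Bool.and_eq_true, Nat.ble_eq]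
  norm_num at h
  omega

theorem far_false {A B : ℕ} (hAB : B < A) (hd : 16*(A-B)^2 < A) : far A B = false := by
  unfold far
  rw [Bool.or_eq_false_iff]
  constructor <;> (rw [← Bool.not_eq_true, Nat.ble_eq]; omega)

def CritP (A B u : ℕ) : Prop := (A = 2197 ∧ B = 2187 ∧ u = 3) ∨
  ∃ l, 2048 ≤ A ∧ A < 2^l ∧ 25*(A-B)*u*(4*l+16) ≤ 16*B

theorem crit_P {A B u : ℕ} (h : crit A B u = true) : CritP A B u := by
  unfold crit at h
  simp only [Bool.or_eq_true, Bool.and_eq_true, Nat.ble_eq, Nat.beq_eq] at h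
  rcases h with h | h
  · left; exact ⟨h.1.1, h.1.2, h.2⟩
  · right; exact ⟨Nat.log2 A + 1, h.1, Nat.lt_log2_self, h.2⟩

theorem grow (k : ℕ) : (k+20)^2*(4*(k+21)+16)^2 ≤ 6*2^(k+20) := by
  induction k with
  | zero => norm_num
  | succ k ih =>
    have : (k+1+20)^2*(4*(k+1+21)+16)^2 ≤ 2*((k+20)^2*(4*(k+21)+16)^2) := by
      rw [← mul_pow, ← mul_pow]
      nlinarith [mul_self_nonneg k, sq_nonneg (k*k), mul_nonneg (Nat.zero_le k) (Nat.zero_le (k*k))]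
    calc _ ≤ _ := this
      _ ≤ 2*(6*2^(k+20)) := by omega
      _ = _ := by ring

theorem le_of_sq_le_sq {a b : ℕ} (h : a^2 ≤ b^2) : a ≤ b :=
  le_of_pow_le_pow_left₀ (by norm_num) (by omega) h

theorem crit_big {A B u : ℕ} (hA : 2^20 ≤ A) (hu : 2^u ≤ A) (hAB : B < A) (hd : 16*(A-B)^2 < A) :
    CritP A B u := by
  right
  have hl : A < 2^(Nat.log2 A + 1) := Nat.lt_log2_self
  have hl2 : 2^(Nat.log2 A) ≤ A := Nat.log2_self_le (by norm_num at hA; omega)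
  generalize Nat.log2 A = L at *
  have hL : 20 ≤ L := by
    by_contra hh
    have := Nat.pow_le_pow_right (n := 2) (by norm_num) (show L+1 ≤ 20 by omega)
    omega
  have huL : u ≤ L := by
    by_contra hh
    have := Nat.pow_le_pow_right (n := 2) (by norm_num) (show L+1 ≤ u by omega)
    omega
  refine ⟨L+1, by norm_num at hA; omega, hl, ?_⟩
  obtain ⟨k, rfl⟩ := Nat.exists_eq_add_of_le' hL
  have g := grow k
  have h1 : (u*(4*(k+20+1)+16))^2 ≤ 6*A := by
    calc _ ≤ ((k+20)*(4*(k+20+1)+16))^2 := Nat.pow_le_pow_left (Nat.mul_le_mul_right _ huL) 2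
      _ = (k+20)^2*(4*(k+21)+16)^2 := by ring
      _ ≤ _ := g
      _ ≤ _ := by omega
  rw [mul_assoc _ u]
  generalize u*(4*(k+20+1)+16) = M at *
  obtain ⟨d, rfl⟩ := Nat.exists_eq_add_of_lt hAB
  have e : B + d + 1 - B = d+1 := by omega
  rw [e] at hd ⊢
  norm_num at hA
  have h2 : 30*(d+1) ≤ B := by nlinarith
  apply le_of_sq_le_sq
  have h3 : (d+1)^2*M^2*16 ≤ 6*(B+d+1)^2 := by nlinarith [Nat.mul_le_mul hd.le h1]
  have h4 : (30*(B+d+1))^2 ≤ (31*B)^2 := Nat.pow_le_pow_left (by omega) 2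
  nlinarith

theorem isq_up {q c : ℕ} (h : isqOK q = true) (h1 : q < c^2) (h2 : 16*(c^2-q)^2 < c^2) :
    c = isq q + 1 := by
  unfold isqOK at h
  simp only [Bool.and_eq_true, Nat.ble_eq] at h
  generalize isq q = s at *
  obtain ⟨h3, h4⟩ := h
  have h5 : s < c := by
    by_contra hh
    have := Nat.pow_le_pow_left (show c ≤ s by omega) 2
    omega
  by_contra hh
  obtain ⟨k, rfl⟩ := Nat.exists_eq_add_of_le (show s + 2 ≤ c by omega)
  have h6 : s+2+k ≤ (s+2+k)^2 - q := by
    apply Nat.le_sub_of_add_le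
    have e1 : (s+2+k)^2 = (s+1)^2 + (k*(2*s+3+k) + (2*s+3+k)) := by ring
    omega
  have := Nat.pow_le_pow_left h6 2
  omega

theorem isq_down {A b : ℕ} (h : isqOK A = true) (h1 : b^2 < A) (h2 : 16*(A-b^2)^2 < A) :
    b = isq A := by
  unfold isqOK at h
  simp only [Bool.and_eq_true, Nat.ble_eq] at h
  generalize isq A = s at *
  obtain ⟨h3, h4⟩ := h
  have h5 : b < s + 1 := by
    by_contra hh
    have := Nat.pow_le_pow_left (show s + 1 ≤ b by omega) 2
    omega
  by_contra hh
  obtain ⟨k, rfl⟩ := Nat.exists_eq_add_of_le (show b + 1 ≤ s by omega)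
  have h6 : b+1+k ≤ A - b^2 := by
    apply Nat.le_sub_of_add_le
    have e1 : (b+1+k)^2 = b^2 + (k*(2*b+k+1) + (2*b+k+1)) := by ring
    omega
  have h7 := Nat.pow_le_pow_left h6 2
  have h8 := Nat.pow_le_pow_left (show b+1+k+1 ≤ 2*(b+1+k) by omega) 2
  rw [mul_pow] at h8
  omega

theorem crit_all {c b u v : ℕ} (hc : 2 ≤ c) (hb : 2 ≤ b) (hu : 2 ≤ u) (hv : 2 ≤ v)
    (hAB : b^v < c^u) (hd : 16*(c^u-b^v)^2 < c^u) : CritP (c^u) (b^v) u := by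
  rcases le_or_gt (2^20) (c^u) with h | h
  · exact crit_big h (Nat.pow_le_pow_left hc u) hAB hd
  have hf := far_false hAB hd
  rcases hu.eq_or_lt with rfl | hu
  · rcases hv.eq_or_lt with rfl | hv
    · exfalso
      have h1 : b < c := lt_of_pow_lt_pow_left₀ 2 (by omega) hAB
      obtain ⟨d, rfl⟩ := Nat.exists_eq_add_of_lt h1
      have e : (b+d+1)^2 - b^2 = (2*b+d+1)*(d+1) := by
        rw [Nat.sub_eq_iff_eq_add (by nlinarith)]; ring
      rw [e] at hd
      have : b+d+1 ≤ (2*b+d+1)*(d+1) := by nlinarith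
      nlinarith
    · have := chk3_t
      unfold chk3 at this
      rw [List.all_eq_true] at this
      have := this _ (mem_clist hb hv (hAB.trans h))
      simp only [Bool.and_eq_true] at this
      have hs := isq_up this.1 hAB hd
      have := this.2
      rw [← hs] at this
      simp only [hf, Bool.false_or] at this
      exact crit_P this
  · rcases hv.eq_or_lt with rfl | hv
    · have := chk2_t
      unfold chk2 at this
      rw [List.all_eq_true] at this
      have := this _ (mem_clist hc hu h)
      simp only [Bool.and_eq_true] at this
      have hs := isq_down this.1 hAB hd
      have := this.2
      rw [← hs] at this
      simp only [hf, Bool.false_or] at this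
      exact crit_P this
    · have := chk1_t
      unfold chk1 at this
      rw [List.all_eq_true] at this
      have := this _ (mem_clist hc hu h)
      rw [List.all_eq_true] at this
      have := this _ (mem_clist hb hv (hAB.trans h))
      simp only [hf, Bool.false_or] at this
      exact crit_P this
end Pil


namespace Pil

theorem bern {P Q u : ℕ} (hu : 1 ≤ u) (h : (20*u-1)*Q ≤ 20*u*P) : 19*Q^u ≤ 20*P^u := by
  have hu' : (1:ℝ) ≤ u := by exact_mod_cast hu
  have h' : (20*(u:ℝ)-1)*Q ≤ 20*u*P := by
    have : (((20*u-1)*Q : ℕ):ℝ) ≤ ((20*u*P : ℕ) : ℝ) := by exact_mod_cast h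
    rw [Nat.cast_mul, Nat.cast_sub (by omega)] at this
    push_cast at this; exact this
  have h1 : (1 + -(1/(20*(u:ℝ)))) * Q ≤ P := by
    have : (1 + -(1/(20*(u:ℝ)))) * Q = (20*(u:ℝ)-1)*Q/(20*u) := by field_simp; ring
    rw [this, div_le_iff₀ (by positivity)]; linarith
  have h3 : 1/(20*(u:ℝ)) ≤ 1 := by rw [div_le_one (by positivity)]; linarith
  have h2 : (1 + (u:ℝ) * -(1/(20*(u:ℝ)))) ≤ (1 + -(1/(20*(u:ℝ))))^u :=
    one_add_mul_le_pow (by linarith) u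
  have h4 : (1 + (u:ℝ) * -(1/(20*(u:ℝ)))) = 19/20 := by field_simp; norm_num
  rw [h4] at h2
  have h5 : ((1 + -(1/(20*(u:ℝ)))) * Q)^u ≤ (P:ℝ)^u :=
    pow_le_pow_left₀ (mul_nonneg (by linarith) (by positivity)) h1 u
  rw [mul_pow] at h5
  have h6 := mul_le_mul_of_nonneg_right h2 (show (0:ℝ) ≤ (Q:ℝ)^u by positivity)
  have : 19*(Q:ℝ)^u ≤ 20*(P:ℝ)^u := by linarith
  exact_mod_cast this

theorem zbound {A B z : ℕ} (hB : 0 < B) (hAB : B < A) (h : 25*z*(A-B) ≤ 16*B) :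
    10*A^z < 19*B^z := by
  obtain ⟨d, rfl⟩ := Nat.exists_eq_add_of_le hAB.le
  rw [Nat.add_sub_cancel_left] at h
  have hB' : (0:ℝ) < B := by exact_mod_cast hB
  have h' : 25*(z:ℝ)*d ≤ 16*B := by exact_mod_cast h
  have h1 : ((B:ℝ)+d)^z ≤ B^z*Real.exp (16/25) := by
    calc ((B:ℝ)+d)^z = (B*(d/B+1))^z := by congr 1; field_simp; ring
      _ = B^z*(d/B+1)^z := mul_pow _ _ _
      _ ≤ B^z*(Real.exp (d/B))^z := by
        gcongr; exact Real.add_one_le_exp _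
      _ = B^z*Real.exp (z*(d/B)) := by rw [Real.exp_nat_mul]
      _ ≤ _ := by
        gcongr
        rw [← mul_div_assoc, div_le_iff₀ hB']; linarith
  have h2 : Real.exp (16/25) < 1.9 := by
    apply lt_of_pow_lt_pow_left₀ 25 (by norm_num)
    rw [← Real.exp_nat_mul]
    have : ((25:ℕ):ℝ)*(16/25) = ((16:ℕ):ℝ)*1 := by norm_num
    rw [this, Real.exp_nat_mul]
    calc _ ≤ (2.7182818286:ℝ)^16 := pow_le_pow_left₀ (Real.exp_pos _).le Real.exp_one_lt_d9.le 16
      _ < _ := by norm_num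
  have h3 : (B:ℝ)^z*Real.exp (16/25) < B^z*1.9 := by gcongr
  have : 10*((B:ℝ)+d)^z < 19*(B:ℝ)^z := by linarith
  exact_mod_cast this

theorem usq_aux (k : ℕ) : 27*(k+12)^2 ≤ 2*2^(k+12) := by
  induction k with
  | zero => norm_num
  | succ k ih =>
    rw [show k+1+12 = (k+12)+1 by ring, pow_succ 2]
    have : 27*(k+12+1)^2 ≤ 2*(27*(k+12)^2) := by
      clear ih; ring_nf; nlinarith [sq_nonneg k]
    omega

theorem usq {A u : ℕ} (hA : 2048 ≤ A) (hu : 2^u ≤ A) : 27*u^2 ≤ 2*A := by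
  rcases le_or_gt u 12 with h | h
  · have := Nat.pow_le_pow_left h 2
    omega
  · obtain ⟨k, rfl⟩ := Nat.exists_eq_add_of_le' h.le
    have := usq_aux k
    omega

theorem ebound {P Q u : ℕ} (hP : 27*u^2 ≤ P) (hE : 15*((P:ℤ)-Q)^2 ≤ P) :
    20*(u:ℤ)*|(P:ℤ)-Q| ≤ P := by
  have hP' : 27*(u:ℤ)^2 ≤ P := by exact_mod_cast hP
  refine le_of_pow_le_pow_left₀ (n := 2) (by norm_num) (by positivity) ?_
  rw [mul_pow, sq_abs]
  nlinarith [mul_le_mul hP' hE (by positivity) (by positivity), sq_nonneg (P:ℤ)]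

theorem eqcase {c b u v z y : ℕ} (hu : 2 ≤ u)
    (hAB : b^v < c^u) (huz : u < z) (hE : 15*((c:ℤ)^z-(b:ℤ)^y)^2 ≤ (c:ℤ)^z)
    (h : v*z = u*y) : False := by
  obtain ⟨u', hu'⟩ := Nat.gcd_dvd_left u v
  obtain ⟨v', hv'⟩ := Nat.gcd_dvd_right u v
  have hg : 0 < Nat.gcd u v := Nat.gcd_pos_of_pos_left _ (by omega)
  have hcop : Nat.Coprime u' v' := by
    have := Nat.coprime_div_gcd_div_gcd hg
    rwa [Nat.div_eq_of_eq_mul_right hg hu', Nat.div_eq_of_eq_mul_right hg hv'] at this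
  generalize Nat.gcd u v = g at *
  have h2 : v'*z = u'*y := by
    have : g*(v'*z) = g*(u'*y) := by rw [← mul_assoc, ← mul_assoc, ← hu', ← hv']; exact h
    exact Nat.eq_of_mul_eq_mul_left hg this
  obtain ⟨k, hk⟩ : u' ∣ z := hcop.dvd_of_dvd_mul_left ⟨y, h2⟩
  have hu'0 : 0 < u' := Nat.pos_of_ne_zero (by rintro rfl; omega)
  have hy : y = v'*k := by
    apply Nat.eq_of_mul_eq_mul_left hu'0
    rw [← h2, hk]; ring
  have hk2 : 2 ≤ k := by
    have : g < k := by
      rw [hu', hk, mul_comm g] at huz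
      exact lt_of_mul_lt_mul_left huz (by omega)
    omega
  have hlt : b^v' < c^u' := by
    apply lt_of_pow_lt_pow_left₀ g (by positivity)
    rw [← pow_mul, ← pow_mul, mul_comm v', mul_comm u', ← hu', ← hv']; exact hAB
  apply X_ne_one hlt hk2
  push_cast
  rw [← pow_mul, ← pow_mul, ← hy, ← hk]; exact hE

theorem bothge2 {c b u v z y : ℕ} (hc : 2 ≤ c) (hb : 2 ≤ b) (hu : 2 ≤ u) (hv : 2 ≤ v)
    (hAB : b^v < c^u) (hd : 16*(c^u-b^v)^2 < c^u) (huz : u < z)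
    (hE : 15*((c:ℤ)^z-(b:ℤ)^y)^2 ≤ (c:ℤ)^z) : False := by
  have hcr := crit_all hc hb hu hv hAB hd
  have hB : 0 < b^v := by positivity
  have hA : 2048 ≤ c^u := by
    rcases hcr with h | ⟨l, h, _⟩
    · omega
    · exact h
  have hus := usq hA (Nat.pow_le_pow_left hc u)
  have hP : 2*c^u ≤ c^z := by
    calc 2*c^u ≤ c*c^u := Nat.mul_le_mul_right _ hc
      _ = c^(u+1) := by ring
      _ ≤ _ := Nat.pow_le_pow_right (by omega) huz
  have heb := ebound (P := c^z) (Q := b^y) (u := u) (by omega) (by push_cast; exact hE)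
  have hb1 : 19*(c^z)^u ≤ 20*(b^y)^u := by
    apply bern (by omega)
    zify [show 1 ≤ 20*u by omega]
    push_cast at heb
    have := mul_le_mul_of_nonneg_left (le_abs_self ((c:ℤ)^z-(b:ℤ)^y)) (show 0 ≤ 20*(u:ℤ) by positivity)
    nlinarith
  have hb2 : 19*(b^y)^u ≤ 20*(c^z)^u := by
    apply bern (by omega)
    zify [show 1 ≤ 20*u by omega]
    push_cast at heb
    have := mul_le_mul_of_nonneg_left (neg_abs_le ((c:ℤ)^z-(b:ℤ)^y)) (show 0 ≤ 20*(u:ℤ) by positivity)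
    have hu1 : 20*(u:ℤ)*(b:ℤ)^y ≤ (20*u+1)*(c:ℤ)^z := by nlinarith
    have hu2 : (1:ℤ) ≤ u := by exact_mod_cast (by omega : 1 ≤ u)
    have h3 := mul_le_mul_of_nonneg_left hu1 (show 0 ≤ 20*(u:ℤ)-1 by linarith)
    have hcz : (0:ℤ) ≤ (c:ℤ)^z := by positivity
    apply le_of_mul_le_mul_left _ (show 0 < 20*(u:ℤ) by linarith)
    nlinarith
  have hQ2P : b^y ≤ 2*c^z := by
    push_cast at heb
    have h1 := neg_abs_le ((c:ℤ)^z-(b:ℤ)^y)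
    have hu2 : (1:ℤ) ≤ u := by exact_mod_cast (by omega : 1 ≤ u)
    zify
    have := abs_nonneg ((c:ℤ)^z-(b:ℤ)^y)
    nlinarith
  have eP : (c^z)^u = (c^u)^z := by rw [← pow_mul, ← pow_mul, mul_comm]
  rcases lt_trichotomy (u*y) (v*z) with h | h | h
  · have h1 : 2*(b^y)^u ≤ (b^v)^z := by
      rw [← pow_mul, ← pow_mul, mul_comm y]
      calc 2*b^(u*y) ≤ b*b^(u*y) := Nat.mul_le_mul_right _ hb
        _ = b^(u*y+1) := by ring
        _ ≤ _ := Nat.pow_le_pow_right (by omega) h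
    have h2 : (b^v)^z < (c^u)^z := Nat.pow_lt_pow_left hAB (by omega)
    rw [eP] at hb1; omega
  · exact eqcase hu hAB huz hE h.symm
  have hz : 16*b^v < 25*z*(c^u-b^v) := by
    by_contra hh
    have h3 := zbound (z := z) hB hAB (by omega)
    have h1 : 2*(b^v)^z ≤ (b^y)^u := by
      rw [← pow_mul, ← pow_mul, mul_comm y]
      calc 2*b^(v*z) ≤ b*b^(v*z) := Nat.mul_le_mul_right _ hb
        _ = b^(v*z+1) := by ring
        _ ≤ _ := Nat.pow_le_pow_right (by omega) h
    rw [eP] at hb2; omega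
  -- quotient
  have hzm : u*(z/u) + z%u = z := Nat.div_add_mod z u
  have hmod : z%u < u := Nat.mod_lt _ (by omega)
  have hym : v*(z/u) ≤ y := by
    have h1 : u*(v*(z/u)) ≤ u*y := by
      calc u*(v*(z/u)) = v*(u*(z/u)) := by ring
        _ ≤ v*z := Nat.mul_le_mul_left _ (by omega)
        _ ≤ _ := h.le
    exact le_of_mul_le_mul_left h1 (by omega)
  generalize z/u = m at *
  generalize z%u = r at *
  have hPd : c^z = c^r*(c^u)^m := by rw [← pow_mul, ← pow_add, ← hzm, add_comm]
  have hQd : b^y = b^(y-v*m)*(b^v)^m := by rw [← pow_mul, ← pow_add]; congr 1; omega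
  have hX : 0 < b^(y-v*m) := by positivity
  have hXB : b^(y-v*m)*(b^v)^m ≤ 2*c^r*(c^u)^m := by
    rw [← hQd, mul_assoc, ← hPd]; exact hQ2P
  have hE' : 15*(((c^r:ℕ):ℤ)*((c^u:ℕ):ℤ)^m - ((b^(y-v*m):ℕ):ℤ)*((b^v:ℕ):ℤ)^m)^2
      ≤ ((c^r:ℕ):ℤ)*((c^u:ℕ):ℤ)^m := by
    have e1 : ((c^r:ℕ):ℤ)*((c^u:ℕ):ℤ)^m = (c:ℤ)^z := by exact_mod_cast hPd.symm
    have e2 : ((b^(y-v*m):ℕ):ℤ)*((b^v:ℕ):ℤ)^m = (b:ℤ)^y := by exact_mod_cast hQd.symm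
    rw [e1, e2]; exact hE
  rcases hcr with ⟨h1, h2, h3⟩ | ⟨l, h1, h2, h3⟩
  · subst h3
    have hc13 : c = 13 := by
      apply Nat.pow_left_injective (n := 3) (by norm_num)
      change c^3 = 13^3
      rw [h1]
    subst hc13
    rw [h1, h2] at hz
    rw [h2] at hE' hXB
    have hr : 13^r ≤ 13^2 := Nat.pow_le_pow_right (by norm_num) (by omega)
    exact pair2197 (m := m) (by omega) hr hX hXB hE'
  · have hm : 4*l+16 ≤ m := by
      have h4 : (25*(c^u-b^v))*(u*(4*l+16)) < (25*(c^u-b^v))*z := by nlinarith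
      have h5 := lt_of_mul_lt_mul_left h4 (by omega)
      have h6 : u*(4*l+16) < u*(m+1) := by rw [mul_add u m 1]; omega
      have := lt_of_mul_lt_mul_left h6 (by omega)
      omega
    have hY : 2*c^r ≤ c^u := by
      calc 2*c^r ≤ c*c^r := Nat.mul_le_mul_right _ hc
        _ = c^(r+1) := by ring
        _ ≤ _ := Nat.pow_le_pow_right (by omega) hmod
    exact bigY hA h2 hm hAB hd hY hX hXB hE'
end Pil


namespace Pil

def Good (c b z y : ℕ) : Prop := (c:ℤ)^z ≠ (b:ℤ)^y ∧
  16*((c:ℤ)^z-(b:ℤ)^y)^2 < max ((c:ℤ)^z) ((b:ℤ)^y)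

theorem Good.symm {c b z y : ℕ} (h : Good c b z y) : Good b c y z := by
  refine ⟨h.1.symm, ?_⟩
  rw [max_comm, ← neg_sub, neg_sq]; exact h.2

theorem Good.e1 {c b z y : ℕ} (h : Good c b z y) : 1 ≤ |(c:ℤ)^z-(b:ℤ)^y| :=
  Int.one_le_abs (sub_ne_zero.2 h.1)

theorem Good.e15 {c b z y : ℕ} (h : Good c b z y) : 15*((c:ℤ)^z-(b:ℤ)^y)^2 ≤ (c:ℤ)^z := by
  have h1 := h.e1
  have h2 := h.2
  have h3 := neg_abs_le ((c:ℤ)^z-(b:ℤ)^y)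
  rw [← sq_abs] at h2 ⊢
  generalize |(c:ℤ)^z-(b:ℤ)^y| = e at *
  rcases max_cases ((c:ℤ)^z) ((b:ℤ)^y) with h4 | h4 <;> rw [h4.1] at h2 <;> nlinarith

theorem Good.ge2 {c b z y : ℕ} (h : Good c b z y) (hc : 0 < c) : 2 ≤ c := by
  by_contra hh
  have : c = 1 := by omega
  subst this
  have h1 := h.e1
  have h2 := h.e15
  rw [← sq_abs] at h2
  simp only [Nat.cast_one, one_pow] at h1 h2
  nlinarith

theorem Good.r {c b z y : ℕ} (h : Good c b z y) : 15*c^z ≤ 16*b^y := by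
  have h1 := h.e1
  have h2 := h.symm.e15
  rw [← neg_sub, neg_sq] at h2
  have h3 := le_abs_self ((c:ℤ)^z-(b:ℤ)^y)
  rw [← sq_abs] at h2
  zify
  nlinarith

theorem Good.mono {c b z y z' y' : ℕ} (h : Good c b z y) (h' : Good c b z' y') (hc : 2 ≤ c)
    (hb : 2 ≤ b) (hz : z ≤ z') : y ≤ y' := by
  by_contra hh
  have h1 : 2*b^y' ≤ b^y := by
    calc 2*b^y' ≤ b*b^y' := Nat.mul_le_mul_right _ hb
      _ = b^(y'+1) := by ring
      _ ≤ _ := Nat.pow_le_pow_right (by omega) (by omega)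
  have h2 : c^z ≤ c^z' := Nat.pow_le_pow_right (by omega) hz
  have h3 := h'.r
  have h4 := h.symm.r
  have : 0 < b^y' := by positivity
  omega

theorem pp {c u : ℕ} (hc : 2 ≤ c) (hu : 2 ≤ u) (h : 17 ≤ c^u) : 25 ≤ c^u := by
  rcases le_or_gt 5 c with h5 | h5
  · exact (show 25 ≤ 5^2 by norm_num).trans
      ((Nat.pow_le_pow_left h5 2).trans (Nat.pow_le_pow_right (by omega) hu))
  rcases le_or_gt 5 u with h6 | h6
  · exact (show 25 ≤ 2^5 by norm_num).trans
      ((Nat.pow_le_pow_right (by omega) h6).trans (Nat.pow_le_pow_left hc u))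
  interval_cases c <;> interval_cases u <;> omega

theorem main {c b u v z y : ℕ} (hc : 2 ≤ c) (hb : 2 ≤ b) (hu : 0 < u) (hv : 0 < v)
    (h1 : Good c b u v) (h2 : Good c b z y) (huz : u < z) (hvy : v < y) (hAB : b^v < c^u) :
    False := by
  have hd : 16*(c^u-b^v)^2 < c^u := by
    have := h1.2
    rw [max_eq_left (by exact_mod_cast hAB.le)] at this
    zify [hAB.le]; exact this
  have h17 : 17 ≤ c^u := by
    have : 1 ≤ (c^u-b^v)^2 := Nat.one_le_pow _ _ (by omega)
    omega
  rcases (show u = 1 ∨ 2 ≤ u by omega) with rfl | hu2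
  · rw [pow_one] at *
    have hy : v*z ≤ y := by
      by_contra hh
      have h3 : 2*b^y ≤ (b^v)^z := by
        rw [← pow_mul]
        calc 2*b^y ≤ b*b^y := Nat.mul_le_mul_right _ hb
          _ = b^(y+1) := by ring
          _ ≤ _ := Nat.pow_le_pow_right (by omega) (by omega)
      have h4 : (b^v)^z ≤ c^z := Nat.pow_le_pow_left hAB.le z
      have h5 := h2.r
      have : 0 < c^z := by positivity
      omega
    rcases h17.eq_or_lt with h | h
    · subst h
      have hd1 : 17 - b^v < 2 := by
        by_contra hh
        have := Nat.pow_le_pow_left (show 2 ≤ 17 - b^v by omega) 2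
        omega
      have hB : b^v = 16 := by omega
      have hbd : b ∣ 2^4 := by
        norm_num; rw [← hB]; exact dvd_pow_self b (by omega)
      obtain ⟨j, _, rfl⟩ := (Nat.dvd_prime_pow Nat.prime_two).1 hbd
      refine case17 (m := z) (y := j*y) (by omega) ?_
      have := h2.e15
      push_cast at this
      rw [pow_mul]; exact this
    · refine small1_spec (A := c) (B := b^v) (X := b^(y-v*z)) (m := z) h hAB hd (by omega)
        (by positivity) ?_
      have e2 : ((b^(y-v*z):ℕ):ℤ)*((b^v:ℕ):ℤ)^z = (b:ℤ)^y := by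
        push_cast
        rw [← pow_mul, ← pow_add]; congr 1; omega
      rw [e2]; exact h2.e15
  rcases (show v = 1 ∨ 2 ≤ v by omega) with rfl | hv2
  · rw [pow_one] at *
    have hz : z ≤ u*y := by
      by_contra hh
      have h3 : 2*(c^u)^y ≤ c^z := by
        rw [← pow_mul]
        calc 2*c^(u*y) ≤ c*c^(u*y) := Nat.mul_le_mul_right _ hc
          _ = c^(u*y+1) := by ring
          _ ≤ _ := Nat.pow_le_pow_right (by omega) (by omega)
      have h4 : b^y ≤ (c^u)^y := Nat.pow_le_pow_left hAB.le y
      have h5 := h2.r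
      have : 0 < b^y := by positivity
      omega
    refine allX_spec (A := c^u) (B := b) (X := c^(u*y-z)) (m := y) (pp hc hu2 h17) hAB hd
      (by omega) (by positivity) ?_
    have e1 : ((c^u:ℕ):ℤ)^y = ((c^(u*y-z):ℕ):ℤ)*(c:ℤ)^z := by
      push_cast
      rw [← pow_mul, ← pow_add]; congr 1; omega
    rw [e1]
    have h3 := h2.e15
    have h4 := mul_le_mul_of_nonneg_left h3 (sq_nonneg ((c^(u*y-z):ℕ):ℤ))
    nlinarith
  · exact bothge2 hc hb hu2 hv2 hAB hd huz h2.e15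

theorem main2 {c b u v z y : ℕ} (hc : 2 ≤ c) (hb : 2 ≤ b) (hu : 0 < u) (hv : 0 < v)
    (h1 : Good c b u v) (h2 : Good c b z y) (huz : u < z) : False := by
  have hvy : v < y := by
    have a := h1.mono h2 hc hb huz.le
    by_contra hh
    have := h2.symm.mono h1.symm hb hc (by omega)
    omega
  rcases lt_trichotomy (b^v) (c^u) with h | h | h
  · exact main hc hb hu hv h1 h2 huz hvy h
  · exact h1.1 (by exact_mod_cast h.symm)
  · exact main hb hc hv hu h1.symm h2.symm hvy huz h

theorem good_of {c b z y : ℕ} (h1 : 0 < |(c : ℤ) ^ z - (b : ℤ) ^ y| ∧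
      ((|(c : ℤ) ^ z - (b : ℤ) ^ y| : ℤ) : ℝ) <
        (1 / 4) * max ((c : ℝ) ^ ((z : ℝ) / 2)) ((b : ℝ) ^ ((y : ℝ) / 2))) : Good c b z y := by
  refine ⟨sub_ne_zero.1 (abs_pos.1 h1.1), ?_⟩
  have hs : ∀ (a n : ℕ), ((a:ℝ)^((n:ℝ)/2))^2 = (a:ℝ)^n := by
    intro a n
    rw [← Real.rpow_natCast, ← Real.rpow_mul (by positivity)]
    norm_num
  have h2 := h1.2
  have h0 : (0:ℝ) < ((|(c : ℤ) ^ z - (b : ℤ) ^ y| : ℤ) : ℝ) := by exact_mod_cast h1.1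
  rw [← sq_abs]
  have key : 16*((|(c : ℤ) ^ z - (b : ℤ) ^ y| : ℤ) : ℝ)^2 < max ((c:ℝ)^z) ((b:ℝ)^y) := by
    generalize ((|(c : ℤ) ^ z - (b : ℤ) ^ y| : ℤ) : ℝ) = e at *
    rcases max_cases ((c : ℝ) ^ ((z : ℝ) / 2)) ((b : ℝ) ^ ((y : ℝ) / 2)) with h | h <;> rw [h.1] at h2
    · refine lt_of_lt_of_le ?_ (le_max_left _ _)
      rw [← hs]; nlinarith
    · refine lt_of_lt_of_le ?_ (le_max_right _ _)
      rw [← hs b]; nlinarith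
  exact_mod_cast key

end Pil

theorem stmt_18 (c b : ℕ) (hc : 0 < c) (hb : 0 < b)
    (z₁ y₁ z₂ y₂ : ℕ) (hz₁ : 0 < z₁) (hy₁ : 0 < y₁) (hz₂ : 0 < z₂) (hy₂ : 0 < y₂)
    (h1 : 0 < |(c : ℤ) ^ z₁ - (b : ℤ) ^ y₁| ∧
      ((|(c : ℤ) ^ z₁ - (b : ℤ) ^ y₁| : ℤ) : ℝ) <
        (1 / 4) * max ((c : ℝ) ^ ((z₁ : ℝ) / 2)) ((b : ℝ) ^ ((y₁ : ℝ) / 2)))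
    (h2 : 0 < |(c : ℤ) ^ z₂ - (b : ℤ) ^ y₂| ∧
      ((|(c : ℤ) ^ z₂ - (b : ℤ) ^ y₂| : ℤ) : ℝ) <
        (1 / 4) * max ((c : ℝ) ^ ((z₂ : ℝ) / 2)) ((b : ℝ) ^ ((y₂ : ℝ) / 2))) :
    (z₁, y₁) = (z₂, y₂) := by
  have g1 := Pil.good_of h1
  have g2 := Pil.good_of h2
  have hc2 := g1.ge2 hc
  have hb2 := g1.symm.ge2 hb
  rcases lt_trichotomy z₁ z₂ with h | h | h
  · exact (Pil.main2 hc2 hb2 hz₁ hy₁ g1 g2 h).elim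
  · have a := g1.mono g2 hc2 hb2 h.le
    have b := g2.mono g1 hc2 hb2 h.ge
    rw [h, le_antisymm a b]
  · exact (Pil.main2 hc2 hb2 hz₂ hy₂ g2 g1 h).elim
end
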